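/- arXiv:2211.09465 — 2 statements merged into one kernel-verified Lean document; each statement's English description precedes it below -/
import Mathlib

section
/- There is an absolute constant c > 0 such that the following holds for every prime p. Let P be a finite set of points in F_p^2 with |P| ≤ p^{15/13}, and let C be any finite set of irreducible cubic curves in F_p^2. Then the number of incidences satisfies I(P,C) ≤ c·( (|P||C|)^{39/43} + |P|^{71/43}|C|^{28/43} + |C| ). -/
/-!
Write `m = |P|` and `n = |C|`. The proof bounds the number `N_k` of cubics of `C` containing about
`k` points of `P` (`family_bound`):
`N_k ≪ m^{39/4} k^{-43/4} + m^8 k^{-8}` for `k ≥ 1000`, provided `m^3 ≤ p^4`.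
Summing `k N_k` over dyadic `k` above the threshold `T ≈ 1000 + m^{39/43} n^{-4/43} + m n^{-1/8}`,
and counting at most `T` incidences on each remaining cubic, gives
`I ≪ nT ≪ (mn)^{39/43} + m n^{7/8} + n`; the middle term is a weighted geometric mean of the first
and of `m^{71/43} n^{28/43}`.

**Reduction to a plane.** Cubic polynomials form a vector space of dimension ten. Fixing seven
points of `P` in turn, each of which lowers the dimension by one (`family_induction`), reduces to
a linear system `V` of dimension three at the cost of a factor `(2m/k)^7`. In the projective plane of
`V` the cubics are points and evaluation at a point of `P` is a line (`net_reduction`). By Bézout's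
theorem at most nine points of `P` lying on two of the cubics give the same line, so that
a `k`-rich cubic becomes a point on at least `k/40` lines.

**Rich points.** Among `n` lines in a projective plane over `𝔽_p`, `n^3 ≤ p^4`, there are
`O(n^{11/4} k^{-15/4} + n/k)` points on about `k` lines (`rich_points`). If this number is `M`, then
by Cauchy–Schwarz (`exists_corner`) some pair `q₁, q₂` of these points is joined by the lines
to `≫ M k^4 / n^2` of the others. Sending `q₁` and `q₂` to infinity, the latter form a subset `G` of
a grid `A × B` with `|A|, |B| ≪ k`, each point of which is still on about `k` lines
(`corner_bound`), so it remains to bound the incidences of `G` with `n` lines (`grid_bound`).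

**Grids.** By Cauchy–Schwarz over `B` it suffices to count the solutions of `l(a) = l'(a')` with
`a, a' ∈ A` and lines `l, l'`. Attaching to `(a, l')` a red line and to `(a', l)` a blue line in
three-space, such a solution is an intersection of two of the `N = |A| n` lines of either
colour. These are `O(N^{3/2} + kN)` in number when `N ≪ p²` (`core`), where `k` bounds the number of
red lines meeting a blue line inside a common bilinear graph `Z = γXY + αX + βY + δ`.

**Lines in three-space.** The last bound follows the polynomial method of Guth–Katz. A sample of the
red lines lies on a surface of degree `d ≪ √N`, `d < p`; each blue line not on it meets at most `d`
of them. A component containing many lines of both colours is annihilated by two flecnodal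
expressions (`flec`), and in degree less than the characteristic this forces it to be a bilinear
graph (`doubly_ruled`), by uniqueness for a second-order linear differential equation.
-/

open scoped Classical

noncomputable section

def zeroSet {p : ℕ} (f : MvPolynomial (Fin 2) (ZMod p)) : Set (Fin 2 → ZMod p) :=
  {x | MvPolynomial.eval x f = 0}

def IsIrredCubic {p : ℕ} (γ : Set (Fin 2 → ZMod p)) : Prop :=
  ∃ f : MvPolynomial (Fin 2) (ZMod p), Irreducible f ∧ f.totalDegree = 3 ∧ γ = zeroSet f

def incidences {p : ℕ} (P : Finset (Fin 2 → ZMod p)) (C : Finset (Set (Fin 2 → ZMod p))) : ℕ :=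
  ((P ×ˢ C).filter fun z => z.1 ∈ z.2).card

set_option linter.unusedSectionVars false

namespace CubicInc

/-! ### Bézout's theorem in the plane over a domain -/

section Bezout
open MvPolynomial

variable {A : Type*} [CommRing A] [IsDomain A]

/-- Exponents of two variables of total degree at most `k`, as pairs sorted by degree. -/
def expEquiv (k : ℕ) : {n : Fin 2 →₀ ℕ | n.degree ≤ k} ≃
    ((Finset.range (k + 1)).sigma fun m => Finset.HasAntidiagonal.antidiagonal m) where
  toFun n := ⟨⟨n.1 0 + n.1 1, (n.1 0, n.1 1)⟩, by
    have := n.2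
    simp only [Set.mem_ofPred_eq, Finsupp.degree_eq_sum, Fin.sum_univ_two] at this
    simp; omega⟩
  invFun m := ⟨Finsupp.equivFunOnFinite.symm ![m.1.2.1, m.1.2.2], by
    have := m.2
    simp only [Finset.mem_sigma, Finset.mem_range, Finset.HasAntidiagonal.mem_antidiagonal] at this
    simp [Finsupp.degree_eq_sum, Fin.sum_univ_two]; omega⟩
  left_inv n := by
    ext i; fin_cases i <;> simp
  right_inv m := by
    obtain ⟨⟨m, a, b⟩, h⟩ := m
    simp only [Finset.mem_sigma, Finset.mem_range, Finset.HasAntidiagonal.mem_antidiagonal] at h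
    obtain ⟨_, rfl⟩ := h
    simp

theorem finrank_deg (k : ℕ) :
    2 * Module.finrank A (restrictTotalDegree (Fin 2) A k) = (k + 1) * (k + 2) := by
  have h1 : (restrictTotalDegree (Fin 2) A k) =
      restrictSupport A {n : Fin 2 →₀ ℕ | n.degree ≤ k} := by
    ext p
    rw [mem_restrictTotalDegree]
    rw [mem_restrictSupport_iff, totalDegree, Finset.sup_le_iff]
    rfl
  rw [h1, Module.finrank_eq_nat_card_basis (basisRestrictSupport A _), Nat.card_congr (expEquiv k)]
  simp only [Nat.card_eq_fintype_card, Fintype.card_coe, Finset.card_sigma,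
    Finset.Nat.card_antidiagonal]
  have : ∑ m ∈ Finset.range (k+1), (m + 1) = ∑ m ∈ Finset.range (k+2), m := by
    rw [Finset.sum_range_succ' _ (k+1)]; simp
  rw [this, mul_comm, Finset.sum_range_id_mul_two]
  simp; ring

/-- The submodule of multiples of `f` by polynomials of degree at most `k`. -/
def mulSub (f : MvPolynomial (Fin 2) A) (k : ℕ) : Submodule A (MvPolynomial (Fin 2) A) :=
  (restrictTotalDegree (Fin 2) A k).map (LinearMap.mulLeft A f)

instance (f : MvPolynomial (Fin 2) A) (k : ℕ) : Module.Finite A (mulSub f k) := by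
  unfold mulSub; infer_instance

theorem finrank_mulSub {f : MvPolynomial (Fin 2) A} (hf : f ≠ 0) (k : ℕ) :
    Module.finrank A (mulSub f k) = Module.finrank A (restrictTotalDegree (Fin 2) A k) := by
  refine LinearEquiv.finrank_eq (Submodule.equivMapOfInjective _ ?_ _).symm
  exact mul_right_injective₀ hf

theorem mulSub_le {f : MvPolynomial (Fin 2) A} {k K : ℕ} (h : f.totalDegree + k ≤ K) :
    mulSub f k ≤ restrictTotalDegree (Fin 2) A K := by
  rintro _ ⟨u, hu, rfl⟩
  rw [SetLike.mem_coe, mem_restrictTotalDegree] at hu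
  rw [mem_restrictTotalDegree]
  exact (totalDegree_mul _ _).trans (by omega)

/-- A product of affine-linear polynomials separating `z` from the other points of `Z`. -/
theorem exists_interp (Z : Finset (Fin 2 → A)) (z : Fin 2 → A) :
    ∃ L : MvPolynomial (Fin 2) A, L.totalDegree ≤ Z.card ∧ eval z L ≠ 0 ∧
      ∀ w ∈ Z, w ≠ z → eval w L = 0 := by
  induction Z using Finset.induction_on with
  | empty => exact ⟨1, by simp, by simp, by simp⟩
  | insert w Z hw ih =>
    obtain ⟨L, h1, h2, h3⟩ := ih
    by_cases hwz : w = z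
    · refine ⟨L, h1.trans (Finset.card_le_card (Finset.subset_insert _ _)), h2, ?_⟩
      intro v hv hvz
      rcases Finset.mem_insert.1 hv with rfl | hv
      · exact absurd hwz hvz
      · exact h3 v hv hvz
    · obtain ⟨i, hi⟩ : ∃ i, w i ≠ z i := by
        by_contra! h; exact hwz (funext h)
      refine ⟨L * (X i - C (w i)), ?_, ?_, ?_⟩
      · rw [Finset.card_insert_of_notMem hw]
        refine (totalDegree_mul _ _).trans (add_le_add h1 ?_)
        refine (totalDegree_sub _ _).trans ?_
        simp
      · simp only [map_mul, map_sub, eval_X, eval_C]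
        exact mul_ne_zero h2 (sub_ne_zero.2 (Ne.symm hi))
      · intro v hv hvz
        rcases Finset.mem_insert.1 hv with rfl | hv
        · simp
        · simp [h3 v hv hvz]

theorem finrank_sup_inf {M : Type*} [AddCommGroup M] [Module A M] (S T : Submodule A M)
    [Module.Finite A S] [Module.Finite A T] :
    Module.finrank A (S ⊔ T : Submodule A M) + Module.finrank A (S ⊓ T : Submodule A M) =
      Module.finrank A S + Module.finrank A T := by
  have h := Submodule.rank_sup_add_rank_inf_eq S T
  have hS : Module.rank A S < Cardinal.aleph0 := Module.rank_lt_aleph0 _ _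
  have hT : Module.rank A T < Cardinal.aleph0 := Module.rank_lt_aleph0 _ _
  have h1 : Module.rank A (S ⊔ T : Submodule A M) < Cardinal.aleph0 := Module.rank_lt_aleph0 _ _
  have h2 : Module.rank A (S ⊓ T : Submodule A M) < Cardinal.aleph0 :=
    (Submodule.rank_mono inf_le_left).trans_lt hS
  have := congrArg Cardinal.toNat h
  rwa [Cardinal.toNat_add h1 h2, Cardinal.toNat_add hS hT] at this

/-- Bézout's bound over a domain. The multiples of `f` and `g` of degree at most `N + d + e`, where
`N = |Z|`, span a space of codimension at most `de`, and it meets trivially the `N`-dimensional space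
spanned by interpolating polynomials at the points of `Z`. -/
theorem bezout {f g : MvPolynomial (Fin 2) A} (hf : Prime f) (hfg : ¬ f ∣ g)
    (Z : Finset (Fin 2 → A)) (hZf : ∀ z ∈ Z, eval z f = 0) (hZg : ∀ z ∈ Z, eval z g = 0) :
    Z.card ≤ f.totalDegree * g.totalDegree := by
  have hg0 : g ≠ 0 := fun h => hfg (h ▸ dvd_zero f)
  set d := f.totalDegree with hd
  set e := g.totalDegree with he
  set N := Z.card with hN
  choose L hL1 hL2 hL3 using fun z => exists_interp Z z
  set S := mulSub f (N + e) ⊔ mulSub g (N + d) with hS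
  set T := Submodule.span A (Set.range fun z : Z => L z) with hT
  have hevS : ∀ s ∈ S, ∀ z ∈ Z, eval z s = 0 := by
    intro s hs z hz
    obtain ⟨_, ⟨u, -, rfl⟩, _, ⟨v, -, rfl⟩, rfl⟩ := Submodule.mem_sup.1 hs
    simp [hZf z hz, hZg z hz]
  have hlin : ∀ c : Z → A, (∀ z ∈ Z, eval z (∑ w : Z, c w • L w) = 0) → c = 0 := by
    intro c hc
    ext z
    have := hc z z.2
    rw [map_sum, Finset.sum_eq_single z] at this
    · rw [smul_eval] at this
      exact (mul_eq_zero.1 this).resolve_right (hL2 z)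
    · intro w _ hwz
      rw [smul_eval, hL3 w z z.2 (fun h => hwz (Subtype.ext h.symm)), mul_zero]
    · simp
  have hLI : LinearIndependent A fun z : Z => L z := by
    rw [Fintype.linearIndependent_iff]
    intro c hc i
    exact congrFun (hlin c (fun z _ => by rw [hc, map_zero])) i
  have hTN : Module.finrank A T = N := by
    rw [hT, finrank_span_eq_card hLI]; simp [hN]
  have hST : S ⊓ T = ⊥ := by
    rw [eq_bot_iff]
    rintro x ⟨hxS, hxT⟩
    obtain ⟨c, rfl⟩ := (Submodule.mem_span_range_iff_exists_fun A).1 hxT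
    rw [hlin c (hevS _ hxS)]
    simp
  have hTfin : Module.Finite A T := Module.Finite.span_of_finite A (Set.finite_range _)
  have hSfin : Module.Finite A S := inferInstance
  have hSTle : S ⊔ T ≤ restrictTotalDegree (Fin 2) A (N + d + e) := by
    refine sup_le (sup_le (mulSub_le (by omega)) (mulSub_le (by omega))) ?_
    rw [hT, Submodule.span_le]
    rintro _ ⟨z, rfl⟩
    rw [SetLike.mem_coe, mem_restrictTotalDegree]
    exact (hL1 z).trans (by omega)
  have hinf : mulSub f (N + e) ⊓ mulSub g (N + d) ≤ mulSub (f * g) N := by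
    rintro _ ⟨⟨u, hu, rfl⟩, ⟨v, hv, hv2⟩⟩
    simp only [LinearMap.mulLeft_apply] at hv2
    have hdv : f ∣ g * v := ⟨u, hv2⟩
    obtain ⟨w, rfl⟩ := (hf.dvd_or_dvd hdv).resolve_left hfg
    refine ⟨w, ?_, ?_⟩
    · rw [SetLike.mem_coe, mem_restrictTotalDegree] at hv ⊢
      by_cases hw : w = 0
      · simp [hw]
      rw [totalDegree_mul_of_isDomain hf.ne_zero hw] at hv
      omega
    · simp only [LinearMap.mulLeft_apply]
      rw [← hv2]; ring
  have h1 := finrank_sup_inf S T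
  have h2 := finrank_sup_inf (mulSub f (N + e)) (mulSub g (N + d))
  have h3 := Submodule.finrank_mono hinf
  have h4 := Submodule.finrank_mono hSTle
  rw [finrank_mulSub hf.ne_zero, finrank_mulSub hg0] at h2
  rw [finrank_mulSub (mul_ne_zero hf.ne_zero hg0)] at h3
  rw [hST, finrank_bot] at h1
  have e1 := finrank_deg (A := A) (N + e)
  have e2 := finrank_deg (A := A) (N + d)
  have e3 := finrank_deg (A := A) N
  have e4 := finrank_deg (A := A) (N + d + e)
  nlinarith

end Bezout

/-! ### Surfaces in three-space and the flecnodal expression -/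

section Surface
open MvPolynomial

/-- The variables of three-space: `none` is `Y`, `some 0` is `X` and `some 1` is `Z`. -/
abbrev V3 := Option (Fin 2)

/-- The assignment of values `(x, y, z)` to the variables `(X, Y, Z)`. -/
def pt3 {S : Type*} (x y z : S) : V3 → S := fun o => o.elim y ![x, z]

@[simp] theorem pt3_Y {S : Type*} (x y z : S) : pt3 x y z none = y := rfl
@[simp] theorem pt3_X {S : Type*} (x y z : S) : pt3 x y z (some 0) = x := rfl
@[simp] theorem pt3_Z {S : Type*} (x y z : S) : pt3 x y z (some 1) = z := rfl

theorem forall_V3 {q : V3 → Prop} : (∀ i, q i) ↔ q none ∧ q (some 0) ∧ q (some 1) := by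
  constructor
  · intro h; exact ⟨h _, h _, h _⟩
  · rintro ⟨h1, h2, h3⟩ (_ | i)
    · exact h1
    · fin_cases i
      · exact h2
      · exact h3

theorem sum_V3 {M : Type*} [AddCommMonoid M] (q : V3 → M) :
    ∑ i, q i = q none + (q (some 0) + q (some 1)) := by
  rw [Fintype.sum_option, Fin.sum_univ_two]

theorem totalDegree_pderiv_lt {σ K : Type*} [CommRing K] {g : MvPolynomial σ K} {i : σ}
    (h : pderiv i g ≠ 0) : (pderiv i g).totalDegree + 1 ≤ g.totalDegree := by
  obtain ⟨m, hm, hm2⟩ := Finset.exists_mem_eq_sup (pderiv i g).support (support_nonempty.2 h)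
    (fun s => s.sum fun _ e => e)
  rw [totalDegree, hm2]
  rw [mem_support_iff, coeff_pderiv] at hm
  have h2 : m + Finsupp.single i 1 ∈ g.support := by
    rw [mem_support_iff]; exact left_ne_zero_of_mul hm
  have h3 := le_totalDegree h2
  rw [Finsupp.sum_add_index' (by simp) (by simp), Finsupp.sum_single_index rfl] at h3
  exact h3

theorem totalDegree_pderiv_le {σ K : Type*} [CommRing K] (g : MvPolynomial σ K) (i : σ) :
    (pderiv i g).totalDegree ≤ g.totalDegree := by
  by_cases h : pderiv i g = 0
  · simp [h]
  · have := totalDegree_pderiv_lt h; omega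

/-- Chain rule for a polynomial substitution; `D` is a derivation vanishing on constants. -/
theorem chain_rule {σ K B : Type*} [Fintype σ] [CommRing K] [CommRing B] [Algebra K B]
    (D : B → B) (hadd : ∀ a b, D (a + b) = D a + D b)
    (hmul : ∀ a b, D (a * b) = a * D b + b * D a) (hc : ∀ k : K, D (algebraMap K B k) = 0)
    (v : σ → B) (g : MvPolynomial σ K) :
    D (aeval v g) = ∑ i, aeval v (pderiv i g) * D (v i) := by
  induction g using MvPolynomial.induction_on with
  | C a => simp [hc]
  | add p q hp hq => simp [hadd, hp, hq, add_mul, Finset.sum_add_distrib]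
  | mul_X p j hp =>
    rw [map_mul, aeval_X, hmul, hp]
    have : ∀ i, (aeval v) ((pderiv i) (p * X j)) * D (v i) =
        (if i = j then aeval v p * D (v j) else 0) + v j * (aeval v (pderiv i p) * D (v i)) := by
      intro i
      rw [pderiv_mul, pderiv_X]
      by_cases h : i = j
      · subst h; simp; ring
      · rw [Pi.single_eq_of_ne (Ne.symm h)]
        simp [h]; ring
    simp_rw [this]
    rw [Finset.sum_add_distrib, Finset.sum_ite_eq' Finset.univ j]
    simp [Finset.mul_sum]

variable {K : Type*} [Field K]

/-- Three-variable chain rule. -/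
theorem chain_rule3 {B : Type*} [CommRing B] [Algebra K B]
    (D : B → B) (hadd : ∀ a b, D (a + b) = D a + D b)
    (hmul : ∀ a b, D (a * b) = a * D b + b * D a) (hc : ∀ k : K, D (algebraMap K B k) = 0)
    (x y z : B) (g : MvPolynomial V3 K) :
    D (aeval (pt3 x y z) g) = aeval (pt3 x y z) (pderiv none g) * D y +
      aeval (pt3 x y z) (pderiv (some 0) g) * D x +
      aeval (pt3 x y z) (pderiv (some 1) g) * D z := by
  rw [chain_rule D hadd hmul hc, sum_V3]
  simp [add_assoc]

/-- The flecnodal-type expression in the variables `(i, Z)`: it vanishes on the lines contained in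
the surface `g = 0` along which the remaining variable is constant. -/
def flec (i : V3) (g : MvPolynomial V3 K) : MvPolynomial V3 K :=
  pderiv i (pderiv i g) * pderiv (some 1) g ^ 2
    - 2 * (pderiv i g * pderiv (some 1) g * pderiv (some 1) (pderiv i g))
    + pderiv i g ^ 2 * pderiv (some 1) (pderiv (some 1) g)

theorem totalDegree_flec (i : V3) (g : MvPolynomial V3 K) :
    (flec i g).totalDegree ≤ 3 * g.totalDegree := by
  have h1 := totalDegree_pderiv_le g i
  have h2 := totalDegree_pderiv_le g (some 1)
  have h3 := totalDegree_pderiv_le (pderiv i g) i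
  have h4 := totalDegree_pderiv_le (pderiv i g) (some 1)
  have h5 := totalDegree_pderiv_le (pderiv (some 1) g) (some 1)
  unfold flec
  refine (totalDegree_add _ _).trans (max_le ((totalDegree_sub _ _).trans (max_le ?_ ?_)) ?_)
  · refine (totalDegree_mul _ _).trans ?_
    have := totalDegree_pow (pderiv (some 1) g) 2
    omega
  · refine (totalDegree_mul _ _).trans ?_
    have e1 : (2 : MvPolynomial V3 K).totalDegree = 0 := totalDegree_C (2 : K)
    have e2 := totalDegree_mul (pderiv i g * pderiv (some 1) g) (pderiv (some 1) (pderiv i g))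
    have e3 := totalDegree_mul (pderiv i g) (pderiv (some 1) g)
    omega
  · refine (totalDegree_mul _ _).trans ?_
    have := totalDegree_pow (pderiv i g) 2
    omega

/-- Substitution of the red line `Y = y`, `Z = aX - c`. -/
def redSub (a y c : K) : MvPolynomial V3 K →ₐ[K] Polynomial K :=
  aeval (pt3 Polynomial.X (Polynomial.C y) (Polynomial.C a * Polynomial.X - Polynomial.C c))

/-- Substitution of the blue line `X = y`, `Z = aY - c`. -/
def blueSub (a y c : K) : MvPolynomial V3 K →ₐ[K] Polynomial K :=
  aeval (pt3 (Polynomial.C y) Polynomial.X (Polynomial.C a * Polynomial.X - Polynomial.C c))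

theorem natDegree_redSub (a y c : K) (g : MvPolynomial V3 K) :
    (redSub a y c g).natDegree ≤ g.totalDegree := by
  have := MvPolynomial.aeval_natDegree_le (m := g.totalDegree) (n := 1) g le_rfl
    (pt3 Polynomial.X (Polynomial.C y) (Polynomial.C a * Polynomial.X - Polynomial.C c)) ?_
  · simpa [redSub] using this
  · rw [forall_V3]
    refine ⟨by simp, by simp, ?_⟩
    simp only [pt3_Z, Polynomial.natDegree_sub_C]
    exact (Polynomial.natDegree_C_mul_le _ _).trans Polynomial.natDegree_X_le

theorem natDegree_blueSub (a y c : K) (g : MvPolynomial V3 K) :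
    (blueSub a y c g).natDegree ≤ g.totalDegree := by
  have := MvPolynomial.aeval_natDegree_le (m := g.totalDegree) (n := 1) g le_rfl
    (pt3 (Polynomial.C y) Polynomial.X (Polynomial.C a * Polynomial.X - Polynomial.C c)) ?_
  · simpa [blueSub] using this
  · rw [forall_V3]
    refine ⟨by simp, by simp, ?_⟩
    simp only [pt3_Z, Polynomial.natDegree_sub_C]
    exact (Polynomial.natDegree_C_mul_le _ _).trans Polynomial.natDegree_X_le

theorem eval_redSub (a y c x : K) (g : MvPolynomial V3 K) :
    (redSub a y c g).eval x = eval (pt3 x y (a * x - c)) g := by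
  have : ((Polynomial.aeval x).comp (redSub a y c)) = aeval (pt3 x y (a * x - c)) := by
    apply MvPolynomial.algHom_ext
    rw [forall_V3]
    simp [redSub]
  have := DFunLike.congr_fun this g
  simpa [Polynomial.aeval_def, aeval_eq_eval, Polynomial.eval₂_id] using this

theorem eval_blueSub (a y c x : K) (g : MvPolynomial V3 K) :
    (blueSub a y c g).eval x = eval (pt3 y x (a * x - c)) g := by
  have : ((Polynomial.aeval x).comp (blueSub a y c)) = aeval (pt3 y x (a * x - c)) := by
    apply MvPolynomial.algHom_ext
    rw [forall_V3]
    simp [blueSub]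
  have := DFunLike.congr_fun this g
  simpa [Polynomial.aeval_def, aeval_eq_eval, Polynomial.eval₂_id] using this

theorem pderiv_comm' {σ : Type*} (i j : σ) (g : MvPolynomial σ K) :
    pderiv i (pderiv j g) = pderiv j (pderiv i g) := by
  by_cases hij : i = j
  · rw [hij]
  ext m
  simp only [coeff_pderiv, Finsupp.add_apply, Finsupp.single_apply, hij, Ne.symm hij, if_false,
    add_zero]
  rw [add_right_comm]; ring

/-- If differentiation along a substitution is `∂ᵢ + a ∂_Z` and the substitution kills `g`, then it
kills `flec i g`. -/
theorem flec_vanish {φ : MvPolynomial V3 K →ₐ[K] Polynomial K} {i : V3} {a : K}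
    (key : ∀ q, Polynomial.derivative (φ q) =
      φ (pderiv i q) + φ (pderiv (some 1) q) * Polynomial.C a)
    {g : MvPolynomial V3 K} (h : φ g = 0) : φ (flec i g) = 0 := by
  have h1 := key g
  have hx := key (pderiv i g)
  have hz := key (pderiv (some 1) g)
  have h2 := congrArg Polynomial.derivative h1
  rw [h] at h1 h2
  simp only [Polynomial.derivative_zero, Polynomial.derivative_add, Polynomial.derivative_mul,
    Polynomial.derivative_C, mul_zero, add_zero] at h1 h2
  rw [hx, hz, pderiv_comm' i (some 1) g] at h2
  unfold flec
  simp only [map_add, map_sub, map_mul, map_pow, map_ofNat]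
  have e : φ (pderiv i g) = - (φ (pderiv (some 1) g) * Polynomial.C a) := by
    linear_combination -h1
  rw [e]
  linear_combination - (φ (pderiv (some 1) g)) ^ 2 * h2

theorem derivative_redSub (a y c : K) (q : MvPolynomial V3 K) :
    Polynomial.derivative (redSub a y c q) =
      redSub a y c (pderiv (some 0) q) + redSub a y c (pderiv (some 1) q) * Polynomial.C a := by
  have := chain_rule3 (K := K) (fun q : Polynomial K => Polynomial.derivative q) (by simp)
    (by intro a b; simp [Polynomial.derivative_mul]; ring) (by simp [Polynomial.algebraMap_eq])
    Polynomial.X (Polynomial.C y) (Polynomial.C a * Polynomial.X - Polynomial.C c) q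
  unfold redSub
  rw [this]
  simp

theorem derivative_blueSub (a y c : K) (q : MvPolynomial V3 K) :
    Polynomial.derivative (blueSub a y c q) =
      blueSub a y c (pderiv none q) + blueSub a y c (pderiv (some 1) q) * Polynomial.C a := by
  have := chain_rule3 (K := K) (fun q : Polynomial K => Polynomial.derivative q) (by simp)
    (by intro a b; simp [Polynomial.derivative_mul]; ring) (by simp [Polynomial.algebraMap_eq])
    (Polynomial.C y) Polynomial.X (Polynomial.C a * Polynomial.X - Polynomial.C c) q
  unfold blueSub
  rw [this]
  simp

/-! ### Counting lines in the intersection of two surfaces -/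

theorem totalDegree_aeval_le {σ τ S : Type*} [CommRing S] [Algebra K S]
    (v : σ → MvPolynomial τ S) (hv : ∀ i, (v i).totalDegree ≤ 1) (g : MvPolynomial σ K) :
    (aeval v g).totalDegree ≤ g.totalDegree := by
  rw [aeval_def, eval₂_eq]
  refine totalDegree_finsetSum_le fun m hm => ?_
  refine (totalDegree_mul _ _).trans ?_
  have h1 : (algebraMap K (MvPolynomial τ S) (coeff m g)).totalDegree = 0 := by
    rw [MvPolynomial.algebraMap_apply, totalDegree_C]
  rw [h1, zero_add]
  refine (totalDegree_finsetProd _ _).trans ?_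
  refine le_trans (Finset.sum_le_sum fun i _ => ?_) (le_totalDegree hm)
  refine (totalDegree_pow _ _).trans ?_
  have := Nat.mul_le_mul_left (m i) (hv i)
  simpa using this

theorem eval_optionEquivRight (a y c : K) (g : MvPolynomial V3 K) :
    eval ![Polynomial.C y, Polynomial.C a * Polynomial.X - Polynomial.C c]
      (optionEquivRight K (Fin 2) g) = blueSub a y c g := by
  have : ((aeval (R := Polynomial K)
      ![Polynomial.C y, Polynomial.C a * Polynomial.X - Polynomial.C c]).restrictScalars K).comp
      (optionEquivRight K (Fin 2)).toAlgHom = blueSub a y c := by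
    apply MvPolynomial.algHom_ext
    rw [forall_V3]
    simp [blueSub]
  have := DFunLike.congr_fun this g
  simpa [aeval_eq_eval] using this

theorem totalDegree_optionEquivRight (q : MvPolynomial V3 K) :
    (optionEquivRight K (Fin 2) q).totalDegree ≤ q.totalDegree := by
  have e : (optionEquivRight K (Fin 2)).toAlgHom =
      aeval fun o => o.elim (C Polynomial.X) X := by
    apply MvPolynomial.algHom_ext
    rw [forall_V3]
    simp
  have e2 : optionEquivRight K (Fin 2) q = aeval (fun o : V3 => o.elim (C Polynomial.X) X) q :=
    DFunLike.congr_fun e q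
  rw [e2]
  refine totalDegree_aeval_le _ ?_ q
  rw [forall_V3]
  simp

/-- Two surfaces without a common component contain at most `deg g · deg h` common blue lines: over
the coefficient ring `K[Y]` blue lines are points of the `(X, Z)`-plane, and `bezout` applies. -/
theorem blue_bezout {ι : Type*} {a y c : ι → K} (hy : Function.Injective y)
    {g h : MvPolynomial V3 K} (hg : Irreducible g) (hgh : ¬ g ∣ h) (s : Finset ι)
    (h1 : ∀ j ∈ s, blueSub (a j) (y j) (c j) g = 0)
    (h2 : ∀ j ∈ s, blueSub (a j) (y j) (c j) h = 0) :
    s.card ≤ g.totalDegree * h.totalDegree := by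
  have hinj : Function.Injective (fun j =>
      (![Polynomial.C (y j), Polynomial.C (a j) * Polynomial.X - Polynomial.C (c j)] :
        Fin 2 → Polynomial K)) := by
    intro i j hij
    have := congrFun hij 0
    simp only [Matrix.cons_val_zero] at this
    exact hy (Polynomial.C_injective this)
  have hp : Prime (optionEquivRight K (Fin 2) g) :=
    (MulEquiv.prime_iff (optionEquivRight K (Fin 2)).toMulEquiv).2 hg.prime
  have hnd : ¬ optionEquivRight K (Fin 2) g ∣ optionEquivRight K (Fin 2) h :=
    fun hd => hgh ((map_dvd_iff (optionEquivRight K (Fin 2)).toMulEquiv).1 hd)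
  have := bezout hp hnd (s.image _)
    (by
      intro z hz
      obtain ⟨j, hj, rfl⟩ := Finset.mem_image.1 hz
      rw [← h1 j hj]; exact eval_optionEquivRight _ _ _ _)
    (by
      intro z hz
      obtain ⟨j, hj, rfl⟩ := Finset.mem_image.1 hz
      rw [← h2 j hj]; exact eval_optionEquivRight _ _ _ _)
  rw [Finset.card_image_of_injective _ hinj] at this
  exact this.trans (Nat.mul_le_mul (totalDegree_optionEquivRight g)
    (totalDegree_optionEquivRight h))

end Surface

/-! ### Doubly ruled surfaces -/

section DoublyRuled
open MvPolynomial

/-- A second-order linear differential equation with invertible leading term at the origin has no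
nonzero polynomial solution of degree less than the characteristic with vanishing initial data. -/
theorem ode_zero {A : Type*} [CommRing A] [IsDomain A] {p : ℕ} [CharP A p]
    {η φ w u : Polynomial A}
    (h : φ ^ 2 * Polynomial.derivative (Polynomial.derivative η) =
      η * w + Polynomial.derivative η * u)
    (hφ : φ.coeff 0 ≠ 0) (h0 : η.coeff 0 = 0) (h1 : η.coeff 1 = 0) (hd : η.natDegree < p) :
    η = 0 := by
  have key : ∀ n, η.coeff n = 0 := by
    intro n
    induction n using Nat.strong_induction_on with
    | _ n ih =>
      match n, ih with
      | 0, _ => exact h0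
      | 1, _ => exact h1
      | m + 2, ih =>
        by_cases hm : p ≤ m + 2
        · exact Polynomial.coeff_eq_zero_of_natDegree_lt (by omega)
        have hc := congrArg (fun q => Polynomial.coeff q m) h
        simp only [Polynomial.coeff_add, Polynomial.coeff_mul] at hc
        rw [Finset.sum_eq_single (0, m), Finset.sum_eq_zero, Finset.sum_eq_zero] at hc
        · simp only [Polynomial.coeff_derivative, add_zero] at hc
          have hne : ∀ k, 0 < k → k < p → (k : A) ≠ 0 := by
            intro k hk hkp h0
            rw [CharP.cast_eq_zero_iff A p] at h0
            exact absurd (Nat.le_of_dvd hk h0) (by omega)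
          have e1 : (φ ^ 2).coeff 0 ≠ 0 := by
            rw [Polynomial.coeff_zero_eq_eval_zero] at hφ ⊢
            simpa using hφ
          have e2 := hne (m + 1) (by omega) (by omega)
          have e3 := hne (m + 2) (by omega) (by omega)
          have e3' : ((m + 1 : ℕ) : A) + 1 ≠ 0 := by
            convert e3 using 1; push_cast; ring
          push_cast at e2 e3'
          simpa [e1, e2, e3'] using hc
        · rintro ⟨i, j⟩ hij
          rw [Finset.HasAntidiagonal.mem_antidiagonal] at hij
          simp only at hij
          simp only [Polynomial.coeff_derivative]
          rw [ih (i + 1) (by omega)]; simp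
        · rintro ⟨i, j⟩ hij
          rw [Finset.HasAntidiagonal.mem_antidiagonal] at hij
          simp only at hij
          simp only
          rw [ih i (by omega)]; simp
        · rintro ⟨i, j⟩ hij hne
          rw [Finset.HasAntidiagonal.mem_antidiagonal] at hij
          simp only at hij
          simp only [Polynomial.coeff_derivative]
          have : i ≠ 0 := by
            rintro rfl
            exact hne (by simp at hij; simp [hij])
          rw [ih (j + 1 + 1) (by omega)]; simp
        · intro hh
          exact absurd (Finset.HasAntidiagonal.mem_antidiagonal.2 (zero_add m)) hh
  exact Polynomial.ext (by simpa using key)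

/-- Differentiation of the coefficients of a polynomial over a polynomial ring. -/
def coeffDeriv {K : Type*} [CommRing K] (h : Polynomial (Polynomial K)) :
    Polynomial (Polynomial K) :=
  ∑ n ∈ h.support, Polynomial.monomial n (Polynomial.derivative (h.coeff n))

theorem coeff_coeffDeriv {K : Type*} [CommRing K] (h : Polynomial (Polynomial K)) (n : ℕ) :
    (coeffDeriv h).coeff n = Polynomial.derivative (h.coeff n) := by
  unfold coeffDeriv
  simp only [Polynomial.finsetSum_coeff, Polynomial.coeff_monomial]
  rw [Finset.sum_ite_eq' h.support n]
  split_ifs with hn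
  · rfl
  · rw [Polynomial.notMem_support_iff.1 hn]; simp

variable {K : Type*} [Field K]

theorem coeffDeriv_add (a b : Polynomial (Polynomial K)) :
    coeffDeriv (a + b) = coeffDeriv a + coeffDeriv b := by
  ext1 n; simp [coeff_coeffDeriv]

theorem coeffDeriv_mul (a b : Polynomial (Polynomial K)) :
    coeffDeriv (a * b) = a * coeffDeriv b + b * coeffDeriv a := by
  ext1 n
  rw [mul_comm b]
  simp only [coeff_coeffDeriv, Polynomial.coeff_mul, Polynomial.coeff_add,
    Polynomial.derivative_sum, Polynomial.derivative_mul, ← Finset.sum_add_distrib]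
  exact Finset.sum_congr rfl fun _ _ => add_comm _ _

theorem coeffDeriv_C (q : Polynomial K) :
    coeffDeriv (Polynomial.C q) = Polynomial.C (Polynomial.derivative q) := by
  ext1 n
  rw [coeff_coeffDeriv, Polynomial.coeff_C, Polynomial.coeff_C]
  split_ifs <;> simp

theorem coeffDeriv_X : coeffDeriv (Polynomial.X : Polynomial (Polynomial K)) = 0 := by
  ext1 n
  rw [coeff_coeffDeriv, Polynomial.coeff_X]
  split_ifs <;> simp

/-- Along a direction `∂ᵢ + l ∂_Z` with `D l = 0`, divisibility of `flec i g` by `g` turns into a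
second-order linear differential equation for the restriction of `g`. -/
theorem second_order {B : Type*} [CommRing B] [Algebra K B] (ψ : MvPolynomial V3 K →ₐ[K] B)
    (D : B → B) (hadd : ∀ a b, D (a + b) = D a + D b)
    (hmul : ∀ a b, D (a * b) = a * D b + b * D a) {i : V3} {l : B} (hl : D l = 0)
    (key : ∀ q, D (ψ q) = ψ (pderiv i q) + ψ (pderiv (some 1) q) * l)
    {g w : MvPolynomial V3 K} (hw : flec i g = g * w) :
    ∃ U, ψ (pderiv (some 1) g) ^ 2 * D (D (ψ g)) = ψ g * ψ w + D (ψ g) * U := by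
  refine ⟨2 * ψ (pderiv (some 1) g) * ψ (pderiv (some 1) (pderiv i g)) +
    (l * ψ (pderiv (some 1) g) - ψ (pderiv i g)) * ψ (pderiv (some 1) (pderiv (some 1) g)), ?_⟩
  have e := congrArg ψ hw
  unfold flec at e
  simp only [map_add, map_sub, map_mul, map_pow, map_ofNat] at e
  have h2 : D (D (ψ g)) = ψ (pderiv i (pderiv i g)) + 2 * (ψ (pderiv (some 1) (pderiv i g)) * l)
      + ψ (pderiv (some 1) (pderiv (some 1) g)) * l * l := by
    rw [key g, hadd, hmul, hl, key, key, pderiv_comm' i (some 1) g]; ring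
  rw [h2, key g, ← e]
  ring

/-- An irreducible surface, of degree small compared with the characteristic, on which both flecnodal
expressions vanish and which contains a blue line with a point where `∂_Z` does not vanish, is the
graph of a bilinear polynomial. The bilinear graph through the blue line that agrees with the surface
to second order at the given point is unique, and `ode_zero`, applied first in the direction of `Y`
and then in that of `X`, shows that `g` vanishes on it. -/
theorem doubly_ruled {p : ℕ} [CharP K p] {g : MvPolynomial V3 K} (hg : Irreducible g)
    (hd : g.totalDegree + 1 < p) (hr : g ∣ flec (some 0) g) (hb : g ∣ flec none g)
    {u s v y0 : K} (hin : blueSub u s v g = 0)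
    (hz : (blueSub u s v (pderiv (some 1) g)).eval y0 ≠ 0) :
    ∃ γ α β δ : K, Associated g (X (some 1) - (C γ * X (some 0) * X none + C α * X (some 0) +
      C β * X none + C δ)) := by
  obtain ⟨wr, hwr⟩ := hr
  obtain ⟨wb, hwb⟩ := hb
  -- the restriction to the blue line, recentred at `y0`
  set ψ0 : MvPolynomial V3 K →ₐ[K] Polynomial K :=
    (Polynomial.aeval (Polynomial.X + Polynomial.C y0)).comp (blueSub u s v) with hψ0
  have hψ0deg : ∀ q, (ψ0 q).natDegree ≤ q.totalDegree := by
    intro q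
    have : ψ0 q = (blueSub u s v q).comp (Polynomial.X + Polynomial.C y0) := rfl
    rw [this, Polynomial.natDegree_comp, Polynomial.natDegree_X_add_C, mul_one]
    exact natDegree_blueSub _ _ _ _
  have hψ00 : ψ0 g = 0 := by simp [hψ0, hin]
  set F := ψ0 (pderiv (some 0) g)
  set φ := ψ0 (pderiv (some 1) g) with hφ
  have hφ0 : φ.coeff 0 ≠ 0 := by
    have : φ = (blueSub u s v (pderiv (some 1) g)).comp (Polynomial.X + Polynomial.C y0) := rfl
    rw [this, Polynomial.coeff_zero_eq_eval_zero, Polynomial.eval_comp]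
    simpa using hz
  -- `a0 + c0 Y` is the slope in the `X`-direction for which `g` vanishes to the required order at `y0`
  obtain ⟨a0, c0, ha0, hc0⟩ : ∃ a0 c0 : K, F.coeff 0 + a0 * φ.coeff 0 = 0 ∧
      F.coeff 1 + a0 * φ.coeff 1 + c0 * φ.coeff 0 = 0 := by
    refine ⟨- F.coeff 0 / φ.coeff 0,
      -(F.coeff 1 + (- F.coeff 0 / φ.coeff 0) * φ.coeff 1) / φ.coeff 0, ?_, ?_⟩
    · field_simp; ring
    · field_simp; ring
  -- `ψ` is the restriction to the bilinear graph, as a polynomial in `X - s` over `K[Y - y0]`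
  set ly : Polynomial K := Polynomial.C a0 + Polynomial.C c0 * Polynomial.X with hly
  set zx : Polynomial K := Polynomial.C u * (Polynomial.X + Polynomial.C y0) - Polynomial.C v
    with hzx
  set vX : Polynomial (Polynomial K) := Polynomial.X + Polynomial.C (Polynomial.C s) with hvX
  set vY : Polynomial (Polynomial K) := Polynomial.C (Polynomial.X + Polynomial.C y0) with hvY
  set vZ : Polynomial (Polynomial K) := Polynomial.C zx + Polynomial.X * Polynomial.C ly with hvZ
  set ψ : MvPolynomial V3 K →ₐ[K] Polynomial (Polynomial K) := aeval (pt3 vX vY vZ) with hψ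
  have hcoeff0 : ∀ q, (ψ q).coeff 0 = ψ0 q := by
    intro q
    have e : (((Polynomial.aeval (0 : Polynomial K)).restrictScalars K).comp ψ) = ψ0 := by
      apply MvPolynomial.algHom_ext
      rw [forall_V3]
      simp [hψ, hψ0, hvX, hvY, hvZ, blueSub, hzx]
    have := DFunLike.congr_fun e q
    rw [← this, Polynomial.coeff_zero_eq_eval_zero]
    simp
  have keyx : ∀ q, Polynomial.derivative (ψ q) =
      ψ (pderiv (some 0) q) + ψ (pderiv (some 1) q) * Polynomial.C ly := by
    intro q
    have := chain_rule3 (K := K) (fun q : Polynomial (Polynomial K) => Polynomial.derivative q)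
      (by simp) (by intro a b; simp [Polynomial.derivative_mul]; ring)
      (by intro k; rw [Polynomial.algebraMap_apply]; simp)
      vX vY vZ q
    rw [hψ, this]
    simp [hvX, hvY, hvZ]
  have keyy : ∀ q, coeffDeriv (ψ q) = ψ (pderiv none q) + ψ (pderiv (some 1) q) *
      (Polynomial.C (Polynomial.C u) + Polynomial.X * Polynomial.C (Polynomial.C c0)) := by
    intro q
    have := chain_rule3 (K := K) (fun q : Polynomial (Polynomial K) => coeffDeriv q)
      coeffDeriv_add coeffDeriv_mul
      (by intro k; rw [Polynomial.algebraMap_apply]; simp [coeffDeriv_C])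
      vX vY vZ q
    have eX : coeffDeriv vX = 0 := by simp [hvX, coeffDeriv_add, coeffDeriv_X, coeffDeriv_C]
    have eY : coeffDeriv vY = 1 := by rw [hvY, coeffDeriv_C]; simp
    have eZ : coeffDeriv vZ =
        Polynomial.C (Polynomial.C u) + Polynomial.X * Polynomial.C (Polynomial.C c0) := by
      rw [hvZ, coeffDeriv_add, coeffDeriv_mul, coeffDeriv_X, coeffDeriv_C, coeffDeriv_C, hzx, hly]
      simp
    rw [hψ, this, eX, eY, eZ]
    simp
  obtain ⟨Ux, hUx⟩ := second_order ψ (fun q : Polynomial (Polynomial K) => Polynomial.derivative q)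
    (by simp) (by intro a b; simp [Polynomial.derivative_mul]; ring) (by simp) keyx hwr
  obtain ⟨Uy, hUy⟩ := second_order ψ coeffDeriv coeffDeriv_add coeffDeriv_mul
    (by simp [coeffDeriv_add, coeffDeriv_mul, coeffDeriv_C, coeffDeriv_X]) keyy hwb
  set h := ψ g with hh
  have hh0 : h.coeff 0 = 0 := by rw [hh, hcoeff0, hψ00]
  have hθ : h.coeff 1 = F + φ * ly := by
    have := congrArg (fun q => Polynomial.coeff q 0) (keyx g)
    simp only [Polynomial.coeff_derivative, Polynomial.coeff_add, Polynomial.mul_coeff_zero,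
      hcoeff0, Polynomial.coeff_C_zero] at this
    simpa using this
  have hchar : CharP (Polynomial K) p := inferInstance
  have hθ0 : h.coeff 1 = 0 := by
    have e := congrArg (fun q => Polynomial.coeff q 1) hUy
    simp only [Polynomial.coeff_add, Polynomial.mul_coeff_one, coeff_coeffDeriv, hh0,
      Polynomial.derivative_zero, mul_zero, zero_mul, add_zero, zero_add, pow_two,
      Polynomial.mul_coeff_zero, hcoeff0] at e
    refine ode_zero (p := p) (φ := φ) (w := ψ0 wb) (u := Uy.coeff 0) ?_ hφ0 ?_ ?_ ?_
    · rw [pow_two]; exact e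
    · rw [hθ, hly]
      simp only [Polynomial.coeff_add, Polynomial.mul_coeff_zero, Polynomial.coeff_C_zero,
        Polynomial.coeff_X_zero, mul_zero, add_zero]
      linear_combination ha0
    · rw [hθ, hly]
      simp only [Polynomial.coeff_add, Polynomial.mul_coeff_one, Polynomial.mul_coeff_zero,
        Polynomial.coeff_C_zero, Polynomial.coeff_X_zero, mul_zero, add_zero,
        Polynomial.coeff_X_one, Polynomial.coeff_C_succ]
      linear_combination hc0
    · rw [hθ]
      refine lt_of_le_of_lt (Polynomial.natDegree_add_le _ _) (max_lt ?_ ?_)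
      · have : F.natDegree ≤ _ := (hψ0deg (pderiv (some 0) g)).trans (totalDegree_pderiv_le g (some 0))
        omega
      · refine lt_of_le_of_lt Polynomial.natDegree_mul_le ?_
        have h1 : φ.natDegree ≤ _ := (hψ0deg (pderiv (some 1) g)).trans (totalDegree_pderiv_le g (some 1))
        have h2 : ly.natDegree ≤ 1 := by
          rw [hly, add_comm]
          exact Polynomial.natDegree_linear_le
        omega
  have hdegh : h.natDegree ≤ g.totalDegree := by
    have e : h = aeval (pt3 vX vY vZ) (map (algebraMap K (Polynomial K)) g) := by
      rw [aeval_map_algebraMap]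
    have h1 : (map (algebraMap K (Polynomial K)) g).totalDegree ≤ g.totalDegree := by
      rw [totalDegree, totalDegree]
      exact Finset.sup_mono (support_map_subset _ _)
    rw [e]
    have := aeval_natDegree_le (n := 1) _ h1 (pt3 vX vY vZ) ?_
    · simpa using this
    · rw [forall_V3]
      refine ⟨by simp [hvY], by simp [hvX], ?_⟩
      rw [pt3_Z, hvZ, add_comm, mul_comm]
      exact Polynomial.natDegree_linear_le
  have hzero : h = 0 := by
    refine ode_zero (p := p) hUx ?_ hh0 hθ0 (by omega)
    rw [hcoeff0]
    intro hφz
    apply hφ0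
    rw [hφ, hφz]; simp
  -- undo the recentring
  set gp : MvPolynomial V3 K := C u * X none - C v + (X (some 0) - C s) *
    (C a0 + C c0 * (X none - C y0)) with hgp
  have hsub : aeval (pt3 (X (some 0)) (X none) gp) g = 0 := by
    set Θ0 : Polynomial K →ₐ[K] MvPolynomial V3 K := Polynomial.aeval (X none - C y0) with hΘ0
    set Θ : Polynomial (Polynomial K) →+* MvPolynomial V3 K :=
      Polynomial.eval₂RingHom Θ0.toRingHom (X (some 0) - C s) with hΘ
    have e : ∀ q, Θ (ψ q) = aeval (pt3 (X (some 0)) (X none) gp) q := by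
      intro q
      induction q using MvPolynomial.induction_on with
      | C a =>
        rw [hψ, aeval_C, aeval_C, Polynomial.algebraMap_apply]
        simp [hΘ, hΘ0, MvPolynomial.algebraMap_eq]
      | add p q hp hq => simp [hp, hq]
      | mul_X p j hp =>
        rw [map_mul, map_mul, hp, map_mul]
        congr 1
        revert j
        rw [forall_V3]
        simp [hψ, hvX, hvY, hvZ, hΘ, hΘ0, hzx, hly, hgp, ← MvPolynomial.algebraMap_eq]
    rw [← e, ← hh, hzero, map_zero]
  -- modulo `Z - gp`, `g` is congruent to its restriction to `Z = gp`, which is zero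
  have hdvd : (X (some 1) - gp) ∣ g := by
    rw [← Ideal.mem_span_singleton]
    set I := Ideal.span {(X (some 1) - gp : MvPolynomial V3 K)} with hI
    have e : (Ideal.Quotient.mkₐ K I).comp (aeval (pt3 (X (some 0)) (X none) gp)) =
        Ideal.Quotient.mkₐ K I := by
      apply MvPolynomial.algHom_ext
      rw [forall_V3]
      refine ⟨by simp, by simp, ?_⟩
      simp only [AlgHom.comp_apply, aeval_X, pt3_Z, Ideal.Quotient.mkₐ_eq_mk]
      rw [eq_comm, Ideal.Quotient.eq]
      exact Ideal.mem_span_singleton_self _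
    have := DFunLike.congr_fun e g
    simp only [AlgHom.comp_apply, hsub, map_zero, Ideal.Quotient.mkₐ_eq_mk] at this
    exact Ideal.Quotient.eq_zero_iff_mem.1 this.symm
  have hnu : ¬ IsUnit (X (some 1) - gp : MvPolynomial V3 K) := by
    intro hunit
    have := hunit.map (eval (pt3 s 0 (-v)))
    simp [hgp] at this
  refine ⟨c0, a0 - c0 * y0, u - s * c0, -v - s * (a0 - c0 * y0), ?_⟩
  have hass : Associated (X (some 1) - gp) g := by
    obtain ⟨q, hq⟩ := hdvd
    rcases hg.isUnit_or_isUnit hq with h1 | h1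
    · exact absurd h1 hnu
    · exact hq ▸ (associated_mul_unit_right _ _ h1)
  convert hass.symm using 2
  rw [hgp]
  simp only [map_sub, map_mul, map_neg]
  ring

end DoublyRuled

/-! ### Red and blue lines on a surface -/

section Components
open MvPolynomial

variable {K : Type*} [Field K]

/-- If `∂_Z g = 0` and the degree is below the characteristic, then `g` does not involve `Z`. -/
theorem blueSub_of_pderiv_zero {p : ℕ} [CharP K p] {g : MvPolynomial V3 K}
    (hd : g.totalDegree < p) (hz : pderiv (some 1) g = 0) (a s c : K) :
    blueSub a s c g = blueSub 0 s 0 g := by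
  set zz : Polynomial K := Polynomial.C a * Polynomial.X - Polynomial.C c with hzz
  set vX : Polynomial (Polynomial K) := Polynomial.C (Polynomial.C s) with hvX
  set vY : Polynomial (Polynomial K) := Polynomial.C Polynomial.X with hvY
  set vZ : Polynomial (Polynomial K) := Polynomial.C zz * Polynomial.X with hvZ
  set H := aeval (pt3 vX vY vZ) g with hH
  have hder : Polynomial.derivative H = 0 := by
    have := chain_rule3 (K := K) (fun q : Polynomial (Polynomial K) => Polynomial.derivative q)
      (by simp) (by intro a b; simp [Polynomial.derivative_mul]; ring)
      (by intro k; rw [Polynomial.algebraMap_apply]; simp)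
      vX vY vZ g
    rw [hH, this, hz]
    simp [hvX, hvY]
  have hdegH : H.natDegree ≤ g.totalDegree := by
    have e : H = aeval (pt3 vX vY vZ) (map (algebraMap K (Polynomial K)) g) := by
      rw [aeval_map_algebraMap]
    have h1 : (map (algebraMap K (Polynomial K)) g).totalDegree ≤ g.totalDegree := by
      rw [totalDegree, totalDegree]
      exact Finset.sup_mono (support_map_subset _ _)
    rw [e]
    have := aeval_natDegree_le (n := 1) _ h1 (pt3 vX vY vZ) ?_
    · simpa using this
    · rw [forall_V3]
      refine ⟨by simp [hvY], by simp [hvX], ?_⟩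
      rw [pt3_Z, hvZ]
      exact (Polynomial.natDegree_C_mul_le _ _).trans Polynomial.natDegree_X_le
  have hC : H = Polynomial.C (H.coeff 0) := by
    ext1 n
    cases n with
    | zero => simp
    | succ n =>
      rw [Polynomial.coeff_C_succ]
      by_cases hn : H.natDegree < n + 1
      · exact Polynomial.coeff_eq_zero_of_natDegree_lt hn
      have h1 := congrArg (fun q => Polynomial.coeff q n) hder
      simp only [Polynomial.coeff_derivative, Polynomial.coeff_zero] at h1
      refine (mul_eq_zero.1 h1).resolve_right fun h0 => ?_
      have h0' : ((n + 1 : ℕ) : Polynomial K) = 0 := by push_cast; exact h0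
      rw [CharP.cast_eq_zero_iff (Polynomial K) p] at h0'
      have := Nat.le_of_dvd (by omega) h0'
      omega
  have hev : ∀ t : Polynomial K, H.eval t =
      aeval (pt3 (Polynomial.C s) Polynomial.X (zz * t)) g := by
    intro t
    have e : (((Polynomial.aeval t).restrictScalars K).comp (aeval (pt3 vX vY vZ))) =
        aeval (pt3 (Polynomial.C s) Polynomial.X (zz * t)) := by
      apply MvPolynomial.algHom_ext
      rw [forall_V3]
      simp [hvX, hvY, hvZ]
    have := DFunLike.congr_fun e g
    rw [← this]
    simp [hH]
  have h1 := hev 1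
  have h0 := hev 0
  rw [hC, Polynomial.eval_C] at h1 h0
  rw [mul_one] at h1
  rw [mul_zero] at h0
  rw [h1] at h0
  simpa [blueSub] using h0

variable {ι : Type*} (a y c : ι → K)

/-- The `i`-th red line lies on the surface `g = 0`. -/
def RedIn (i : ι) (g : MvPolynomial V3 K) : Prop := redSub (a i) (y i) (c i) g = 0

/-- The `j`-th blue line lies on the surface `g = 0`. -/
def BlueIn (j : ι) (g : MvPolynomial V3 K) : Prop := blueSub (a j) (y j) (c j) g = 0

/-- The `i`-th red line lies on the graph `Z = γXY + αX + βY + δ`, where `τ = (γ, α, β, δ)`. -/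
def OnRed (τ : K × K × K × K) (i : ι) : Prop :=
  a i = τ.1 * y i + τ.2.1 ∧ c i = -(τ.2.2.1 * y i + τ.2.2.2)

/-- The `j`-th blue line lies on the graph `Z = γXY + αX + βY + δ`, where `τ = (γ, α, β, δ)`. -/
def OnBlue (τ : K × K × K × K) (j : ι) : Prop :=
  a j = τ.1 * y j + τ.2.2.1 ∧ c j = -(τ.2.1 * y j + τ.2.2.2)

variable {a y c} {E : ι → ι → Prop}

theorem onRed_of_redIn {γ α β δ : K} {i : ι}
    (h : RedIn a y c i (X (some 1) - (C γ * X (some 0) * X none + C α * X (some 0) +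
      C β * X none + C δ))) : OnRed a y c (γ, α, β, δ) i := by
  have h1 : Polynomial.C (a i - γ * y i - α) * Polynomial.X
      + Polynomial.C (- c i - β * y i - δ) = 0 := by
    rw [← (show _ = _ from h)]
    simp only [redSub, map_sub, map_add, map_mul, aeval_X, pt3_X, pt3_Y, pt3_Z, aeval_C,
      Polynomial.algebraMap_eq, map_neg]
    ring
  have e1 := congrArg (fun q => Polynomial.coeff q 1) h1
  have e0 := congrArg (fun q => Polynomial.coeff q 0) h1
  simp only [Polynomial.coeff_add, Polynomial.coeff_C_mul, Polynomial.coeff_X_one,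
    Polynomial.coeff_C_succ, Polynomial.coeff_X_zero, Polynomial.coeff_C_zero,
    Polynomial.coeff_zero] at e1 e0
  constructor
  · simp only; linear_combination e1
  · simp only; linear_combination -e0

theorem onBlue_of_blueIn {γ α β δ : K} {i : ι}
    (h : BlueIn a y c i (X (some 1) - (C γ * X (some 0) * X none + C α * X (some 0) +
      C β * X none + C δ))) : OnBlue a y c (γ, α, β, δ) i := by
  have h1 : Polynomial.C (a i - γ * y i - β) * Polynomial.X
      + Polynomial.C (- c i - α * y i - δ) = 0 := by
    rw [← (show _ = _ from h)]
    simp only [blueSub, map_sub, map_add, map_mul, aeval_X, pt3_X, pt3_Y, pt3_Z, aeval_C,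
      Polynomial.algebraMap_eq, map_neg]
    ring
  have e1 := congrArg (fun q => Polynomial.coeff q 1) h1
  have e0 := congrArg (fun q => Polynomial.coeff q 0) h1
  simp only [Polynomial.coeff_add, Polynomial.coeff_C_mul, Polynomial.coeff_X_one,
    Polynomial.coeff_C_succ, Polynomial.coeff_X_zero, Polynomial.coeff_C_zero,
    Polynomial.coeff_zero] at e1 e0
  constructor
  · simp only; linear_combination e1
  · simp only; linear_combination -e0

/-- A blue line not on the surface meets few red lines lying on it. -/
theorem count_not_blueIn (hy : Function.Injective y)
    (hE : ∀ i j, E i j → a i * y j - c i = a j * y i - c j)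
    {g : MvPolynomial V3 K} {j : ι} (hj : ¬ BlueIn a y c j g) (s : Finset ι)
    (hs : ∀ i ∈ s, E i j ∧ RedIn a y c i g) : s.card ≤ g.totalDegree := by
  rw [← Finset.card_image_of_injective s hy]
  refine le_trans ?_ (natDegree_blueSub (a j) (y j) (c j) g)
  refine Polynomial.card_le_degree_of_subset_roots ?_
  intro z hz
  rw [Finset.mem_val, Finset.mem_image] at hz
  obtain ⟨i, hi, rfl⟩ := hz
  obtain ⟨h1, h2⟩ := hs i hi
  rw [Polynomial.mem_roots hj, Polynomial.IsRoot, eval_blueSub, ← hE i j h1, ← eval_redSub,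
    (show redSub (a i) (y i) (c i) g = 0 from h2), Polynomial.eval_zero]

theorem not_dvd_of_totalDegree_lt {g h : MvPolynomial V3 K} (hh : h ≠ 0)
    (hd : h.totalDegree < g.totalDegree) : ¬ g ∣ h := by
  rintro ⟨q, rfl⟩
  rw [totalDegree_mul_of_isDomain (left_ne_zero_of_mul hh) (right_ne_zero_of_mul hh)] at hd
  omega

theorem totalDegree_pos_of_irreducible {g : MvPolynomial V3 K} (hg : Irreducible g) :
    1 ≤ g.totalDegree := by
  by_contra h
  have h0 : g.totalDegree = 0 := by omega
  rw [totalDegree_eq_zero_iff_eq_C] at h0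
  apply hg.not_isUnit
  rw [h0]
  have : coeff 0 g ≠ 0 := by
    intro h1
    rw [h1, map_zero] at h0
    exact hg.ne_zero h0
  exact (isUnit_iff_ne_zero.2 this).map C

/-- The contribution of one irreducible component: if it is not a bilinear graph, only the few blue
lines of the set `X` on it can meet many red lines on it. -/
theorem component {p : ℕ} [CharP K p] [Infinite K] (hy : Function.Injective y)
    (hE : ∀ i j, E i j → a i * y j - c i = a j * y i - c j)
    (R B : Finset ι) {g : MvPolynomial V3 K} (hg : Irreducible g) (hd : g.totalDegree + 1 < p) :
    ∃ (X : Finset ι) (Q : Finset (K × K × K × K)), X.card ≤ 3 * g.totalDegree ^ 2 ∧ Q.card ≤ 1 ∧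
      ∀ b ∈ B, b ∉ X → (R.filter fun r => (E r b ∧ RedIn a y c r g) ∧
        ¬ ∃ τ ∈ Q, OnBlue a y c τ b ∧ OnRed a y c τ r).card ≤ 3 * g.totalDegree := by
  have hnot : ∀ b, ¬ BlueIn a y c b g →
      (R.filter fun r => E r b ∧ RedIn a y c r g).card ≤ 3 * g.totalDegree := by
    intro b hb
    have := count_not_blueIn hy hE hb (R.filter fun r => E r b ∧ RedIn a y c r g)
      (fun i hi => (Finset.mem_filter.1 hi).2)
    omega
  have hbez : ∀ h : MvPolynomial V3 K, ¬ g ∣ h →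
      (B.filter fun b => BlueIn a y c b g ∧ BlueIn a y c b h).card ≤
        g.totalDegree * h.totalDegree := by
    intro h hgh
    exact blue_bezout hy hg hgh _ (fun j hj => (Finset.mem_filter.1 hj).2.1)
      (fun j hj => (Finset.mem_filter.1 hj).2.2)
  by_cases hb : g ∣ flec none g
  swap
  · refine ⟨_, ∅, (hbez _ hb).trans ?_, by simp, ?_⟩
    · have := Nat.mul_le_mul_left g.totalDegree (totalDegree_flec none g)
      nlinarith
    · intro b hbB hbX
      have : ¬ BlueIn a y c b g := fun h => hbX (Finset.mem_filter.2 ⟨hbB, h,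
        flec_vanish (derivative_blueSub _ _ _) h⟩)
      have := hnot b this
      exact (Finset.card_le_card (Finset.monotone_filter_right _ fun r _ h => h.1)).trans this
  by_cases hr : g ∣ flec (some 0) g
  swap
  · refine ⟨_, ∅, (hbez _ hr).trans ?_, by simp, ?_⟩
    · have := Nat.mul_le_mul_left g.totalDegree (totalDegree_flec (some 0) g)
      nlinarith
    · intro b hbB hbX
      by_cases hbg : BlueIn a y c b g
      · have h1 : ¬ BlueIn a y c b (flec (some 0) g) := fun h =>
          hbX (Finset.mem_filter.2 ⟨hbB, hbg, h⟩)
        have := count_not_blueIn hy hE h1 (R.filter fun r => E r b ∧ RedIn a y c r g)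
          (fun i hi => ⟨(Finset.mem_filter.1 hi).2.1,
            flec_vanish (derivative_redSub _ _ _) (Finset.mem_filter.1 hi).2.2⟩)
        exact (Finset.card_le_card (Finset.monotone_filter_right _ fun r _ h => h.1)).trans
          (this.trans (totalDegree_flec _ _))
      · have := hnot b hbg
        exact (Finset.card_le_card (Finset.monotone_filter_right _ fun r _ h => h.1)).trans this
  -- a cylinder over a curve in the `(X, Y)`-plane
  by_cases hz : pderiv (some 1) g = 0
  · refine ⟨B.filter fun b => BlueIn a y c b g, ∅, ?_, by simp, ?_⟩
    · have hnd : ¬ g ∣ X (some 1) := by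
        rintro ⟨q, hq⟩
        have := congrArg (pderiv (some 1)) hq
        rw [pderiv_X_self, pderiv_mul, hz, zero_mul, zero_add] at this
        exact hg.not_isUnit (IsUnit.of_mul_eq_one _ this.symm)
      have := blue_bezout (a := fun _ => 0) (c := fun _ => 0) hy hg hnd
        (B.filter fun b => BlueIn a y c b g)
        (fun j hj => by
          rw [← blueSub_of_pderiv_zero (p := p) (by omega) hz (a j) (y j) (c j)]
          exact (Finset.mem_filter.1 hj).2)
        (fun j _ => by simp [blueSub])
      rw [totalDegree_X] at this
      nlinarith
    · intro b hbB hbX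
      have := hnot b (fun h => hbX (Finset.mem_filter.2 ⟨hbB, h⟩))
      exact (Finset.card_le_card (Finset.monotone_filter_right _ fun r _ h => h.1)).trans this
  have hdz := totalDegree_pderiv_lt hz
  have hex := hbez _ (not_dvd_of_totalDegree_lt hz (by omega))
  have hcardX : (B.filter fun b => BlueIn a y c b g ∧ BlueIn a y c b (pderiv (some 1) g)).card ≤
      3 * g.totalDegree ^ 2 := by
    refine hex.trans ?_
    have := Nat.mul_le_mul_left g.totalDegree (totalDegree_pderiv_le g (some 1))
    nlinarith
  by_cases hall : ∀ b ∈ B, BlueIn a y c b g → BlueIn a y c b (pderiv (some 1) g)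
  · refine ⟨_, ∅, hcardX, by simp, ?_⟩
    intro b hbB hbX
    have := hnot b (fun h => hbX (Finset.mem_filter.2 ⟨hbB, h, hall b hbB h⟩))
    exact (Finset.card_le_card (Finset.monotone_filter_right _ fun r _ h => h.1)).trans this
  push Not at hall
  obtain ⟨b0, -, hb0, hb0z⟩ := hall
  obtain ⟨y0, hy0⟩ : ∃ y0, (blueSub (a b0) (y b0) (c b0) (pderiv (some 1) g)).eval y0 ≠ 0 := by
    by_contra! h
    exact hb0z (Polynomial.funext (by simpa using h))
  -- both expressions vanish on `g` and some blue line on it has a point with `∂_Z g ≠ 0`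
  obtain ⟨γ, α, β, δ, hass⟩ := doubly_ruled hg hd hr hb hb0 hy0
  refine ⟨_, {(γ, α, β, δ)}, hcardX, by simp, ?_⟩
  intro b hbB hbX
  by_cases hbg : BlueIn a y c b g
  · rw [Finset.card_eq_zero.2]
    · exact Nat.zero_le _
    refine Finset.filter_eq_empty_iff.2 ?_
    rintro r - ⟨⟨-, hr⟩, hn⟩
    refine hn ⟨_, Finset.mem_singleton_self _, onBlue_of_blueIn ?_, onRed_of_redIn ?_⟩
    · obtain ⟨q, hq⟩ := hass.dvd
      rw [BlueIn, hq, map_mul, (show blueSub (a b) (y b) (c b) g = 0 from hbg), zero_mul]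
    · obtain ⟨q, hq⟩ := hass.dvd
      rw [RedIn, hq, map_mul, (show redSub (a r) (y r) (c r) g = 0 from hr), zero_mul]
  · refine le_trans (Finset.card_le_card ?_) (hnot b hbg)
    exact Finset.monotone_filter_right _ fun r _ h => h.1

/-- All components together: apart from few exceptional blue lines, a blue line meets few red lines
on the surface `f = 0` beyond those which lie with it on a common bilinear graph from `Q`. -/
theorem surface {p : ℕ} [CharP K p] [Infinite K] (hy : Function.Injective y)
    (hE : ∀ i j, E i j → a i * y j - c i = a j * y i - c j)
    (R B : Finset ι) (f : MvPolynomial V3 K) (hf : f ≠ 0) (hd : f.totalDegree + 1 < p) :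
    ∃ (X : Finset ι) (Q : Finset (K × K × K × K)),
      X.card ≤ 3 * f.totalDegree ^ 2 ∧ Q.card ≤ f.totalDegree ∧
      ∀ b ∈ B, b ∉ X → (R.filter fun r => (E r b ∧ RedIn a y c r f) ∧
        ¬ ∃ τ ∈ Q, OnBlue a y c τ b ∧ OnRed a y c τ r).card ≤ 3 * f.totalDegree := by
  induction f using UniqueFactorizationMonoid.induction_on_prime with
  | h₁ => exact absurd rfl hf
  | h₂ u hu =>
    refine ⟨∅, ∅, by simp, by simp, fun b _ _ => ?_⟩
    rw [Finset.card_eq_zero.2]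
    · simp
    · refine Finset.filter_eq_empty_iff.2 ?_
      rintro r - ⟨⟨-, hr⟩, -⟩
      have := hu.map (redSub (a r) (y r) (c r))
      rw [(show redSub (a r) (y r) (c r) u = 0 from hr)] at this
      exact not_isUnit_zero this
  | h₃ f g hf0 hg ih =>
    have hdeg := totalDegree_mul_of_isDomain hg.ne_zero hf0
    obtain ⟨X1, Q1, hX1, hQ1, h1⟩ := ih hf0 (by omega)
    obtain ⟨X2, Q2, hX2, hQ2, h2⟩ := component hy hE R B hg.irreducible (by omega)
    have hg1 := totalDegree_pos_of_irreducible hg.irreducible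
    refine ⟨X1 ∪ X2, Q1 ∪ Q2, ?_, ?_, ?_⟩
    · refine (Finset.card_union_le _ _).trans ?_
      rw [hdeg]
      nlinarith
    · refine (Finset.card_union_le _ _).trans ?_
      omega
    · intro b hbB hbX
      rw [Finset.mem_union, not_or] at hbX
      have e1 := h1 b hbB hbX.1
      have e2 := h2 b hbB hbX.2
      rw [hdeg, mul_add, add_comm]
      refine le_trans ?_ (add_le_add e1 e2)
      refine le_trans (Finset.card_le_card ?_) (Finset.card_union_le _ _)
      intro r hr
      obtain ⟨hrR, ⟨hrE, hrIn⟩, hn⟩ := Finset.mem_filter.1 hr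
      rw [RedIn, map_mul, mul_eq_zero] at hrIn
      rw [Finset.mem_union]
      rcases hrIn with h | h
      · refine Or.inr (Finset.mem_filter.2 ⟨hrR, ⟨hrE, h⟩, fun ⟨τ, hτ, h'⟩ => hn ⟨τ, ?_, h'⟩⟩)
        exact Finset.mem_union_right _ hτ
      · refine Or.inl (Finset.mem_filter.2 ⟨hrR, ⟨hrE, h⟩, fun ⟨τ, hτ, h'⟩ => hn ⟨τ, ?_, h'⟩⟩)
        exact Finset.mem_union_left _ hτ

end Components

/-! ### Interpolation and sampling -/

section Interp
open MvPolynomial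

variable {K : Type*} [Field K]

theorem finrank_restrictDegree (e : ℕ) :
    Module.finrank K (restrictDegree V3 K e) = (e + 1) ^ 3 := by
  have h1 : (restrictDegree V3 K e) = restrictSupport K {n : V3 →₀ ℕ | ∀ i, n i ≤ e} := rfl
  rw [h1, Module.finrank_eq_nat_card_basis (basisRestrictSupport K _)]
  let eq : {n : V3 →₀ ℕ | ∀ i, n i ≤ e} ≃ (V3 → Fin (e + 1)) :=
    { toFun := fun n i => ⟨n.1 i, Nat.lt_succ_of_le (n.2 i)⟩
      invFun := fun m => ⟨Finsupp.equivFunOnFinite.symm fun i => (m i : ℕ), fun i => by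
        simpa using Nat.le_of_lt_succ (m i).2⟩
      left_inv := fun n => by ext i; simp
      right_inv := fun m => by ext i; simp }
  rw [Nat.card_congr eq]
  simp

/-- Some polynomial of degree at most `e` in each variable vanishes on all the red lines, because
there are `(e + 1)^3` coefficients and `3e + 1` conditions for each line. -/
theorem exists_surface {ι : Type*} (a y c : ι → K) (R : Finset ι) (e : ℕ)
    (he : 3 * R.card < (e + 1) ^ 2) :
    ∃ f : MvPolynomial V3 K, f ≠ 0 ∧ f.totalDegree ≤ 3 * e ∧ ∀ r ∈ R, RedIn a y c r f := by
  let ψ : restrictDegree V3 K e →ₗ[K] (R → Fin (3 * e + 1) → K) :=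
    LinearMap.pi fun r => LinearMap.pi fun i =>
      (Polynomial.lcoeff K i).comp ((redSub (a r) (y r) (c r)).toLinearMap.comp
        (Submodule.subtype _))
  have hlt : Module.finrank K (R → Fin (3 * e + 1) → K) <
      Module.finrank K (restrictDegree V3 K e) := by
    rw [finrank_restrictDegree, Module.finrank_pi_fintype]
    simp only [Module.finrank_fin_fun, Finset.sum_const, Finset.card_univ, Fintype.card_coe,
      smul_eq_mul]
    nlinarith
  obtain ⟨f, hf, hf0⟩ := (Submodule.ne_bot_iff _).1 (LinearMap.ker_ne_bot_of_finrank_lt (f := ψ) hlt)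
  have hdeg : (f : MvPolynomial V3 K).totalDegree ≤ 3 * e := by
    rw [totalDegree]
    refine Finset.sup_le fun m hm => ?_
    have h1 := (mem_restrictDegree _ _ _).1 f.2 m hm
    rw [Finsupp.sum_fintype _ _ (by simp), sum_V3]
    have e1 := h1 none
    have e2 := h1 (some 0)
    have e3 := h1 (some 1)
    omega
  refine ⟨f, by simpa using hf0, hdeg, fun r hr => ?_⟩
  rw [LinearMap.mem_ker] at hf
  unfold RedIn
  ext n
  rw [Polynomial.coeff_zero]
  by_cases hn : n < 3 * e + 1
  · exact congrFun (congrFun hf ⟨r, hr⟩) ⟨n, hn⟩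
  · refine Polynomial.coeff_eq_zero_of_natDegree_lt ?_
    have := natDegree_redSub (a r) (y r) (c r) (f : MvPolynomial V3 K)
    omega

end Interp

section Sampling

variable {ι : Type*} (E : ι → ι → Prop)

/-- The number of elements of `R` related to `b`. -/
def deg (R : Finset ι) (b : ι) : ℕ := (R.filter fun r => E r b).card

theorem deg_le (R : Finset ι) (b : ι) : deg E R b ≤ R.card := Finset.card_filter_le _ _

theorem deg_insert {R : Finset ι} {r : ι} (hr : r ∉ R) (b : ι) :
    (deg E (insert r R) b : ℤ) = deg E R b + if E r b then 1 else 0 := by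
  unfold deg
  rw [Finset.filter_insert]
  split_ifs with h
  · rw [Finset.card_insert_of_notMem (by simp [hr])]; push_cast; ring
  · simp

theorem deg_sdiff {R S : Finset ι} (hS : S ⊆ R) (b : ι) :
    (deg E (R \ S) b : ℤ) = deg E R b - deg E S b := by
  unfold deg
  have : R.filter (fun r => E r b) = (R \ S).filter (fun r => E r b) ∪ S.filter (fun r => E r b) := by
    rw [← Finset.filter_union, Finset.sdiff_union_of_subset hS]
  rw [this, Finset.card_union_of_disjoint]
  · push_cast; ring
  · exact Finset.disjoint_filter_filter Finset.sdiff_disjoint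

/-- A deterministic form of random halving: the elements are put into `S` or its complement one
after the other, keeping the variance below its expected value. -/
theorem signs (R B : Finset ι) :
    ∃ S ⊆ R, ∑ b ∈ B, ((deg E R b : ℤ) - 2 * deg E S b) ^ 2 ≤ ∑ b ∈ B, (deg E R b : ℤ) := by
  induction R using Finset.induction_on with
  | empty => exact ⟨∅, le_rfl, by simp [deg]⟩
  | insert r R hr ih =>
    obtain ⟨S, hS, h⟩ := ih
    have hrS : r ∉ S := fun h => hr (hS h)
    set x : ι → ℤ := fun b => (deg E R b : ℤ) - 2 * deg E S b
    set w : ι → ℤ := fun b => if E r b then 1 else 0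
    have hw : ∀ b, w b ^ 2 = w b := fun b => by simp only [w]; split_ifs <;> simp
    have hsum : ∑ b ∈ B, (deg E (insert r R) b : ℤ) = ∑ b ∈ B, (deg E R b : ℤ) + ∑ b ∈ B, w b := by
      rw [← Finset.sum_add_distrib]
      exact Finset.sum_congr rfl fun b _ => deg_insert E hr b
    have hplus : ∑ b ∈ B, (x b + w b) ^ 2 =
        ∑ b ∈ B, x b ^ 2 + 2 * ∑ b ∈ B, x b * w b + ∑ b ∈ B, w b := by
      rw [Finset.mul_sum, ← Finset.sum_add_distrib, ← Finset.sum_add_distrib]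
      exact Finset.sum_congr rfl fun b _ => by linear_combination hw b
    have hminus : ∑ b ∈ B, (x b - w b) ^ 2 =
        ∑ b ∈ B, x b ^ 2 - 2 * ∑ b ∈ B, x b * w b + ∑ b ∈ B, w b := by
      rw [Finset.mul_sum, ← Finset.sum_sub_distrib, ← Finset.sum_add_distrib]
      exact Finset.sum_congr rfl fun b _ => by linear_combination hw b
    by_cases hc : ∑ b ∈ B, x b * w b ≤ 0
    · refine ⟨S, hS.trans (Finset.subset_insert _ _), ?_⟩
      have : ∑ b ∈ B, ((deg E (insert r R) b : ℤ) - 2 * deg E S b) ^ 2 =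
          ∑ b ∈ B, (x b + w b) ^ 2 :=
        Finset.sum_congr rfl fun b _ => by rw [deg_insert E hr]; simp only [x, w]; ring
      rw [this, hplus, hsum]
      linarith
    · refine ⟨insert r S, Finset.insert_subset_insert _ hS, ?_⟩
      have : ∑ b ∈ B, ((deg E (insert r R) b : ℤ) - 2 * deg E (insert r S) b) ^ 2 =
          ∑ b ∈ B, (x b - w b) ^ 2 :=
        Finset.sum_congr rfl fun b _ => by
          rw [deg_insert E hr, deg_insert E hrS]; simp only [x, w]; ring
      rw [this, hminus, hsum]
      push Not at hc
      linarith

theorem halve (R B : Finset ι) :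
    ∃ S ⊆ R, 2 * S.card ≤ R.card ∧
      ∑ b ∈ B, ((deg E R b : ℤ) - 2 * deg E S b) ^ 2 ≤ ∑ b ∈ B, (deg E R b : ℤ) := by
  obtain ⟨S, hS, h⟩ := signs E R B
  by_cases hc : 2 * S.card ≤ R.card
  · exact ⟨S, hS, hc, h⟩
  · refine ⟨R \ S, Finset.sdiff_subset, ?_, ?_⟩
    · rw [Finset.card_sdiff_of_subset hS]; omega
    · refine le_of_eq_of_le (Finset.sum_congr rfl fun b _ => ?_) h
      rw [deg_sdiff E hS]; ring

/-- A subset of density `2 ^ (-j)` whose rescaled degrees approximate the original ones in mean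
square. -/
theorem sample (R B : Finset ι) (j : ℕ) :
    ∃ S ⊆ R, 2 ^ j * S.card ≤ R.card ∧
      ∑ b ∈ B, ((deg E R b : ℤ) - 2 ^ j * deg E S b) ^ 2 ≤ 4 ^ j * (R.card * B.card : ℤ) := by
  induction j with
  | zero => exact ⟨R, le_rfl, by simp, by simp; positivity⟩
  | succ j ih =>
    obtain ⟨S, hS, hc, h⟩ := ih
    obtain ⟨T, hT, hc2, h2⟩ := halve E S B
    refine ⟨T, hT.trans hS, ?_, ?_⟩
    · rw [pow_succ]; nlinarith [Nat.mul_le_mul_left (2 ^ j) hc2]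
    · have h3 : ∑ b ∈ B, (deg E S b : ℤ) ≤ R.card * B.card := by
        have : ∀ b ∈ B, (deg E S b : ℤ) ≤ R.card := fun b _ => by
          exact_mod_cast (deg_le E S b).trans (Finset.card_le_card hS)
        refine (Finset.sum_le_sum this).trans ?_
        simp [mul_comm]
      calc ∑ b ∈ B, ((deg E R b : ℤ) - 2 ^ (j + 1) * deg E T b) ^ 2
          ≤ ∑ b ∈ B, (2 * ((deg E R b : ℤ) - 2 ^ j * deg E S b) ^ 2
              + 2 * 4 ^ j * ((deg E S b : ℤ) - 2 * deg E T b) ^ 2) := by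
            refine Finset.sum_le_sum fun b _ => ?_
            have e : (4 : ℤ) ^ j = (2 ^ j) ^ 2 := by rw [← pow_mul, mul_comm, pow_mul]; norm_num
            rw [e, pow_succ (2 : ℤ) j]
            nlinarith [sq_nonneg (((deg E R b : ℤ) - 2 ^ j * deg E S b) -
              2 ^ j * ((deg E S b : ℤ) - 2 * deg E T b))]
        _ = 2 * ∑ b ∈ B, ((deg E R b : ℤ) - 2 ^ j * deg E S b) ^ 2
              + 2 * 4 ^ j * ∑ b ∈ B, ((deg E S b : ℤ) - 2 * deg E T b) ^ 2 := by
            rw [Finset.sum_add_distrib, Finset.mul_sum, Finset.mul_sum]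
        _ ≤ 2 * (4 ^ j * (R.card * B.card : ℤ)) + 2 * 4 ^ j * (R.card * B.card : ℤ) := by
            gcongr
            exact h2.trans h3
        _ = _ := by rw [pow_succ]; ring

end Sampling

/-! ### Incidences between red and blue lines -/

section Core

variable {K : Type*} [Field K] {ι : Type*} {a y c : ι → K} {E : ι → ι → Prop}

/-- Each blue line `j` meets at most `k` red lines lying with it on a common bilinear graph. -/
def CollBound (a y c : ι → K) (E : ι → ι → Prop) (k : ℕ) : Prop :=
  ∀ (j : ι) (s : Finset ι) (τ : K × K × K × K), OnBlue a y c τ j →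
    (∀ i ∈ s, OnRed a y c τ i ∧ E i j) → s.card ≤ k

/-- Two bilinear graphs share at most one blue line. -/
theorem onBlue_unique (hy : Function.Injective y) {τ σ : K × K × K × K} (h : τ ≠ σ) {i j : ι}
    (h1 : OnBlue a y c τ i) (h2 : OnBlue a y c σ i) (h3 : OnBlue a y c τ j)
    (h4 : OnBlue a y c σ j) : i = j := by
  obtain ⟨γ, α, β, δ⟩ := τ
  obtain ⟨γ', α', β', δ'⟩ := σ
  simp only [OnBlue] at h1 h2 h3 h4
  apply hy
  by_contra hne
  have hne' : y i - y j ≠ 0 := sub_ne_zero.2 hne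
  have e1 : γ = γ' := by
    have : (γ - γ') * (y i - y j) = 0 := by
      linear_combination -h1.1 + h2.1 + h3.1 - h4.1
    exact sub_eq_zero.1 ((mul_eq_zero.1 this).resolve_right hne')
  have e2 : α = α' := by
    have : (α - α') * (y i - y j) = 0 := by
      linear_combination h1.2 - h2.2 - h3.2 + h4.2
    exact sub_eq_zero.1 ((mul_eq_zero.1 this).resolve_right hne')
  subst e1 e2
  apply h
  have e3 : β = β' := by linear_combination -h1.1 + h2.1
  have e4 : δ = δ' := by linear_combination h1.2 - h2.2
  rw [e3, e4]

/-- The graphs from `Q` contain at most `|B| + |Q|²` lines of `B`, counted with multiplicity. -/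
theorem sum_onBlue_le (hy : Function.Injective y) (B : Finset ι) (Q : Finset (K × K × K × K)) :
    ∑ b ∈ B, (Q.filter fun τ => OnBlue a y c τ b).card ≤ B.card + Q.card ^ 2 := by
  have h1 : ∀ b ∈ B, (Q.filter fun τ => OnBlue a y c τ b).card ≤
      1 + (Q.offDiag.filter fun x => OnBlue a y c x.1 b ∧ OnBlue a y c x.2 b).card := by
    intro b _
    have : (Q.filter fun τ => OnBlue a y c τ b).offDiag ⊆
        Q.offDiag.filter fun x => OnBlue a y c x.1 b ∧ OnBlue a y c x.2 b := by
      intro x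
      simp only [Finset.mem_offDiag, Finset.mem_filter]
      tauto
    have h2 := Finset.card_le_card this
    rw [Finset.offDiag_card] at h2
    generalize (Q.filter fun τ => OnBlue a y c τ b).card = m at *
    rcases Nat.lt_or_ge m 2 with h | h
    · omega
    · have : m * m ≥ 2 * m := Nat.mul_le_mul_right _ h
      omega
  refine (Finset.sum_le_sum h1).trans ?_
  rw [Finset.sum_add_distrib]
  have h2 : ∑ b ∈ B, (Q.offDiag.filter fun x => OnBlue a y c x.1 b ∧ OnBlue a y c x.2 b).card
      = ∑ x ∈ Q.offDiag, (B.filter fun b => OnBlue a y c x.1 b ∧ OnBlue a y c x.2 b).card :=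
    Finset.sum_card_bipartiteAbove_eq_sum_card_bipartiteBelow _
  have h3 : ∑ x ∈ Q.offDiag, (B.filter fun b => OnBlue a y c x.1 b ∧ OnBlue a y c x.2 b).card
      ≤ ∑ x ∈ Q.offDiag, 1 := by
    refine Finset.sum_le_sum fun x hx => Finset.card_le_one.2 fun i hi j hj => ?_
    rw [Finset.mem_filter] at hi hj
    exact onBlue_unique hy (Finset.mem_offDiag.1 hx).2.2 hi.2.1 hi.2.2 hj.2.1 hj.2.2
  rw [h2]
  have h4 : Q.offDiag.card ≤ Q.card ^ 2 := by rw [Finset.offDiag_card, sq]; omega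
  simp only [Finset.sum_const, smul_eq_mul, mul_one] at h3 ⊢
  omega

theorem deg_le_of_surface {k : ℕ} (hk : CollBound a y c E k) (S : Finset ι)
    {f : MvPolynomial V3 K} (hS : ∀ r ∈ S, RedIn a y c r f) (Q : Finset (K × K × K × K)) (b : ι)
    {m : ℕ} (hm : (S.filter fun r => (E r b ∧ RedIn a y c r f) ∧
      ¬∃ τ ∈ Q, OnBlue a y c τ b ∧ OnRed a y c τ r).card ≤ m) :
    deg E S b ≤ m + k * (Q.filter fun τ => OnBlue a y c τ b).card := by
  have hsub : (S.filter fun r => E r b) ⊆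
      (S.filter fun r => (E r b ∧ RedIn a y c r f) ∧
        ¬∃ τ ∈ Q, OnBlue a y c τ b ∧ OnRed a y c τ r) ∪
      (Q.filter fun τ => OnBlue a y c τ b).biUnion fun τ =>
        S.filter fun r => OnRed a y c τ r ∧ E r b := by
    intro r hr
    rw [Finset.mem_filter] at hr
    by_cases h : ∃ τ ∈ Q, OnBlue a y c τ b ∧ OnRed a y c τ r
    · obtain ⟨τ, h1, h2, h3⟩ := h
      refine Finset.mem_union_right _ (Finset.mem_biUnion.2 ⟨τ, Finset.mem_filter.2 ⟨h1, h2⟩, ?_⟩)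
      exact Finset.mem_filter.2 ⟨hr.1, h3, hr.2⟩
    · exact Finset.mem_union_left _ (Finset.mem_filter.2 ⟨hr.1, ⟨hr.2, hS r hr.1⟩, h⟩)
  refine (Finset.card_le_card hsub).trans ((Finset.card_union_le _ _).trans ?_)
  refine add_le_add hm (Finset.card_biUnion_le.trans ?_)
  rw [mul_comm]
  refine Finset.sum_le_card_nsmul _ _ _ fun τ hτ => ?_
  rw [Finset.mem_filter] at hτ
  exact hk b _ τ hτ.2 fun i hi => (Finset.mem_filter.1 hi).2

/-- Removing at most half of the blue lines, the remaining ones satisfy the desired bound. The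
sampled set of red lines has density `2 ^ (-16)`, which makes the degree of the interpolating
surface smaller than the characteristic. -/
theorem step {p : ℕ} [CharP K p] [Infinite K] (hp : 2 ≤ p) (hy : Function.Injective y)
    (hE : ∀ i j, E i j → a i * y j - c i = a j * y i - c j) {k : ℕ} (hk : CollBound a y c E k)
    (R B : Finset ι) (N : ℕ) (hR : R.card ≤ N) (hB : B.card ≤ N) (hN : N ≤ 600 * p ^ 2) :
    ∃ B' ⊆ B, 2 * B'.card ≤ N ∧
      (∑ b ∈ B \ B', (deg E R b : ℝ)) ≤ 2 ^ 17 * (N * √N + k * N) := by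
  obtain ⟨S, hSR, hScard, hSdev⟩ := sample E R B 16
  set e := Nat.sqrt (3 * S.card) with he
  have he1 : e ^ 2 ≤ 3 * S.card := by rw [he]; exact Nat.sqrt_le' _
  have he2 : 3 * S.card < (e + 1) ^ 2 := by rw [he]; exact Nat.lt_succ_sqrt' _
  obtain ⟨f, hf0, hfd, hfR⟩ := exists_surface a y c S e he2
  set d := f.totalDegree with hd
  have hd2 : 65536 * d ^ 2 ≤ 27 * N := by
    have : d ^ 2 ≤ (3 * e) ^ 2 := Nat.pow_le_pow_left hfd 2
    norm_num at hScard
    nlinarith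
  have hdp : d + 1 < p := by
    have : (2 * d) ^ 2 < p ^ 2 := by nlinarith
    have := lt_of_pow_lt_pow_left₀ 2 (by positivity) this
    omega
  obtain ⟨X, Q, hX, hQ, hXQ⟩ := surface hy hE S B f hf0 hdp
  rw [← hd] at hX hQ hXQ
  refine ⟨B.filter (· ∈ X), Finset.filter_subset _ _, ?_, ?_⟩
  · have : (B.filter (· ∈ X)).card ≤ X.card := by
      refine Finset.card_le_card fun b hb => (Finset.mem_filter.1 hb).2
    nlinarith
  set B₁ := B \ B.filter (· ∈ X) with hB₁
  have hB₁B : B₁ ⊆ B := Finset.sdiff_subset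
  have hB₁c : B₁.card ≤ N := (Finset.card_le_card hB₁B).trans hB
  have hs : ∀ b ∈ B₁, deg E S b ≤ 3 * d + k * (Q.filter fun τ => OnBlue a y c τ b).card := by
    intro b hb
    have hb' : b ∈ B ∧ b ∉ X := by
      rw [hB₁, Finset.mem_sdiff, Finset.mem_filter] at hb
      tauto
    exact deg_le_of_surface hk S hfR Q b (hXQ b hb'.1 hb'.2)
  have hsum : ∑ b ∈ B₁, deg E S b ≤ 3 * d * N + k * (N + d ^ 2) := by
    refine (Finset.sum_le_sum hs).trans ?_
    rw [Finset.sum_add_distrib, ← Finset.mul_sum _ _ k, Finset.sum_const, smul_eq_mul]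
    have h1 := sum_onBlue_le (a := a) (c := c) hy B₁ Q
    have h2 : Q.card ^ 2 ≤ d ^ 2 := Nat.pow_le_pow_left hQ 2
    have h3 : ∑ b ∈ B₁, (Q.filter fun τ => OnBlue a y c τ b).card ≤ N + d ^ 2 := by omega
    rw [mul_comm B₁.card]
    exact add_le_add (Nat.mul_le_mul_left _ hB₁c) (Nat.mul_le_mul_left k h3)
  have hdev : ∑ b ∈ B₁, |(deg E R b : ℝ) - 2 ^ 16 * deg E S b| ≤ 2 ^ 16 * (N * √N) := by
    have h1 : ∑ b ∈ B₁, ((deg E R b : ℝ) - 2 ^ 16 * deg E S b) ^ 2 ≤ 4 ^ 16 * (N * N : ℝ) := by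
      have h2 : ∑ b ∈ B, ((deg E R b : ℝ) - 2 ^ 16 * deg E S b) ^ 2 ≤
          4 ^ 16 * (R.card * B.card : ℝ) := by exact_mod_cast hSdev
      refine (Finset.sum_le_sum_of_subset_of_nonneg hB₁B fun _ _ _ => sq_nonneg _).trans
        (h2.trans ?_)
      gcongr
    have h3 := sq_sum_le_card_mul_sum_sq (s := B₁)
      (f := fun b => |(deg E R b : ℝ) - 2 ^ 16 * deg E S b|)
    simp only [sq_abs] at h3
    have hN0 : (0 : ℝ) ≤ N := Nat.cast_nonneg _
    refine le_of_sq_le_sq ?_ (by positivity)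
    refine h3.trans ((mul_le_mul (Nat.cast_le.2 hB₁c) h1
      (Finset.sum_nonneg fun _ _ => sq_nonneg _) hN0).trans ?_)
    rw [mul_pow, mul_pow, Real.sq_sqrt hN0]
    apply le_of_eq
    norm_num
    ring
  have hfin : ∑ b ∈ B₁, (deg E R b : ℝ) ≤
      ∑ b ∈ B₁, |(deg E R b : ℝ) - 2 ^ 16 * deg E S b| + 2 ^ 16 * ∑ b ∈ B₁, (deg E S b : ℝ) := by
    rw [Finset.mul_sum, ← Finset.sum_add_distrib]
    refine Finset.sum_le_sum fun b _ => ?_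
    linarith [le_abs_self ((deg E R b : ℝ) - 2 ^ 16 * deg E S b)]
  have hsum' : ∑ b ∈ B₁, (deg E S b : ℝ) ≤ 3 * d * N + k * (N + d ^ 2) := by exact_mod_cast hsum
  have hd2' : (65536 : ℝ) * d ^ 2 ≤ 27 * N := by exact_mod_cast hd2
  have hdN : 3 * (d : ℝ) ≤ √N := by
    apply Real.le_sqrt_of_sq_le
    nlinarith [Nat.cast_nonneg (α := ℝ) N]
  have hdN2 : (d : ℝ) ^ 2 ≤ N := by nlinarith [Nat.cast_nonneg (α := ℝ) N]
  have hk1 : (k : ℝ) * d ^ 2 ≤ k * N := by gcongr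
  have hd3 : 3 * (d : ℝ) * N ≤ √N * N := by gcongr
  nlinarith

theorem sum_deg_comm (hs : ∀ i j, E i j → E j i) (R B : Finset ι) :
    ∑ b ∈ B, (deg E R b : ℝ) = ∑ r ∈ R, (deg E B r : ℝ) := by
  have : ∑ b ∈ B, deg E R b = ∑ r ∈ R, deg E B r := by
    unfold deg
    refine (Finset.sum_card_bipartiteAbove_eq_sum_card_bipartiteBelow (fun b r => E r b)).trans ?_
    refine Finset.sum_congr rfl fun r _ => congrArg _ (Finset.filter_congr fun b _ => ?_)
    exact ⟨hs _ _, hs _ _⟩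
  exact_mod_cast this

/-- The bound for line–line incidences in three-space used here: among `N` red and `N` blue lines
of the two special families there are `O(N^{3/2} + kN)` incident pairs. -/
theorem core {p : ℕ} [CharP K p] [Infinite K] (hp : 2 ≤ p) (hy : Function.Injective y)
    (hE : ∀ i j, E i j → a i * y j - c i = a j * y i - c j) (hs : ∀ i j, E i j → E j i)
    {k : ℕ} (hk : CollBound a y c E k) (N : ℕ) (hN : N ≤ 600 * p ^ 2) :
    ∀ R B : Finset ι, R.card ≤ N → B.card ≤ N →
      (∑ b ∈ B, (deg E R b : ℝ)) ≤ 2 ^ 20 * (N * √N + k * N) := by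
  induction N using Nat.strong_induction_on with
  | _ N ih =>
  intro R B hR hB
  rcases Nat.eq_zero_or_pos N with h0 | h0
  · have : B = ∅ := Finset.card_eq_zero.1 (by omega)
    subst this
    simp; positivity
  obtain ⟨B', hB'B, hB'c, h1⟩ := step hp hy hE hk R B N hR hB hN
  obtain ⟨R', hR'R, hR'c, h2⟩ := step hp hy hE hk B' R N (by omega) hR hN
  have h3 := ih (N / 2) (by omega) (by omega) B' R' (by omega) (by omega)
  have e1 : ∑ b ∈ B, (deg E R b : ℝ) = ∑ b ∈ B \ B', (deg E R b : ℝ) + ∑ b ∈ B', (deg E R b : ℝ) :=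
    (Finset.sum_sdiff hB'B).symm
  have e2 : ∑ b ∈ R, (deg E B' b : ℝ) =
      ∑ b ∈ R \ R', (deg E B' b : ℝ) + ∑ b ∈ R', (deg E B' b : ℝ) :=
    (Finset.sum_sdiff hR'R).symm
  rw [e1, sum_deg_comm hs R B', e2]
  have hc : ((N / 2 : ℕ) : ℝ) ≤ N / 2 := by
    have : (2 : ℝ) * (N / 2 : ℕ) ≤ N := by exact_mod_cast Nat.mul_div_le N 2
    linarith
  have hsq : √((N / 2 : ℕ) : ℝ) ≤ √N := Real.sqrt_le_sqrt (by
    have := Nat.cast_nonneg (α := ℝ) N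
    linarith)
  have h4 : ((N / 2 : ℕ) : ℝ) * √((N / 2 : ℕ) : ℝ) ≤ N / 2 * √N :=
    mul_le_mul hc hsq (Real.sqrt_nonneg _) (by positivity)
  have h5 : (k : ℝ) * ((N / 2 : ℕ) : ℝ) ≤ k * (N / 2) := by gcongr
  have h6 : (0 : ℝ) ≤ N * √N := by positivity
  have h7 : (0 : ℝ) ≤ k * N := by positivity
  linarith

end Core

/-! ### Incidences between lines and a subset of a grid -/

section Energy

variable {F : Type*} [Field F]

open Polynomial in
/-- The twisting weight `1 - aε²` in `F(ε)`. -/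
def twW (i : F × F × F) : RatFunc F := algebraMap F[X] (RatFunc F) (1 - C i.1 * X ^ 2)

/-- The constants of `F` in `F(ε)`. -/
def cst (x : F) : RatFunc F := algebraMap (Polynomial F) (RatFunc F) (Polynomial.C x)

/-- The slope of the line attached to `(a, s, t)`, in either colour: the red line is `Y = twY`,
`Z = twA · X - twC`, and the blue line has `X` and `Y` exchanged. -/
def twA (i : F × F × F) : RatFunc F := cst i.1 / twW i

open Polynomial in
/-- The value of the constant coordinate on the line attached to `(a, s, t)`; thanks to the
transcendental `ε` it determines `(a, s, t)`. -/
def twY (i : F × F × F) : RatFunc F :=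
  algebraMap F[X] (RatFunc F) (C i.2.1 + C i.1 * X + C i.2.2 * X ^ 2) / twW i

/-- The negative of the intercept of the line attached to `(a, s, t)`. -/
def twC (i : F × F × F) : RatFunc F := cst i.2.2 / twW i

open Polynomial in
theorem twW_ne (i : F × F × F) : twW i ≠ 0 := by
  unfold twW
  rw [Ne, map_eq_zero_iff _ (RatFunc.algebraMap_injective F)]
  intro h
  have := congrArg (fun q => coeff q 0) h
  simp [coeff_X_pow] at this

open Polynomial in
theorem twY_injective : Function.Injective (twY : F × F × F → RatFunc F) := by
  intro i j h
  unfold twY at h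
  rw [div_eq_div_iff (twW_ne i) (twW_ne j)] at h
  unfold twW at h
  rw [← map_mul, ← map_mul] at h
  have h' := RatFunc.algebraMap_injective F h
  obtain ⟨a, s, t⟩ := i
  obtain ⟨a', s', t'⟩ := j
  simp only at h'
  have e : (C (s - s') + C (a - a') * X + C (t - t' - s * a' + s' * a) * X ^ 2 +
      C (t' * a - t * a') * X ^ 4 : F[X]) = 0 := by
    simp only [map_sub, map_mul, map_add]
    linear_combination h'
  have c0 := congrArg (fun q => coeff q 0) e
  have c1 := congrArg (fun q => coeff q 1) e
  have c2 := congrArg (fun q => coeff q 2) e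
  simp only [coeff_add, coeff_C_mul, coeff_X_pow, coeff_X, coeff_C, coeff_zero] at c0 c1 c2
  norm_num at c0 c1 c2
  have ha := sub_eq_zero.1 c1
  have hs := sub_eq_zero.1 c0
  subst ha hs
  have : t = t' := by linear_combination c2
  rw [this]

theorem tw_eq_aux {L : Type*} [Field L] {a s t a' s' t' e : L} (hw : 1 - a * e ^ 2 ≠ 0)
    (hw' : 1 - a' * e ^ 2 ≠ 0) (h : a * s' + t' = a' * s + t) :
    a / (1 - a * e ^ 2) * ((s' + a' * e + t' * e ^ 2) / (1 - a' * e ^ 2)) - t / (1 - a * e ^ 2) =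
    a' / (1 - a' * e ^ 2) * ((s + a * e + t * e ^ 2) / (1 - a * e ^ 2)) - t' / (1 - a' * e ^ 2) := by
  rw [← sub_eq_zero]
  have key : a * (s' + a' * e + t' * e ^ 2) - t * (1 - a' * e ^ 2) =
      a' * (s + a * e + t * e ^ 2) - t' * (1 - a * e ^ 2) := by linear_combination h
  generalize 1 - a * e ^ 2 = w at *
  generalize 1 - a' * e ^ 2 = w' at *
  generalize s' + a' * e + t' * e ^ 2 = u at *
  generalize s + a * e + t * e ^ 2 = u' at *
  field_simp
  linear_combination key

/-- A solution of `l(a) = l'(a')` makes the attached red and blue lines intersect. -/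
theorem tw_eq {i j : F × F × F} (h : i.1 * j.2.1 + j.2.2 = j.1 * i.2.1 + i.2.2) :
    twA i * twY j - twC i = twA j * twY i - twC j := by
  have hi := twW_ne i
  have hj := twW_ne j
  unfold twA twY twC cst
  unfold twW at *
  simp only [map_sub, map_add, map_mul, map_pow, map_one] at *
  refine tw_eq_aux hi hj ?_
  simp only [← map_mul, ← map_add, h]

open Polynomial in
theorem twA_inj {i j : F × F × F} (h : twA i = twA j) : i.1 = j.1 := by
  unfold twA at h
  rw [div_eq_div_iff (twW_ne i) (twW_ne j)] at h
  unfold twW cst at h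
  rw [← map_mul, ← map_mul] at h
  have h' := RatFunc.algebraMap_injective F h
  have h2 : (C i.1 : F[X]) = C j.1 := by linear_combination h'
  exact C_injective h2

/-- Incidence of the lines attached to `i = (a, l')` and `j = (a', l)`: `l(a) = l'(a')`, with both
points in `G` and both lines in `Λ`. -/
def twE (Λ G : Finset (F × F)) (i j : F × F × F) : Prop :=
  i.1 * j.2.1 + j.2.2 = j.1 * i.2.1 + i.2.2 ∧ (i.1, i.1 * j.2.1 + j.2.2) ∈ G ∧
    (j.1, j.1 * i.2.1 + i.2.2) ∈ G ∧ i.2 ∈ Λ ∧ j.2 ∈ Λ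

theorem twE_symm {Λ G : Finset (F × F)} {i j : F × F × F} (h : twE Λ G i j) : twE Λ G j i :=
  ⟨h.1.symm, h.2.2.1, h.2.1, h.2.2.2.2, h.2.2.2.1⟩

/-- On a bilinear graph the slope of a red line is a function of its constant coordinate. Hence the
red lines on it either have distinct parameters `a ∈ A`, or the graph has `γ = 0`, they share the
parameter `a`, and they come from lines through one point of `G`. -/
theorem tw_coll {A : Finset F} {Λ G : Finset (F × F)} {K : ℕ} (hA : A.card ≤ K)
    (hGA : ∀ g ∈ G, g.1 ∈ A)
    (hG : ∀ g ∈ G, (Λ.filter fun l => g.1 * l.1 + l.2 = g.2).card ≤ K) :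
    CollBound (twA : F × F × F → RatFunc F) twY twC (twE Λ G) K := by
  intro j s τ _ hs
  by_cases hinj : Set.InjOn (fun i : F × F × F => i.1) s
  · rw [← Finset.card_image_of_injOn hinj]
    refine (Finset.card_le_card fun x hx => ?_).trans hA
    obtain ⟨i, hi, rfl⟩ := Finset.mem_image.1 hx
    exact hGA _ (hs i hi).2.2.1
  · simp only [Set.InjOn] at hinj
    push Not at hinj
    obtain ⟨i₁, h1, i₂, h2, h12, hne⟩ := hinj
    have hA12 : twA i₁ = twA i₂ := by unfold twA twW; rw [h12]
    have hγ : τ.1 = 0 := by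
      have e : τ.1 * (twY i₁ - twY i₂) = 0 := by
        linear_combination hA12 - (hs i₁ h1).1.1 + (hs i₂ h2).1.1
      exact (mul_eq_zero.1 e).resolve_right (sub_ne_zero.2 (twY_injective.ne hne))
    have hall : ∀ i ∈ s, i.1 = i₁.1 := fun i hi => twA_inj (by
      rw [(hs i hi).1.1, (hs i₁ h1).1.1, hγ]; ring)
    have hE1 := (hs i₁ h1).2
    have hg := hG _ hE1.2.2.1
    have hinj2 : Set.InjOn (fun i : F × F × F => i.2) s := fun x hx y hy hxy =>
      Prod.ext ((hall x hx).trans (hall y hy).symm) hxy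
    rw [← Finset.card_image_of_injOn hinj2]
    refine (Finset.card_le_card fun x hx => ?_).trans hg
    obtain ⟨i, hi, rfl⟩ := Finset.mem_image.1 hx
    have hEi := (hs i hi).2
    refine Finset.mem_filter.2 ⟨hEi.2.2.2.1, ?_⟩
    simp only
    rw [← hEi.1, ← hE1.1, hall i hi]

variable {p : ℕ} [Fact p.Prime]

/-- Incidence bound for a point set `G` inside a grid `A × B` and lines `b = sa + t`, when no point
of `G` lies on more than `K` lines. -/
theorem grid_bound (A B : Finset (ZMod p)) (Λ G : Finset (ZMod p × ZMod p)) (K N : ℕ)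
    (hA : A.card ≤ K) (hGA : ∀ g ∈ G, g.1 ∈ A) (hGB : ∀ g ∈ G, g.2 ∈ B)
    (hG : ∀ g ∈ G, (Λ.filter fun l => g.1 * l.1 + l.2 = g.2).card ≤ K)
    (hN : A.card * Λ.card ≤ N) (hNp : N ≤ 600 * p ^ 2) :
    (((G ×ˢ Λ).filter fun z => z.1.1 * z.2.1 + z.2.2 = z.1.2).card : ℝ) ^ 2 ≤
      B.card * (2 ^ 20 * (N * √N + K * N)) := by
  set R : Finset (ZMod p × ZMod p × ZMod p) := A ×ˢ Λ with hR
  have hRc : R.card ≤ N := by rw [hR, Finset.card_product]; exact hN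
  have : CharP (RatFunc (ZMod p)) p :=
    charP_of_injective_algebraMap (algebraMap (ZMod p) (RatFunc (ZMod p))).injective p
  have : Infinite (RatFunc (ZMod p)) :=
    Infinite.of_injective _ (RatFunc.algebraMap_injective (ZMod p))
  have hcore := core (p := p) (Fact.out : p.Prime).two_le twY_injective
    (fun i j (h : twE Λ G i j) => tw_eq h.1) (fun i j h => twE_symm h) (tw_coll hA hGA fun g hg => by convert hG g hg) N hNp
    R R hRc hRc
  set ev : ZMod p × ZMod p × ZMod p → ZMod p := fun i => i.1 * i.2.1 + i.2.2 with hev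
  set H := R.filter fun i => (i.1, ev i) ∈ G with hH
  have hI : ((G ×ˢ Λ).filter fun z => z.1.1 * z.2.1 + z.2.2 = z.1.2).card ≤ H.card := by
    refine Finset.card_le_card_of_injOn (fun z => (z.1.1, z.2)) ?_ ?_
    · intro z hz
      obtain ⟨hz1, hz2⟩ := Finset.mem_filter.1 (Finset.mem_coe.1 hz)
      obtain ⟨hz3, hz4⟩ := Finset.mem_product.1 hz1
      refine Finset.mem_coe.2 (Finset.mem_filter.2 ⟨Finset.mem_product.2 ⟨hGA _ hz3, hz4⟩, ?_⟩)
      simp only [hev]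
      rw [hz2]
      exact hz3
    · intro z hz z' hz' h
      obtain ⟨hz1, hz2⟩ := Finset.mem_filter.1 (Finset.mem_coe.1 hz)
      obtain ⟨hz1', hz2'⟩ := Finset.mem_filter.1 (Finset.mem_coe.1 hz')
      obtain ⟨h1, h2⟩ := Prod.ext_iff.1 h
      simp only at h1 h2
      refine Prod.ext (Prod.ext h1 ?_) h2
      rw [← hz2, ← hz2', h1, h2]
  have hHB : ∀ i ∈ H, ev i ∈ B := fun i hi => hGB _ (Finset.mem_filter.1 hi).2
  -- the solutions of `l(a) = l'(a')`, counted through the fibres over `B`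
  set T := (R ×ˢ R).filter fun z => twE Λ G z.2 z.1 with hT
  have hTc : (T.card : ℝ) = ∑ b ∈ R, (deg (twE Λ G) R b : ℝ) := by
    have : T.card = ∑ b ∈ R, deg (twE Λ G) R b := by
      rw [hT, Finset.card_filter, Finset.sum_product]
      refine Finset.sum_congr rfl fun b _ => ?_
      rw [deg, Finset.card_filter]
    exact_mod_cast this
  have hfib : ∑ b ∈ B, (H.filter fun i => ev i = b).card ^ 2 ≤ T.card := by
    rw [Finset.card_eq_sum_card_fiberwise (s := T) (t := B)
      (f := fun z => z.1.1 * z.2.2.1 + z.2.2.2)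
      (fun z hz => hGB _ (Finset.mem_filter.1 (Finset.mem_coe.1 hz)).2.2.2.1)]
    refine Finset.sum_le_sum fun b _ => ?_
    rw [sq, ← Finset.card_product]
    refine Finset.card_le_card_of_injOn (fun z => ((z.1.1, z.2.2), (z.2.1, z.1.2))) ?_ ?_
    · intro z hz
      obtain ⟨h1, h2⟩ := Finset.mem_product.1 (Finset.mem_coe.1 hz)
      obtain ⟨h1, h1b⟩ := Finset.mem_filter.1 h1
      obtain ⟨h2, h2b⟩ := Finset.mem_filter.1 h2
      obtain ⟨h1, h1G⟩ := Finset.mem_filter.1 h1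
      obtain ⟨h2, h2G⟩ := Finset.mem_filter.1 h2
      obtain ⟨h1A, h1L⟩ := Finset.mem_product.1 h1
      obtain ⟨h2A, h2L⟩ := Finset.mem_product.1 h2
      simp only [hev] at h1b h2b h1G h2G
      exact Finset.mem_coe.2 (Finset.mem_filter.2 ⟨Finset.mem_filter.2
        ⟨Finset.mem_product.2 ⟨Finset.mem_product.2 ⟨h1A, h2L⟩, Finset.mem_product.2 ⟨h2A, h1L⟩⟩,
          h2b.trans h1b.symm, h2G, h1G, h1L, h2L⟩, h1b⟩)
    · rintro ⟨⟨a, l⟩, ⟨a', l'⟩⟩ _ ⟨⟨b, m⟩, ⟨b', m'⟩⟩ _ h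
      simp only [Prod.mk.injEq] at h ⊢
      tauto
  have hcs : (H.card : ℝ) ^ 2 ≤ B.card * T.card := by
    have h1 : H.card = ∑ b ∈ B, (H.filter fun i => ev i = b).card :=
      Finset.card_eq_sum_card_fiberwise fun i hi => hHB i hi
    have h2 : H.card ^ 2 ≤ B.card * T.card := by
      rw [h1]
      exact sq_sum_le_card_mul_sum_sq.trans (Nat.mul_le_mul_left _ hfib)
    exact_mod_cast h2
  calc _ ≤ (H.card : ℝ) ^ 2 := by gcongr
    _ ≤ B.card * T.card := hcs
    _ ≤ _ := by rw [hTc]; gcongr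

end Energy

/-! ### Corners -/

section RichCombinatorics

variable {α β : Type*} (inc : α → β → Prop)

/-- The points `x` of `Q` joined to `q₁` and `q₂` by two distinct lines of `L`. -/
def corner (Q : Finset α) (L : Finset β) (q₁ q₂ : α) : Finset α :=
  Q.filter fun x => x ≠ q₁ ∧ x ≠ q₂ ∧ ∃ l₁ ∈ L, ∃ l₂ ∈ L, l₁ ≠ l₂ ∧ inc x l₁ ∧ inc q₁ l₁ ∧
    inc x l₂ ∧ inc q₂ l₂

variable {inc} {Q : Finset α} {L : Finset β}

theorem mem_corner {q₁ q₂ x : α} : x ∈ corner inc Q L q₁ q₂ ↔ x ∈ Q ∧ x ≠ q₁ ∧ x ≠ q₂ ∧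
    ∃ l₁ ∈ L, ∃ l₂ ∈ L, l₁ ≠ l₂ ∧ inc x l₁ ∧ inc q₁ l₁ ∧ inc x l₂ ∧ inc q₂ l₂ :=
  Finset.mem_filter

theorem sum_inc_comm (Q : Finset α) (L : Finset β) :
    ∑ q ∈ Q, (L.filter fun l => inc q l).card = ∑ l ∈ L, (Q.filter fun q => inc q l).card :=
  Finset.sum_card_bipartiteAbove_eq_sum_card_bipartiteBelow _

/-- Very rich points are few, by the Cauchy–Schwarz inequality alone. -/
theorem card_le_of_very_rich
    (huniq : ∀ q ∈ Q, ∀ q' ∈ Q, ∀ l ∈ L, ∀ l' ∈ L, q ≠ q' → inc q l → inc q l' →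
      inc q' l → inc q' l' → l = l') {k : ℕ}
    (hk : ∀ q ∈ Q, k ≤ (L.filter fun l => inc q l).card) (hkn : 2 * L.card ≤ k ^ 2) :
    Q.card * k ≤ 2 * L.card := by
  set I := ∑ q ∈ Q, (L.filter fun l => inc q l).card with hI
  have h1 : Q.card * k ≤ I := by
    rw [hI, ← smul_eq_mul]
    exact Finset.card_nsmul_le_sum _ _ _ hk
  have h2 : I ^ 2 ≤ L.card * ∑ l ∈ L, (Q.filter fun q => inc q l).card ^ 2 := by
    rw [hI, sum_inc_comm]
    exact sq_sum_le_card_mul_sum_sq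
  have h3 : ∑ l ∈ L, (Q.filter fun q => inc q l).card ^ 2 ≤ I + Q.card ^ 2 := by
    have e : ∀ l ∈ L, (Q.filter fun q => inc q l).card ^ 2 =
        (Q.filter fun q => inc q l).card +
          (Q.offDiag.filter fun z => inc z.1 l ∧ inc z.2 l).card := by
      intro l _
      have : (Q.offDiag.filter fun z => inc z.1 l ∧ inc z.2 l) =
          (Q.filter fun q => inc q l).offDiag := by
        ext z
        simp only [Finset.mem_filter, Finset.mem_offDiag]
        tauto
      rw [this, Finset.offDiag_card, sq]
      have : (Q.filter fun q => inc q l).card ≤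
        (Q.filter fun q => inc q l).card * (Q.filter fun q => inc q l).card := Nat.le_mul_self _
      omega
    rw [Finset.sum_congr rfl e, Finset.sum_add_distrib, ← sum_inc_comm, ← hI]
    refine Nat.add_le_add_left ?_ _
    have e2 : ∑ l ∈ L, (Q.offDiag.filter fun z => inc z.1 l ∧ inc z.2 l).card =
        ∑ z ∈ Q.offDiag, (L.filter fun l => inc z.1 l ∧ inc z.2 l).card :=
      Finset.sum_card_bipartiteAbove_eq_sum_card_bipartiteBelow
        (fun l (z : α × α) => inc z.1 l ∧ inc z.2 l)
    rw [e2]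
    have e3 : ∑ z ∈ Q.offDiag, (L.filter fun l => inc z.1 l ∧ inc z.2 l).card ≤
        ∑ z ∈ Q.offDiag, 1 := by
      refine Finset.sum_le_sum fun z hz => Finset.card_le_one.2 fun l hl l' hl' => ?_
      rw [Finset.mem_filter] at hl hl'
      rw [Finset.mem_offDiag] at hz
      exact huniq z.1 hz.1 z.2 hz.2.1 l hl.1 l' hl'.1 hz.2.2 hl.2.1 hl'.2.1 hl.2.2 hl'.2.2
    refine e3.trans ?_
    simp only [Finset.sum_const, smul_eq_mul, mul_one]
    rw [Finset.offDiag_card, sq]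
    omega
  have h4 : I ^ 2 ≤ L.card * I + L.card * Q.card ^ 2 := by
    rw [← mul_add]; exact h2.trans (Nat.mul_le_mul_left _ h3)
  have h5 : 2 * (L.card * Q.card ^ 2) ≤ I ^ 2 := by
    calc 2 * (L.card * Q.card ^ 2) = (2 * L.card) * Q.card ^ 2 := by ring
      _ ≤ k ^ 2 * Q.card ^ 2 := Nat.mul_le_mul_right _ hkn
      _ = (Q.card * k) ^ 2 := by ring
      _ ≤ I ^ 2 := Nat.pow_le_pow_left h1 2
  refine h1.trans ?_
  by_contra hc
  push Not at hc
  have : 2 * L.card * I < I * I := by nlinarith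
  nlinarith

/-- The number of pairs of rich lines through points, weighted by the points on them, is at most
the number of corners. -/
theorem sum_corner_ge
    (huniq : ∀ q ∈ Q, ∀ q' ∈ Q, ∀ l ∈ L, ∀ l' ∈ L, q ≠ q' → inc q l → inc q l' →
      inc q' l → inc q' l' → l = l') (ρ : ℕ) (L' : Finset β) (hL' : L' ⊆ L)
    (hρ : ∀ l ∈ L', ρ ≤ (Q.filter fun q => inc q l).card) :
    (ρ - 1) ^ 2 * ∑ x ∈ Q, (L'.filter fun l => inc x l).offDiag.card ≤
      ∑ z ∈ Q ×ˢ Q, (corner inc Q L z.1 z.2).card := by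
  let pts : α → β → Finset α := fun x l => (Q.filter fun q => inc q l).erase x
  let U : Finset (Σ _ : α, Σ _ : β × β, α × α) := Q.sigma fun x =>
    (L'.filter fun l => inc x l).offDiag.sigma fun l => pts x l.1 ×ˢ pts x l.2
  have hU : (ρ - 1) ^ 2 * ∑ x ∈ Q, (L'.filter fun l => inc x l).offDiag.card ≤ U.card := by
    simp only [U, Finset.card_sigma, Finset.mul_sum]
    refine Finset.sum_le_sum fun x hx => ?_
    rw [mul_comm, ← smul_eq_mul]
    refine Finset.card_nsmul_le_sum _ _ _ fun l hl => ?_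
    rw [Finset.mem_offDiag, Finset.mem_filter, Finset.mem_filter] at hl
    have hp : ∀ l ∈ L', inc x l → ρ - 1 ≤ (pts x l).card := by
      intro l hl hxl
      have : x ∈ Q.filter fun q => inc q l := Finset.mem_filter.2 ⟨hx, hxl⟩
      simp only [pts, Finset.card_erase_of_mem this]
      exact Nat.sub_le_sub_right (hρ l hl) 1
    rw [Finset.card_product, sq]
    exact Nat.mul_le_mul (hp _ hl.1.1 hl.1.2) (hp _ hl.2.1.1 hl.2.1.2)
  refine hU.trans ?_
  rw [Finset.card_eq_sum_card_fiberwise (s := U) (t := Q ×ˢ Q) (f := fun u => u.2.2)]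
  · refine Finset.sum_le_sum fun z _ => ?_
    refine Finset.card_le_card_of_injOn (fun u => u.1) ?_ ?_
    · rintro ⟨x, l, q⟩ hu
      obtain ⟨hv, rfl⟩ := Finset.mem_filter.1 (Finset.mem_coe.1 hu)
      simp only [U, pts, Finset.mem_sigma, Finset.mem_offDiag, Finset.mem_filter,
        Finset.mem_product, Finset.mem_erase] at hv
      obtain ⟨hx, ⟨h1, h2, h3⟩, ⟨h4, h5⟩, h6, h7⟩ := hv
      exact Finset.mem_coe.2 (Finset.mem_filter.2 ⟨hx, h4.symm, h6.symm, l.1, hL' h1.1, l.2,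
        hL' h2.1, h3, h1.2, h5.2, h2.2, h7.2⟩)
    · rintro ⟨x, l, q⟩ hu ⟨x', l', q'⟩ hu' (h : x = x')
      subst h
      obtain ⟨hv, rfl⟩ := Finset.mem_filter.1 (Finset.mem_coe.1 hu)
      obtain ⟨hv', hq⟩ := Finset.mem_filter.1 (Finset.mem_coe.1 hu')
      simp only at hq
      subst hq
      simp only [U, pts, Finset.mem_sigma, Finset.mem_offDiag, Finset.mem_filter,
        Finset.mem_product, Finset.mem_erase] at hv hv'
      obtain ⟨hx, ⟨h1, h2, h3⟩, ⟨h4, h5⟩, h6, h7⟩ := hv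
      obtain ⟨_, ⟨h1', h2', h3'⟩, ⟨h4', h5'⟩, h6', h7'⟩ := hv'
      have e1 : l.1 = l'.1 := huniq x hx _ h5.1 _ (hL' h1.1) _ (hL' h1'.1) h4.symm h1.2 h1'.2
        h5.2 h5'.2
      have e2 : l.2 = l'.2 := huniq x hx _ h7.1 _ (hL' h2.1) _ (hL' h2'.1) h6.symm h2.2 h2'.2
        h7.2 h7'.2
      have e3 : l = l' := Prod.ext e1 e2
      rw [e3]
  · rintro ⟨x, l, q⟩ hu
    have hu := Finset.mem_coe.1 hu
    simp only [U, pts, Finset.mem_sigma, Finset.mem_offDiag, Finset.mem_filter,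
      Finset.mem_product, Finset.mem_erase] at hu
    exact Finset.mem_coe.2 (Finset.mem_product.2 ⟨hu.2.2.1.2.1, hu.2.2.2.2.1⟩)

/-- Either there are few points, or some pair of points has a large corner. -/
theorem exists_corner
    (huniq : ∀ q ∈ Q, ∀ q' ∈ Q, ∀ l ∈ L, ∀ l' ∈ L, q ≠ q' → inc q l → inc q l' →
      inc q' l → inc q' l' → l = l') {k : ℕ} (hk4 : 4 ≤ k)
    (hk : ∀ q ∈ Q, k ≤ (L.filter fun l => inc q l).card) :
    Q.card * k ≤ 4 * L.card ∨ ∃ q₁ ∈ Q, ∃ q₂ ∈ Q, q₁ ≠ q₂ ∧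
      (Q.card : ℝ) * k ^ 4 ≤ 288 * L.card ^ 2 * (corner inc Q L q₁ q₂).card := by
  rw [or_iff_not_imp_left]
  intro hc
  push Not at hc
  set n := L.card with hn
  set M := Q.card with hM
  have hMpos : 0 < M := Nat.pos_of_ne_zero fun h => by simp [h] at hc
  obtain ⟨q₀, hq₀⟩ := Finset.card_pos.1 hMpos
  have hnpos : 0 < n := by
    have := (hk q₀ hq₀).trans (Finset.card_filter_le _ _)
    omega
  set ρ := M * k / (2 * n) with hρ
  have hρ2 : 2 ≤ ρ := by rw [hρ, Nat.le_div_iff_mul_le (by omega)]; omega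
  have hρle : ρ * (2 * n) ≤ M * k := Nat.div_mul_le_self _ _
  have hρlt : M * k < (ρ + 1) * (2 * n) := by
    rw [hρ]; exact Nat.lt_mul_of_div_lt (Nat.lt_succ_self _) (by omega)
  set L' := L.filter fun l => ρ ≤ (Q.filter fun q => inc q l).card with hL'
  have hL'L : L' ⊆ L := Finset.filter_subset _ _
  have hcor := sum_corner_ge huniq ρ L' hL'L fun l hl => (Finset.mem_filter.1 hl).2
  set r' : α → ℕ := fun x => (L'.filter fun l => inc x l).card with hr'
  have hI : M * k ≤ 2 * ∑ x ∈ Q, r' x := by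
    have h1 : M * k ≤ ∑ q ∈ Q, (L.filter fun l => inc q l).card := by
      rw [hM, ← smul_eq_mul]
      exact Finset.card_nsmul_le_sum _ _ _ hk
    rw [sum_inc_comm, ← Finset.sum_filter_add_sum_filter_not L
      (fun l => ρ ≤ (Q.filter fun q => inc q l).card), ← hL', ← sum_inc_comm] at h1
    have h2 : ∑ l ∈ L.filter (fun l => ¬ ρ ≤ (Q.filter fun q => inc q l).card),
        (Q.filter fun q => inc q l).card ≤ n * ρ := by
      refine (Finset.sum_le_card_nsmul _ _ ρ fun l hl => ?_).trans ?_
      · have := (Finset.mem_filter.1 hl).2; omega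
      · rw [smul_eq_mul]; exact Nat.mul_le_mul_right _ (Finset.card_filter_le _ _)
    simp only [hr']
    nlinarith
  have hoff : ∀ x, ((L'.filter fun l => inc x l).offDiag.card : ℝ) = (r' x : ℝ) ^ 2 - r' x := by
    intro x
    rw [Finset.offDiag_card, Nat.cast_sub (Nat.le_mul_self _)]
    push_cast
    ring
  set J : ℝ := ∑ x ∈ Q, (r' x : ℝ) with hJ
  have hI' : (M : ℝ) * k ≤ 2 * J := by rw [hJ]; exact_mod_cast hI
  have hcs : J ^ 2 ≤ M * ∑ x ∈ Q, (r' x : ℝ) ^ 2 := sq_sum_le_card_mul_sum_sq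
  have hMR : (0 : ℝ) < M := by exact_mod_cast hMpos
  have hnR : (0 : ℝ) < n := by exact_mod_cast hnpos
  have hkR : (4 : ℝ) ≤ k := by exact_mod_cast hk4
  have hpairs : (M : ℝ) * k ^ 2 ≤ 8 * ∑ x ∈ Q, ((L'.filter fun l => inc x l).offDiag.card : ℝ) := by
    rw [Finset.sum_congr rfl fun x _ => hoff x, Finset.sum_sub_distrib, ← hJ]
    set S := ∑ x ∈ Q, (r' x : ℝ) ^ 2
    -- `J² - MJ` increases in `J ≥ M / 2`, so it can be estimated at `J = Mk / 2`.
    have h1 : (M : ℝ) * (M * k ^ 2) ≤ M * (8 * (S - J)) := by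
      have h2 : 0 ≤ (2 * J - M * k) * (2 * J + M * k - 2 * M) := by
        apply mul_nonneg (by linarith); nlinarith
      nlinarith [mul_nonneg (mul_nonneg hMR.le hMR.le) (mul_nonneg (by linarith : (0:ℝ) ≤ k)
        (by linarith : (0:ℝ) ≤ k - 4))]
    exact le_of_mul_le_mul_left h1 hMR
  have hρ6 : (M : ℝ) * k ≤ 6 * n * ((ρ - 1 : ℕ) : ℝ) := by
    have h1 : M * k ≤ 6 * n * (ρ - 1) := by
      have : ρ + 1 ≤ 3 * (ρ - 1) := by omega
      have := Nat.mul_le_mul_right (2 * n) this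
      nlinarith
    exact_mod_cast h1
  have hcorR : ((ρ - 1 : ℕ) : ℝ) ^ 2 * ∑ x ∈ Q, ((L'.filter fun l => inc x l).offDiag.card : ℝ) ≤
      ∑ z ∈ Q ×ˢ Q, ((corner inc Q L z.1 z.2).card : ℝ) := by exact_mod_cast hcor
  have htot : ((Q ×ˢ Q).card : ℝ) * ((M : ℝ) * k ^ 4 / (288 * n ^ 2)) ≤
      ∑ z ∈ Q ×ˢ Q, ((corner inc Q L z.1 z.2).card : ℝ) := by
    refine le_trans ?_ hcorR
    rw [Finset.card_product, ← hM]
    push_cast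
    rw [mul_div_assoc', div_le_iff₀ (by positivity)]
    have h1 : ((M : ℝ) * k) ^ 2 ≤ (6 * n * ((ρ - 1 : ℕ) : ℝ)) ^ 2 := by gcongr
    have h2 := mul_le_mul h1 hpairs (by positivity) (by positivity)
    nlinarith
  obtain ⟨z, hz, hzc⟩ : ∃ z ∈ Q ×ˢ Q,
      (M : ℝ) * k ^ 4 / (288 * n ^ 2) ≤ ((corner inc Q L z.1 z.2).card : ℝ) := by
    by_contra hcon
    push Not at hcon
    have hne : (Q ×ˢ Q).Nonempty := ⟨(q₀, q₀), Finset.mem_product.2 ⟨hq₀, hq₀⟩⟩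
    have := Finset.sum_lt_sum_of_nonempty hne hcon
    rw [Finset.sum_const, nsmul_eq_mul] at this
    linarith
  rw [Finset.mem_product] at hz
  rw [div_le_iff₀ (by positivity)] at hzc
  refine ⟨z.1, hz.1, z.2, hz.2, ?_, by linarith⟩
  intro heq
  have hpos : (0 : ℝ) < (corner inc Q L z.1 z.2).card := by
    by_contra h0
    have : ((corner inc Q L z.1 z.2).card : ℝ) = 0 := le_antisymm (not_lt.1 h0) (by positivity)
    rw [this] at hzc
    have : (0 : ℝ) < M * k ^ 4 := by positivity
    linarith
  obtain ⟨x, hx⟩ := Finset.card_pos.1 (by exact_mod_cast hpos)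
  obtain ⟨hxQ, h1, h2, l₁, hl₁, l₂, hl₂, hne, h3, h4, h5, h6⟩ := Finset.mem_filter.1 hx
  rw [← heq] at h6
  exact hne (huniq x hxQ _ hz.1 _ hl₁ _ hl₂ h1 h3 h5 h4 h6)

end RichCombinatorics

/-! ### From corners to grids -/

section RichPoints

variable {F V : Type*} [Field F] [AddCommGroup V] [Module F V]

theorem exists_basis (h3 : Module.finrank F V = 3) {x y : V} (hx : x ≠ 0)
    (hxy : ∀ c : F, y ≠ c • x) :
    ∃ b : Module.Basis (Fin 3) F V, b 1 = x ∧ b 2 = y := by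
  have hli : LinearIndependent F ![x, y] :=
    (LinearIndependent.pair_iff' hx).2 fun a h => hxy a h.symm
  have hfd : FiniteDimensional F V := FiniteDimensional.of_finrank_pos (by omega)
  have hne : Submodule.span F (Set.range ![x, y]) ≠ ⊤ := by
    intro h
    have h1 := finrank_span_eq_card hli
    rw [h, finrank_top, h3] at h1
    simp at h1
  obtain ⟨e, he⟩ : ∃ e, e ∉ Submodule.span F (Set.range ![x, y]) := by
    by_contra hc
    push Not at hc
    exact hne (Submodule.eq_top_iff'.2 hc)
  have hli3 : LinearIndependent F (Fin.cons e ![x, y] : Fin 3 → V) :=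
    linearIndependent_finCons.2 ⟨hli, he⟩
  refine ⟨basisOfLinearIndependentOfCardEqFinrank hli3 (by simp [h3]), ?_, ?_⟩
  · rw [coe_basisOfLinearIndependentOfCardEqFinrank]; rfl
  · rw [coe_basisOfLinearIndependentOfCardEqFinrank]; rfl

theorem repr_three (b : Module.Basis (Fin 3) F V) (u : V) :
    u = b.repr u 0 • b 0 + b.repr u 1 • b 1 + b.repr u 2 • b 2 := by
  have := (b.sum_repr u).symm
  rwa [Fin.sum_univ_three] at this

/-- Two independent vectors are annihilated by only one functional up to scalars. -/
theorem dual_unique (h3 : Module.finrank F V = 3) {x y : V} (hx : x ≠ 0)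
    (hxy : ∀ c : F, y ≠ c • x) {w w' : Module.Dual F V} (hw : w ≠ 0) (h1 : w x = 0) (h2 : w y = 0)
    (h1' : w' x = 0) (h2' : w' y = 0) : ∃ c : F, w' = c • w := by
  obtain ⟨b, rfl, rfl⟩ := exists_basis h3 hx hxy
  have h0 : w (b 0) ≠ 0 := by
    intro h0
    apply hw
    refine b.ext fun i => ?_
    fin_cases i <;> simp [h0, h1, h2]
  refine ⟨w' (b 0) / w (b 0), b.ext fun i => ?_⟩
  fin_cases i
  · simp [h0]
  · simp [h1, h1']
  · have hw2 := h2'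
    simp [h2, hw2]

/-- A finite family of pairwise distinct points of the projective space of `V`. -/
def ProjDistinct {α : Type*} (F : Type*) {V : Type*} [Field F] [AddCommGroup V] [Module F V]
    (v : α → V) (Q : Finset α) : Prop :=
  (∀ q ∈ Q, v q ≠ 0) ∧ ∀ q ∈ Q, ∀ q' ∈ Q, q ≠ q' → ∀ c : F, v q' ≠ c • v q

variable {α β : Type*} {v : α → V} {w : β → Module.Dual F V} {Q : Finset α} {L : Finset β}

theorem line_unique (h3 : Module.finrank F V = 3) (hv : ProjDistinct F v Q)
    (hw : ProjDistinct F w L) :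
    ∀ q ∈ Q, ∀ q' ∈ Q, ∀ l ∈ L, ∀ l' ∈ L, q ≠ q' → w l (v q) = 0 → w l' (v q) = 0 →
      w l (v q') = 0 → w l' (v q') = 0 → l = l' := by
  intro q hq q' hq' l hl l' hl' hne h1 h2 h3' h4
  by_contra hll
  obtain ⟨c, hc⟩ := dual_unique h3 (hv.1 q hq) (hv.2 q hq q' hq' hne) (hw.1 l hl) h1 h3' h2 h4
  exact hw.2 l hl l' hl' hll c hc

end RichPoints

section Corner

variable {p : ℕ} [Fact p.Prime] {V : Type*} [AddCommGroup V] [Module (ZMod p) V]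
variable {α β : Type*} {v : α → V} {w : β → Module.Dual (ZMod p) V} {Q : Finset α} {L : Finset β}

set_option maxHeartbeats 1600000 in
/-- Sending `q₁` and `q₂` to infinity, a corner becomes a subset of a small grid, to which
`grid_bound` applies. -/
theorem corner_bound (h3 : Module.finrank (ZMod p) V = 3) (hv : ProjDistinct (ZMod p) v Q)
    (hw : ProjDistinct (ZMod p) w L) {k K N : ℕ}
    (hk : ∀ q ∈ Q, k ≤ (L.filter fun l => w l (v q) = 0).card)
    (hK : ∀ q ∈ Q, (L.filter fun l => w l (v q) = 0).card ≤ K)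
    (hN : K * L.card ≤ N) (hNp : N ≤ 600 * p ^ 2) {q₁ q₂ : α} (hq₁ : q₁ ∈ Q) (hq₂ : q₂ ∈ Q)
    (hne : q₁ ≠ q₂) :
    (((corner (fun q l => w l (v q) = 0) Q L q₁ q₂).card * (k - 1) : ℕ) : ℝ) ^ 2 ≤
      K * (2 ^ 20 * (N * √N + K * N)) := by
  have huniq := line_unique h3 hv hw
  obtain ⟨b, hb1, hb2⟩ := exists_basis h3 (hv.1 q₁ hq₁) (hv.2 q₁ hq₁ q₂ hq₂ hne)
  set X := corner (fun q l => w l (v q) = 0) Q L q₁ q₂ with hX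
  set φ : α → Fin 3 → ZMod p := fun x i => b.repr (v x) i with hφ
  have hrep : ∀ x, v x = φ x 0 • b 0 + φ x 1 • v q₁ + φ x 2 • v q₂ := by
    intro x
    rw [← hb1, ← hb2]
    exact repr_three b (v x)
  have hwx : ∀ l x, w l (v x) = φ x 0 * w l (b 0) + φ x 1 * w l (v q₁) + φ x 2 * w l (v q₂) := by
    intro l x
    conv_lhs => rw [hrep x]
    simp only [map_add, map_smul, smul_eq_mul]
  have hXmem : ∀ x ∈ X, x ∈ Q ∧ x ≠ q₁ ∧ x ≠ q₂ ∧ φ x 0 ≠ 0 ∧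
      (∃ l ∈ L, w l (v q₁) = 0 ∧ w l (v q₂) ≠ 0 ∧ w l (v x) = 0) ∧
      (∃ l ∈ L, w l (v q₂) = 0 ∧ w l (v q₁) ≠ 0 ∧ w l (v x) = 0) := by
    intro x hx
    obtain ⟨hxQ, h1, h2, l₁, hl₁, l₂, hl₂, hll, e1, e2, e3, e4⟩ := mem_corner.1 hx
    have e5 : w l₁ (v q₂) ≠ 0 := fun h => hll (huniq x hxQ q₂ hq₂ l₁ hl₁ l₂ hl₂ h2 e1 e3 h e4)
    have e6 : w l₂ (v q₁) ≠ 0 := fun h => hll (huniq x hxQ q₁ hq₁ l₁ hl₁ l₂ hl₂ h1 e1 e3 e2 h)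
    refine ⟨hxQ, h1, h2, ?_, ⟨l₁, hl₁, e2, e5, e1⟩, ⟨l₂, hl₂, e4, e6, e3⟩⟩
    intro h0
    have f1 : φ x 2 = 0 := by
      have := hwx l₁ x
      rw [e1, h0, e2] at this
      simpa [e5] using this.symm
    have f2 : φ x 1 = 0 := by
      have := hwx l₂ x
      rw [e3, h0, e4] at this
      simpa [e6] using this.symm
    apply hv.1 x hxQ
    rw [hrep x, h0, f1, f2]
    simp
  -- affine coordinates on points and on the lines not through `q₁`, with the line `q₁q₂` at infinity
  set g : α → ZMod p × ZMod p := fun x => (φ x 2 / φ x 0, φ x 1 / φ x 0) with hg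
  set h : β → ZMod p × ZMod p := fun l =>
    (-(w l (v q₂) / w l (v q₁)), -(w l (b 0) / w l (v q₁))) with hh
  set L₁ := L.filter fun l => w l (v q₁) ≠ 0 with hL₁
  have hginj : Set.InjOn g X := by
    intro x hx x' hx' hxx
    obtain ⟨hxQ, -, -, hx0, -, -⟩ := hXmem x hx
    obtain ⟨hxQ', -, -, hx0', -, -⟩ := hXmem x' hx'
    by_contra hcon
    obtain ⟨e1, e2⟩ := Prod.ext_iff.1 hxx
    simp only [hg] at e1 e2
    apply hv.2 x hxQ x' hxQ' hcon (φ x' 0 / φ x 0)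
    rw [div_eq_div_iff hx0 hx0'] at e1 e2
    rw [hrep x, hrep x', smul_add, smul_add, smul_smul, smul_smul, smul_smul]
    congr 2
    · congr 1; field_simp
    · congr 1; field_simp; linear_combination -e2
    · field_simp; linear_combination -e1
  have hhinj : Set.InjOn h L₁ := by
    intro l hl l' hl' hll
    obtain ⟨hlL, hl1⟩ := Finset.mem_filter.1 (Finset.mem_coe.1 hl)
    obtain ⟨hlL', hl1'⟩ := Finset.mem_filter.1 (Finset.mem_coe.1 hl')
    by_contra hcon
    obtain ⟨e1, e2⟩ := Prod.ext_iff.1 hll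
    simp only [hh, neg_inj] at e1 e2
    apply hw.2 l hlL l' hlL' hcon (w l' (v q₁) / w l (v q₁))
    rw [div_eq_div_iff hl1 hl1'] at e1 e2
    refine b.ext fun i => ?_
    fin_cases i
    · simp only [LinearMap.smul_apply, smul_eq_mul]
      change w l' (b 0) = _ * w l (b 0)
      field_simp
      linear_combination -e2
    · simp only [LinearMap.smul_apply, smul_eq_mul]
      change w l' (b 1) = _ * w l (b 1)
      rw [hb1]
      field_simp
    · simp only [LinearMap.smul_apply, smul_eq_mul]
      change w l' (b 2) = _ * w l (b 2)
      rw [hb2]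
      field_simp
      linear_combination -e1
  have hinc : ∀ x ∈ X, ∀ l ∈ L₁, (g x).1 * (h l).1 + (h l).2 = (g x).2 ↔ w l (v x) = 0 := by
    intro x hx l hl
    obtain ⟨-, -, -, hx0, -, -⟩ := hXmem x hx
    obtain ⟨hlL, hl1⟩ := Finset.mem_filter.1 hl
    rw [hwx l x]
    simp only [hg, hh]
    field_simp
    constructor
    · intro e; linear_combination -e
    · intro e; linear_combination -e
  set G := X.image g with hG
  set Λ := L₁.image h with hΛ
  set A := (L.filter fun l => w l (v q₁) = 0).image fun l => -(w l (b 0) / w l (v q₂)) with hA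
  set B := (L.filter fun l => w l (v q₂) = 0).image fun l => -(w l (b 0) / w l (v q₁)) with hB
  have hAc : A.card ≤ K := Finset.card_image_le.trans (hK q₁ hq₁)
  have hBc : B.card ≤ K := Finset.card_image_le.trans (hK q₂ hq₂)
  have hGA : ∀ z ∈ G, z.1 ∈ A := by
    intro z hz
    obtain ⟨x, hx, rfl⟩ := Finset.mem_image.1 hz
    obtain ⟨-, -, -, hx0, ⟨l, hl, e1, e2, e3⟩, -⟩ := hXmem x hx
    refine Finset.mem_image.2 ⟨l, Finset.mem_filter.2 ⟨hl, e1⟩, ?_⟩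
    rw [hwx l x, e1] at e3
    simp only [hg]
    field_simp
    linear_combination -e3
  have hGB : ∀ z ∈ G, z.2 ∈ B := by
    intro z hz
    obtain ⟨x, hx, rfl⟩ := Finset.mem_image.1 hz
    obtain ⟨-, -, -, hx0, -, ⟨l, hl, e1, e2, e3⟩⟩ := hXmem x hx
    refine Finset.mem_image.2 ⟨l, Finset.mem_filter.2 ⟨hl, e1⟩, ?_⟩
    rw [hwx l x, e1] at e3
    simp only [hg]
    field_simp
    linear_combination -e3
  have hfilt : ∀ x ∈ X, (Λ.filter fun l => (g x).1 * l.1 + l.2 = (g x).2) =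
      (L₁.filter fun l => w l (v x) = 0).image h := by
    intro x hx
    rw [hΛ, Finset.filter_image]
    congr 1
    exact Finset.filter_congr fun l hl => hinc x hx l hl
  have hGK : ∀ z ∈ G, (Λ.filter fun l => z.1 * l.1 + l.2 = z.2).card ≤ K := by
    intro z hz
    obtain ⟨x, hx, rfl⟩ := Finset.mem_image.1 hz
    rw [hfilt x hx]
    refine Finset.card_image_le.trans (le_trans (Finset.card_le_card ?_) (hK x (hXmem x hx).1))
    exact Finset.filter_subset_filter _ (Finset.filter_subset _ _)
  have hΛc : Λ.card ≤ L.card := Finset.card_image_le.trans (Finset.card_filter_le _ _)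
  have hmain := grid_bound A B Λ G K N hAc hGA hGB hGK
    ((Nat.mul_le_mul hAc hΛc).trans hN) hNp
  have hlow : X.card * (k - 1) ≤
      ((G ×ˢ Λ).filter fun z => z.1.1 * z.2.1 + z.2.2 = z.1.2).card := by
    have e1 : ((G ×ˢ Λ).filter fun z => z.1.1 * z.2.1 + z.2.2 = z.1.2).card =
        ∑ z ∈ G, (Λ.filter fun l => z.1 * l.1 + l.2 = z.2).card := by
      rw [Finset.card_filter, Finset.sum_product]
      refine Finset.sum_congr rfl fun z _ => ?_
      rw [Finset.card_filter]
    rw [e1, hG, Finset.sum_image hginj, ← smul_eq_mul]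
    refine Finset.card_nsmul_le_sum _ _ _ fun x hx => ?_
    obtain ⟨hxQ, hx1, -, -, -, -⟩ := hXmem x hx
    rw [hfilt x hx, Finset.card_image_of_injOn
      (hhinj.mono (Finset.coe_subset.2 (Finset.filter_subset _ _)))]
    have e2 := Finset.card_filter_add_card_filter_not
      (s := L.filter fun l => w l (v x) = 0) (fun l => w l (v q₁) ≠ 0)
    have e3 : ((L.filter fun l => w l (v x) = 0).filter fun l => ¬ w l (v q₁) ≠ 0).card ≤ 1 := by
      refine Finset.card_le_one.2 fun l hl l' hl' => ?_
      simp only [Finset.mem_filter, not_not] at hl hl'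
      exact huniq x hxQ q₁ hq₁ l hl.1.1 l' hl'.1.1 hx1 hl.1.2 hl'.1.2 hl.2 hl'.2
    have e4 : (L₁.filter fun l => w l (v x) = 0) =
        (L.filter fun l => w l (v x) = 0).filter fun l => w l (v q₁) ≠ 0 := by
      rw [hL₁, Finset.filter_filter, Finset.filter_filter]
      exact Finset.filter_congr fun l _ => and_comm
    have e5 := hk x hxQ
    rw [e4]
    omega
  have hlow' : ((X.card * (k - 1) : ℕ) : ℝ) ≤
      (((G ×ˢ Λ).filter fun z => z.1.1 * z.2.1 + z.2.2 = z.1.2).card : ℝ) := by exact_mod_cast hlow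
  calc ((X.card * (k - 1) : ℕ) : ℝ) ^ 2
      ≤ (((G ×ˢ Λ).filter fun z => z.1.1 * z.2.1 + z.2.2 = z.1.2).card : ℝ) ^ 2 :=
        pow_le_pow_left₀ (Nat.cast_nonneg _) hlow' 2
    _ ≤ B.card * (2 ^ 20 * (N * √N + K * N)) := hmain
    _ ≤ K * (2 ^ 20 * (N * √N + K * N)) :=
        mul_le_mul_of_nonneg_right (Nat.cast_le.2 hBc) (by positivity)

end Corner

/-! ### Rich points in a projective plane -/

section Rich

variable {p : ℕ} [Fact p.Prime] {V : Type*} [AddCommGroup V] [Module (ZMod p) V]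
variable {α β : Type*} {v : α → V} {w : β → Module.Dual (ZMod p) V} {Q : Finset α} {L : Finset β}

theorem corner_card_le {g k n : ℝ} (hg : 0 ≤ g) (hk : 4 ≤ k) (hkn : k ≤ n)
    (h : (g * (k - 1)) ^ 2 ≤
      100 * k * (2 ^ 20 * (100 * k * n * √(100 * k * n) + 100 * k * (100 * k * n)))) :
    g ^ 4 ≤ 2 ^ 86 * k * n ^ 3 := by
  set s := √(100 * k * n) with hs
  have hkp : 0 < k := by linarith
  have hnp : 0 < n := by linarith
  have hs2 : s ^ 2 = 100 * k * n := Real.sq_sqrt (by positivity)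
  have hs0 : 0 ≤ s := Real.sqrt_nonneg _
  have hks : 100 * k ≤ 10 * s := by
    refine le_of_sq_le_sq ?_ (by positivity)
    nlinarith
  have h1 : (g * (k - 1)) ^ 2 ≤ 100 * k * (2 ^ 20 * (11 * s ^ 3)) := by
    refine h.trans ?_
    rw [← hs2]
    have : s ^ 2 * s + 100 * k * s ^ 2 ≤ 11 * s ^ 3 := by nlinarith [sq_nonneg s]
    gcongr
  have h2 : (g * (k - 1)) ^ 4 ≤ (100 * k * (2 ^ 20 * (11 * s ^ 3))) ^ 2 := by
    calc (g * (k - 1)) ^ 4 = ((g * (k - 1)) ^ 2) ^ 2 := by ring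
      _ ≤ _ := by gcongr
  have h3 : (g * (k / 2)) ^ 4 ≤ (g * (k - 1)) ^ 4 := by
    gcongr
    linarith
  have h4 : (100 * k * (2 ^ 20 * (11 * s ^ 3))) ^ 2 = 1210000 * 2 ^ 40 * 1000000 * k ^ 5 * n ^ 3 := by
    have : (100 * k * (2 ^ 20 * (11 * s ^ 3))) ^ 2 = 1210000 * 2 ^ 40 * k ^ 2 * (s ^ 2) ^ 3 := by ring
    rw [this, hs2]; ring
  have h5 : g ^ 4 * k ^ 4 ≤ (16 * 1210000 * 2 ^ 40 * 1000000 * k * n ^ 3) * k ^ 4 := by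
    have := h3.trans (h2.trans h4.le)
    nlinarith
  have h6 := le_of_mul_le_mul_right h5 (by positivity)
  refine h6.trans ?_
  gcongr
  norm_num

/-- **Rich points.** Among `n` lines of a projective plane over `𝔽_p`, where `n^{3/2} ≤ p²`, the
number of points lying on about `k` lines is `O(n^{11/4} k^{-15/4} + n/k)`. -/
theorem rich_points (h3 : Module.finrank (ZMod p) V = 3) (hv : ProjDistinct (ZMod p) v Q)
    (hw : ProjDistinct (ZMod p) w L) {k : ℕ} (hk4 : 4 ≤ k)
    (hk : ∀ q ∈ Q, k ≤ (L.filter fun l => w l (v q) = 0).card)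
    (hK : ∀ q ∈ Q, (L.filter fun l => w l (v q) = 0).card ≤ 100 * k)
    (hnp : L.card ^ 3 ≤ p ^ 4) :
    Q.card * k ≤ 4 * L.card ∨ (Q.card : ℝ) ^ 4 * k ^ 15 ≤ 2 ^ 120 * (L.card : ℝ) ^ 11 := by
  have huniq := line_unique h3 hv hw
  by_cases hkn : 2 * L.card ≤ k ^ 2
  · left
    have := card_le_of_very_rich (inc := fun q l => w l (v q) = 0) huniq
      (fun q hq => by convert hk q hq) hkn
    omega
  push Not at hkn
  rcases exists_corner (inc := fun q l => w l (v q) = 0) huniq hk4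
      (fun q hq => by convert hk q hq) with h | ⟨q₁, hq₁, q₂, hq₂, hne, h⟩
  · exact Or.inl h
  right
  -- `k² < 2n` and `n³ ≤ p⁴` give `kn ≪ p²`, as `grid_bound` requires
  have hkL : k ≤ L.card := (hk q₁ hq₁).trans (Finset.card_filter_le _ _)
  have hN : 100 * k * L.card ≤ 600 * p ^ 2 := by
    refine (Nat.pow_le_pow_iff_left two_ne_zero).1 ?_
    have : L.card ^ 2 * k ^ 2 ≤ L.card ^ 2 * (2 * L.card) := Nat.mul_le_mul_left _ hkn.le
    nlinarith
  have hc := corner_bound h3 hv hw hk hK le_rfl hN hq₁ hq₂ hne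
  set g := (corner (fun q l => w l (v q) = 0) Q L q₁ q₂).card
  set n := L.card
  set M := Q.card
  have hkR : (4 : ℝ) ≤ k := by exact_mod_cast hk4
  have hknR : (k : ℝ) ≤ n := by exact_mod_cast hkL
  have hg : (g : ℝ) ^ 4 ≤ 2 ^ 86 * k * n ^ 3 := by
    refine corner_card_le (Nat.cast_nonneg _) hkR hknR ?_
    push_cast [Nat.cast_sub (by omega : 1 ≤ k)] at hc
    exact hc
  have h4 : ((M : ℝ) * k ^ 4) ^ 4 ≤ (288 * n ^ 2 * g) ^ 4 := by gcongr
  have h5 : (M : ℝ) ^ 4 * k ^ 15 * k ≤ 2 ^ 120 * (n : ℝ) ^ 11 * k := by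
    calc (M : ℝ) ^ 4 * k ^ 15 * k = ((M : ℝ) * k ^ 4) ^ 4 := by ring
      _ ≤ (288 * (n : ℝ) ^ 2 * g) ^ 4 := h4
      _ = 288 ^ 4 * (n : ℝ) ^ 8 * (g : ℝ) ^ 4 := by ring
      _ ≤ 288 ^ 4 * (n : ℝ) ^ 8 * (2 ^ 86 * k * n ^ 3) := by gcongr
      _ = (288 ^ 4 * 2 ^ 86) * ((n : ℝ) ^ 11 * k) := by ring
      _ ≤ 2 ^ 120 * ((n : ℝ) ^ 11 * k) := by gcongr; norm_num
      _ = _ := by ring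
  exact le_of_mul_le_mul_right h5 (by positivity)

end Rich

/-! ### Linear systems of cubics -/

section Cubics
open MvPolynomial

variable {F : Type*} [Field F]

/-- Evaluation at a point of the plane, as a linear functional on polynomials. -/
def evL (x : Fin 2 → F) : MvPolynomial (Fin 2) F →ₗ[F] F := (aeval x).toLinearMap

theorem evL_apply (x : Fin 2 → F) (f : MvPolynomial (Fin 2) F) : evL x f = eval x f := by
  simp [evL, aeval_eq_eval]

/-- Bézout for an irreducible cubic and a non-proportional polynomial of degree at most three. -/
theorem common_le_nine {f g : MvPolynomial (Fin 2) F} (hf : Irreducible f)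
    (hfd : f.totalDegree = 3) (hgd : g.totalDegree ≤ 3) (hfg : ∀ c : F, g ≠ c • f)
    (Z : Finset (Fin 2 → F)) (hZf : ∀ x ∈ Z, eval x f = 0) (hZg : ∀ x ∈ Z, eval x g = 0) :
    Z.card ≤ 9 := by
  have hdvd : ¬ f ∣ g := by
    rintro ⟨h, rfl⟩
    have hh0 : h ≠ 0 := by
      rintro rfl
      exact hfg 0 (by simp)
    rw [totalDegree_mul_of_isDomain hf.ne_zero hh0, hfd] at hgd
    have : h.totalDegree = 0 := by omega
    rw [totalDegree_eq_zero_iff_eq_C] at this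
    apply hfg (coeff 0 h)
    rw [this, smul_eq_C_mul, mul_comm]
    simp
  refine (bezout hf.prime hdvd Z hZf hZg).trans ?_
  rw [hfd]
  omega

/-- A finite family of irreducible, pairwise non-proportional cubics in `V`, each containing
between `k` and `2k` points of `P`. -/
def CubicFamily {α : Type*} (P : Finset (Fin 2 → F)) (k : ℕ)
    (V : Submodule F (MvPolynomial (Fin 2) F)) (f : α → MvPolynomial (Fin 2) F)
    (C : Finset α) : Prop :=
  (∀ γ ∈ C, f γ ∈ V ∧ Irreducible (f γ) ∧ (f γ).totalDegree = 3 ∧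
    k ≤ (P.filter fun x => eval x (f γ) = 0).card ∧
    (P.filter fun x => eval x (f γ) = 0).card ≤ 2 * k) ∧
  ∀ γ ∈ C, ∀ γ' ∈ C, γ ≠ γ' → ∀ c : F, f γ' ≠ c • f γ

variable {α : Type*} {P : Finset (Fin 2 → F)} {k : ℕ} {V : Submodule F (MvPolynomial (Fin 2) F)}
  {f : α → MvPolynomial (Fin 2) F} {C : Finset α}

/-- The base points of a system of cubics of dimension at least two number at most nine. -/
theorem base_points_le (hC : CubicFamily P k V f C) (hV : V ≤ restrictTotalDegree (Fin 2) F 3)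
    (hfin : 2 ≤ Module.finrank F V) (hne : C.Nonempty) :
    (P.filter fun x => ∀ g ∈ V, eval x g = 0).card ≤ 9 := by
  obtain ⟨γ, hγ⟩ := hne
  obtain ⟨hγV, hirr, hdeg, -, -⟩ := hC.1 γ hγ
  obtain ⟨g, hgV, hg⟩ : ∃ g ∈ V, ∀ c : F, g ≠ c • f γ := by
    by_contra hcon
    push Not at hcon
    have : V ≤ F ∙ f γ := fun g hg => by
      obtain ⟨c, hc⟩ := hcon g hg
      exact Submodule.mem_span_singleton.2 ⟨c, hc.symm⟩
    have h1 := (Submodule.finrank_mono this).trans (finrank_span_le_card _)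
    simp at h1
    omega
  refine common_le_nine hirr hdeg ((mem_restrictTotalDegree _ _ _).1 (hV hgV)) hg _ ?_ ?_
  · exact fun x hx => (Finset.mem_filter.1 hx).2 _ hγV
  · exact fun x hx => (Finset.mem_filter.1 hx).2 _ hgV

theorem finrank_inf_ker {j : ℕ} (hfin : Module.finrank F V = j + 1) {x : Fin 2 → F}
    (hx : ¬ ∀ g ∈ V, eval x g = 0) :
    Module.finrank F (V ⊓ LinearMap.ker (evL x) : Submodule F _) = j := by
  have : FiniteDimensional F V := FiniteDimensional.of_finrank_pos (by omega)
  set φ : V →ₗ[F] F := (evL x).domRestrict V with hφ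
  have hφ0 : φ ≠ 0 := by
    intro h
    apply hx
    intro g hg
    have := LinearMap.congr_fun h ⟨g, hg⟩
    rw [hφ, LinearMap.domRestrict_apply, evL_apply] at this
    simpa using this
  have h1 := LinearMap.finrank_range_add_finrank_ker φ
  rw [LinearMap.range_eq_top.2 (LinearMap.surjective_of_ne_zero hφ0), finrank_top,
    Module.finrank_self, hfin] at h1
  have h2 : V ⊓ LinearMap.ker (evL x) = (LinearMap.ker φ).map V.subtype := by
    ext g
    simp [hφ, and_comm]
  rw [h2, Submodule.finrank_map_subtype_eq]
  omega

/-- Induction on the dimension of the linear system: passing to the cubics through a point of `P`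
lowers the dimension by one. -/
theorem family_induction (hk : 18 ≤ k) {D : ℝ} (hD : 0 ≤ D)
    (hbase : ∀ (V : Submodule F (MvPolynomial (Fin 2) F)) (C : Finset α),
      V ≤ restrictTotalDegree (Fin 2) F 3 → Module.finrank F V = 3 → CubicFamily P k V f C →
      (C.card : ℝ) ≤ D) (j : ℕ) :
    ∀ (V : Submodule F (MvPolynomial (Fin 2) F)) (C : Finset α),
      V ≤ restrictTotalDegree (Fin 2) F 3 → Module.finrank F V = 3 + j → CubicFamily P k V f C →
      (C.card : ℝ) * k ^ j ≤ (2 * P.card) ^ j * D := by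
  induction j with
  | zero => intro V C h1 h2 h3; simpa using hbase V C h1 h2 h3
  | succ j ih =>
    intro V C hV hfin hC
    rcases C.eq_empty_or_nonempty with rfl | hne
    · simp; positivity
    set X := P.filter fun x => ∀ g ∈ V, eval x g = 0 with hX
    have hX9 : X.card ≤ 9 := base_points_le hC hV (by omega) hne
    set P' := P.filter fun x => ¬ ∀ g ∈ V, eval x g = 0 with hP'
    have h1 : ∀ x ∈ P', ((C.filter fun γ => eval x (f γ) = 0).card : ℝ) * k ^ j ≤
        (2 * P.card) ^ j * D := by
      intro x hx
      refine ih (V ⊓ LinearMap.ker (evL x)) _ (inf_le_left.trans hV)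
        (finrank_inf_ker (by omega) (Finset.mem_filter.1 hx).2) ⟨fun γ hγ => ?_, ?_⟩
      · obtain ⟨hγ, hγx⟩ := Finset.mem_filter.1 hγ
        obtain ⟨e1, e2⟩ := hC.1 γ hγ
        exact ⟨⟨e1, by rw [SetLike.mem_coe, LinearMap.mem_ker, evL_apply]; exact hγx⟩, e2⟩
      · exact fun γ hγ γ' hγ' => hC.2 γ (Finset.mem_filter.1 hγ).1 γ' (Finset.mem_filter.1 hγ').1
    have h2 : C.card * (k - 9) ≤ ∑ x ∈ P', (C.filter fun γ => eval x (f γ) = 0).card := by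
      have e : ∑ x ∈ P', (C.filter fun γ => eval x (f γ) = 0).card =
          ∑ γ ∈ C, (P'.filter fun x => eval x (f γ) = 0).card :=
        Finset.sum_card_bipartiteAbove_eq_sum_card_bipartiteBelow (fun x γ => eval x (f γ) = 0)
      rw [e, ← smul_eq_mul]
      refine Finset.card_nsmul_le_sum _ _ _ fun γ hγ => ?_
      have e1 := (hC.1 γ hγ).2.2.2.1
      have e2 : (P.filter fun x => eval x (f γ) = 0) ⊆
          (P'.filter fun x => eval x (f γ) = 0) ∪ X := by
        intro x hx
        obtain ⟨hx1, hx2⟩ := Finset.mem_filter.1 hx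
        by_cases hb : ∀ g ∈ V, eval x g = 0
        · exact Finset.mem_union_right _ (Finset.mem_filter.2 ⟨hx1, hb⟩)
        · exact Finset.mem_union_left _
            (Finset.mem_filter.2 ⟨Finset.mem_filter.2 ⟨hx1, hb⟩, hx2⟩)
      have e3 := (Finset.card_le_card e2).trans (Finset.card_union_le _ _)
      omega
    have h3 : C.card * k ≤ 2 * ∑ x ∈ P', (C.filter fun γ => eval x (f γ) = 0).card := by
      have : C.card * k ≤ C.card * (2 * (k - 9)) := Nat.mul_le_mul_left _ (by omega)
      nlinarith
    have h3' : (C.card : ℝ) * k ≤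
        2 * ∑ x ∈ P', ((C.filter fun γ => eval x (f γ) = 0).card : ℝ) := by exact_mod_cast h3
    have h4 : (∑ x ∈ P', ((C.filter fun γ => eval x (f γ) = 0).card : ℝ)) * k ^ j ≤
        P.card * ((2 * P.card) ^ j * D) := by
      rw [Finset.sum_mul]
      refine (Finset.sum_le_card_nsmul _ _ _ h1).trans ?_
      rw [nsmul_eq_mul]
      gcongr
      exact Finset.filter_subset _ _
    calc (C.card : ℝ) * k ^ (j + 1) = C.card * k * k ^ j := by ring
      _ ≤ 2 * (∑ x ∈ P', ((C.filter fun γ => eval x (f γ) = 0).card : ℝ)) * k ^ j := by gcongr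
      _ = 2 * ((∑ x ∈ P', ((C.filter fun γ => eval x (f γ) = 0).card : ℝ)) * k ^ j) := by ring
      _ ≤ 2 * (P.card * ((2 * P.card) ^ j * D)) := by gcongr
      _ = _ := by ring

end Cubics

/-! ### Nets of cubics -/

section Nets
open MvPolynomial

variable {F : Type*} [Field F]

/-- A chosen representative of the line spanned by a vector. -/
def projRep {W : Type*} [AddCommGroup W] [Module F W] (d : W) : W :=
  if h : d ≠ 0 then (Projectivization.mk F d h).rep else 0

theorem projRep_spec {W : Type*} [AddCommGroup W] [Module F W] {d : W} (hd : d ≠ 0) :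
    ∃ u : F, u ≠ 0 ∧ projRep (F := F) d = u • d := by
  obtain ⟨u, hu⟩ := Projectivization.exists_smul_eq_mk_rep F d hd
  refine ⟨u, u.ne_zero, ?_⟩
  rw [projRep, dif_pos hd, ← hu]
  rfl

theorem projRep_eq_of_smul {W : Type*} [AddCommGroup W] [Module F W] {d d' : W} (hd : d ≠ 0)
    (hd' : d' ≠ 0) {c : F} (h : projRep (F := F) d' = c • projRep (F := F) d) :
    projRep (F := F) d = projRep (F := F) d' := by
  obtain ⟨u, hu, e⟩ := projRep_spec (F := F) hd
  obtain ⟨u', hu', e'⟩ := projRep_spec (F := F) hd'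
  rw [e, e', smul_smul] at h
  have hc : d' = (u'⁻¹ * (c * u)) • d := by
    rw [← smul_smul, ← h, smul_smul, inv_mul_cancel₀ hu', one_smul]
  rw [projRep, projRep, dif_pos hd, dif_pos hd']
  congr 1
  rw [Projectivization.mk_eq_mk_iff']
  refine ⟨(u'⁻¹ * (c * u))⁻¹, ?_⟩
  have h0 : u'⁻¹ * (c * u) ≠ 0 := by
    intro h0
    rw [h0, zero_smul] at hc
    exact hd' hc
  rw [hc, smul_smul, inv_mul_cancel₀ h0, one_smul]

/-- A polynomial of `V` as an element of `V` (and zero for polynomials outside `V`). -/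
def vecIn (V : Submodule F (MvPolynomial (Fin 2) F)) (g : MvPolynomial (Fin 2) F) : V :=
  if h : g ∈ V then ⟨g, h⟩ else 0

theorem coe_vecIn {V : Submodule F (MvPolynomial (Fin 2) F)} {g : MvPolynomial (Fin 2) F}
    (h : g ∈ V) : (vecIn V g : MvPolynomial (Fin 2) F) = g := by rw [vecIn, dif_pos h]

variable {α : Type*} {P : Finset (Fin 2 → F)} {k : ℕ} {V : Submodule F (MvPolynomial (Fin 2) F)}
  {f : α → MvPolynomial (Fin 2) F} {C : Finset α}

/-- Cubics half of whose points lie on no other cubic of the family are few. -/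
theorem bad_cubics_le (hC : CubicFamily P k V f C) :
    (C.filter fun γ => 2 * (P.filter fun x => eval x (f γ) = 0 ∧
      ∃ γ' ∈ C, γ' ≠ γ ∧ eval x (f γ') = 0).card < k).card * k ≤ 2 * P.card := by
  set Bad := C.filter fun γ => 2 * (P.filter fun x => eval x (f γ) = 0 ∧
      ∃ γ' ∈ C, γ' ≠ γ ∧ eval x (f γ') = 0).card < k with hBad
  have h1 : Bad.card * k ≤ ∑ γ ∈ Bad, 2 * (P.filter fun x => eval x (f γ) = 0 ∧
      ¬ ∃ γ' ∈ C, γ' ≠ γ ∧ eval x (f γ') = 0).card := by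
    rw [← smul_eq_mul]
    refine Finset.card_nsmul_le_sum _ _ _ fun γ hγ => ?_
    obtain ⟨hγ, hlt⟩ := Finset.mem_filter.1 hγ
    have e1 := (hC.1 γ hγ).2.2.2.1
    have e2 := Finset.card_filter_add_card_filter_not
      (s := P.filter fun x => eval x (f γ) = 0) (fun x => ∃ γ' ∈ C, γ' ≠ γ ∧ eval x (f γ') = 0)
    rw [Finset.filter_filter, Finset.filter_filter] at e2
    omega
  refine h1.trans ?_
  rw [← Finset.mul_sum]
  refine Nat.mul_le_mul_left 2 ?_
  have e : ∑ γ ∈ Bad, (P.filter fun x => eval x (f γ) = 0 ∧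
        ¬ ∃ γ' ∈ C, γ' ≠ γ ∧ eval x (f γ') = 0).card =
      ∑ x ∈ P, (Bad.filter fun γ => eval x (f γ) = 0 ∧
        ¬ ∃ γ' ∈ C, γ' ≠ γ ∧ eval x (f γ') = 0).card :=
    Finset.sum_card_bipartiteAbove_eq_sum_card_bipartiteBelow
      (fun γ x => eval x (f γ) = 0 ∧ ¬ ∃ γ' ∈ C, γ' ≠ γ ∧ eval x (f γ') = 0)
  rw [e, Finset.card_eq_sum_ones]
  refine Finset.sum_le_sum fun x _ => Finset.card_le_one.2 fun γ hγ γ' hγ' => ?_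
  obtain ⟨h1, h2, h3⟩ := Finset.mem_filter.1 hγ
  obtain ⟨h1', hzero, h3'⟩ := Finset.mem_filter.1 hγ'
  by_contra hne
  exact h3 ⟨γ', (Finset.mem_filter.1 h1').1, fun h => hne h.symm, hzero⟩

/-- A net of cubics (a linear system of dimension three) turns the incidences of cubics with points
of `P` into incidences of points with lines in a projective plane. -/
theorem net_reduction (hC : CubicFamily P k V f C) (hV : V ≤ restrictTotalDegree (Fin 2) F 3)
    (hfin : Module.finrank F V = 3) (hk : 1000 ≤ k) :
    ∃ (C' : Finset α) (L : Finset (Module.Dual F V)), C.card * k ≤ C'.card * k + 2 * P.card ∧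
      L.card ≤ P.card ∧ ProjDistinct F id L ∧ ProjDistinct F (fun γ => vecIn V (f γ)) C' ∧
      (∀ γ ∈ C', k / 40 ≤ (L.filter fun l => l (vecIn V (f γ)) = 0).card) ∧
      ∀ γ ∈ C', (L.filter fun l => l (vecIn V (f γ)) = 0).card ≤ 2 * k := by
  rcases C.eq_empty_or_nonempty with rfl | hne
  · exact ⟨∅, ∅, by simp, by simp, by simp [ProjDistinct], by simp [ProjDistinct], by simp, by simp⟩
  have hX9 := base_points_le hC hV (by omega) hne
  set bad : α → Prop := fun γ => 2 * (P.filter fun x => eval x (f γ) = 0 ∧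
      ∃ γ' ∈ C, γ' ≠ γ ∧ eval x (f γ') = 0).card < k with hbad
  set d : (Fin 2 → F) → Module.Dual F V := fun x => (evL x).domRestrict V with hd
  -- base points and points on only one cubic define no line, or one shared by too many points
  set P' := P.filter fun x => (∃ γ ∈ C, ∃ γ' ∈ C, γ' ≠ γ ∧ eval x (f γ) = 0 ∧ eval x (f γ') = 0) ∧
    ¬ ∀ g ∈ V, eval x g = 0 with hP'
  have hd0 : ∀ x ∈ P', d x ≠ 0 := by
    intro x hx h0
    apply (Finset.mem_filter.1 hx).2.2
    intro g hg
    have := LinearMap.congr_fun h0 ⟨g, hg⟩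
    simpa only [hd, LinearMap.domRestrict_apply, evL_apply, LinearMap.zero_apply] using this
  have hdv : ∀ x, ∀ γ ∈ C, d x (vecIn V (f γ)) = eval x (f γ) := by
    intro x γ hγ
    simp only [hd, LinearMap.domRestrict_apply, evL_apply, coe_vecIn (hC.1 γ hγ).1]
  have hrep0 : ∀ x ∈ P', ∀ γ ∈ C,
      (projRep (F := F) (d x)) (vecIn V (f γ)) = 0 ↔ eval x (f γ) = 0 := by
    intro x hx γ hγ
    obtain ⟨u, hu, e⟩ := projRep_spec (F := F) (hd0 x hx)
    rw [e, LinearMap.smul_apply, hdv x γ hγ, smul_eq_mul, mul_eq_zero]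
    simp [hu]
  set L := P'.image fun x => projRep (F := F) (d x) with hL
  set C' := C.filter fun γ => ¬ bad γ with hC'
  refine ⟨C', L, ?_, Finset.card_image_le.trans (Finset.card_filter_le _ _), ?_, ?_, ?_, ?_⟩
  · have h1 := bad_cubics_le hC
    have h2 := Finset.card_filter_add_card_filter_not (s := C) bad
    rw [← h2, add_mul]
    simp only [hbad, hC'] at *
    omega
  · refine ⟨fun l hl => ?_, fun l hl l' hl' hll c hc => hll ?_⟩
    · obtain ⟨x, hx, rfl⟩ := Finset.mem_image.1 hl
      obtain ⟨u, hu, e⟩ := projRep_spec (F := F) (hd0 x hx)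
      simp only [id, e]
      exact smul_ne_zero hu (hd0 x hx)
    · obtain ⟨x, hx, rfl⟩ := Finset.mem_image.1 hl
      obtain ⟨x', hx', rfl⟩ := Finset.mem_image.1 hl'
      exact projRep_eq_of_smul (hd0 x hx) (hd0 x' hx') hc
  · refine ⟨fun γ hγ h0 => ?_, fun γ hγ γ' hγ' hne c hc => ?_⟩
    · have hγ := (Finset.mem_filter.1 hγ).1
      have := coe_vecIn (hC.1 γ hγ).1
      simp only at h0
      rw [h0] at this
      exact (hC.1 γ hγ).2.1.ne_zero (by simpa using this.symm)
    · have hγ := (Finset.mem_filter.1 hγ).1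
      have hγ' := (Finset.mem_filter.1 hγ').1
      refine hC.2 γ hγ γ' hγ' hne c ?_
      have := congrArg (fun z : V => (z : MvPolynomial (Fin 2) F)) hc
      simpa only [Submodule.coe_smul, coe_vecIn (hC.1 γ hγ).1, coe_vecIn (hC.1 γ' hγ').1] using this
  · intro γ hγ
    obtain ⟨hγ, hg⟩ := Finset.mem_filter.1 hγ
    simp only [hbad, not_lt] at hg
    have h1 : (P.filter fun x => eval x (f γ) = 0 ∧ ∃ γ' ∈ C, γ' ≠ γ ∧ eval x (f γ') = 0) ⊆
        (P'.filter fun x => eval x (f γ) = 0) ∪ (P.filter fun x => ∀ g ∈ V, eval x g = 0) := by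
      intro x hx
      obtain ⟨hx, h1, γ', h2, h3, h4⟩ := Finset.mem_filter.1 hx
      by_cases hb : ∀ g ∈ V, eval x g = 0
      · exact Finset.mem_union_right _ (Finset.mem_filter.2 ⟨hx, hb⟩)
      · exact Finset.mem_union_left _ (Finset.mem_filter.2
          ⟨Finset.mem_filter.2 ⟨hx, ⟨γ, hγ, γ', h2, h3, h1, h4⟩, hb⟩, h1⟩)
    have h2 := (Finset.card_le_card h1).trans (Finset.card_union_le _ _)
    have h3 : (P'.filter fun x => eval x (f γ) = 0).card ≤
        9 * (L.filter fun l => l (vecIn V (f γ)) = 0).card := by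
      refine Finset.card_le_mul_card_image_of_maps_to (f := fun x => projRep (F := F) (d x)) ?_ 9 ?_
      · intro x hx
        obtain ⟨hx, hx0⟩ := Finset.mem_filter.1 hx
        exact Finset.mem_filter.2 ⟨Finset.mem_image_of_mem _ hx, (hrep0 x hx γ hγ).2 hx0⟩
      · intro l hl
        obtain ⟨x₀, hx₀, rfl⟩ := Finset.mem_image.1 (Finset.mem_filter.1 hl).1
        obtain ⟨-, ⟨γ₁, hγ₁, γ₂, hγ₂, hne12, e1, e2⟩, -⟩ := Finset.mem_filter.1 hx₀
        obtain ⟨-, i1, i2, -⟩ := hC.1 γ₁ hγ₁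
        refine common_le_nine i1 i2 (hC.1 γ₂ hγ₂).2.2.1.le
          (hC.2 γ₁ hγ₁ γ₂ hγ₂ hne12.symm) _ ?_ ?_
        · intro x hx
          obtain ⟨hx, hxe⟩ := Finset.mem_filter.1 hx
          have hx := (Finset.mem_filter.1 hx).1
          rw [← hrep0 x hx γ₁ hγ₁, hxe, hrep0 x₀ hx₀ γ₁ hγ₁]
          exact e1
        · intro x hx
          obtain ⟨hx, hxe⟩ := Finset.mem_filter.1 hx
          have hx := (Finset.mem_filter.1 hx).1
          rw [← hrep0 x hx γ₂ hγ₂, hxe, hrep0 x₀ hx₀ γ₂ hγ₂]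
          exact e2
    omega
  · intro γ hγ
    have hγ := (Finset.mem_filter.1 hγ).1
    have h1 : (L.filter fun l => l (vecIn V (f γ)) = 0) ⊆
        (P.filter fun x => eval x (f γ) = 0).image fun x => projRep (F := F) (d x) := by
      intro l hl
      obtain ⟨hl, hl0⟩ := Finset.mem_filter.1 hl
      obtain ⟨x, hx, rfl⟩ := Finset.mem_image.1 hl
      exact Finset.mem_image_of_mem _ (Finset.mem_filter.2
        ⟨(Finset.mem_filter.1 hx).1, (hrep0 x hx γ hγ).1 hl0⟩)
    exact (Finset.card_le_card h1).trans (Finset.card_image_le.trans (hC.1 γ hγ).2.2.2.2)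

end Nets

section Counting
open MvPolynomial

variable {p : ℕ} [Fact p.Prime] {α : Type*} {P : Finset (Fin 2 → ZMod p)} {k : ℕ}
  {V : Submodule (ZMod p) (MvPolynomial (Fin 2) (ZMod p))}
  {f : α → MvPolynomial (Fin 2) (ZMod p)} {C : Finset α}

/-- The bound for rich cubics in a net; `D` stands for a multiple of `|P|^{11/4} k^{-15/4}`. -/
theorem net_bound (hC : CubicFamily P k V f C)
    (hV : V ≤ restrictTotalDegree (Fin 2) (ZMod p) 3) (hfin : Module.finrank (ZMod p) V = 3)
    (hk : 1000 ≤ k) (hP : P.card ^ 3 ≤ p ^ 4) {D : ℝ} (hD : 0 ≤ D)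
    (hDk : 2 ^ 120 * 50 ^ 15 * (P.card : ℝ) ^ 11 ≤ D ^ 4 * k ^ 15) :
    (C.card : ℝ) ≤ 202 * (P.card / k) + D := by
  obtain ⟨C', L, h1, h2, h3, h4, h5, h6⟩ := net_reduction hC hV hfin hk
  have hkR : (1000 : ℝ) ≤ k := by exact_mod_cast hk
  have hk0 : (0 : ℝ) < k := by linarith
  have h1' : (C.card : ℝ) ≤ C'.card + 2 * (P.card / k) := by
    have : (C.card : ℝ) * k ≤ C'.card * k + 2 * P.card := by exact_mod_cast h1
    have e : (C'.card : ℝ) + 2 * (P.card / k) = (C'.card * k + 2 * P.card) / k := by field_simp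
    rw [e, le_div_iff₀ hk0]
    exact this
  have hk' : (k : ℝ) ≤ 50 * (k / 40 : ℕ) := by
    have : k ≤ 50 * (k / 40) := by omega
    exact_mod_cast this
  have hrich := rich_points hfin h4 h3 (k := k / 40) (by omega)
    (fun q hq => by
      convert h5 q hq
      rfl) (fun q hq => by
      refine le_trans (le_of_eq ?_) ((h6 q hq).trans (by omega : 2 * k ≤ 100 * (k / 40)))
      congr!)
    ((Nat.pow_le_pow_left h2 3).trans hP)
  rcases hrich with h | h
  · have h' : (C'.card : ℝ) * (k / 40 : ℕ) ≤ 4 * P.card := by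
      have : C'.card * (k / 40) ≤ 4 * P.card := h.trans (Nat.mul_le_mul_left 4 h2)
      exact_mod_cast this
    have : (C'.card : ℝ) ≤ 200 * (P.card / k) := by
      rw [mul_div_assoc', le_div_iff₀ hk0]
      nlinarith [mul_le_mul_of_nonneg_left hk' (Nat.cast_nonneg (α := ℝ) C'.card)]
    linarith
  · have h7 : (C'.card : ℝ) ^ 4 * k ^ 15 ≤ D ^ 4 * k ^ 15 := by
      refine le_trans ?_ hDk
      calc (C'.card : ℝ) ^ 4 * k ^ 15 ≤ (C'.card : ℝ) ^ 4 * (50 * (k / 40 : ℕ)) ^ 15 := by gcongr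
        _ = 50 ^ 15 * ((C'.card : ℝ) ^ 4 * ((k / 40 : ℕ) : ℝ) ^ 15) := by ring
        _ ≤ 50 ^ 15 * (2 ^ 120 * (L.card : ℝ) ^ 11) := by gcongr
        _ ≤ 50 ^ 15 * (2 ^ 120 * (P.card : ℝ) ^ 11) := by gcongr
        _ = _ := by ring
    have h8 := le_of_mul_le_mul_right h7 (by positivity)
    have h9 : (C'.card : ℝ) ≤ D := le_of_pow_le_pow_left₀ (by norm_num) hD h8
    have : (0 : ℝ) ≤ P.card / k := by positivity
    linarith

/-- The number of cubics containing about `k` points of `P` is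
`O(|P|^{39/4} k^{-43/4} + |P|^8 k^{-8})`; the first term is `(2|P|/k)^7 D`. -/
theorem family_bound (hC : CubicFamily P k (restrictTotalDegree (Fin 2) (ZMod p) 3) f C)
    (hk : 1000 ≤ k) (hP : P.card ^ 3 ≤ p ^ 4) {D : ℝ} (hD : 0 ≤ D)
    (hDk : 2 ^ 120 * 50 ^ 15 * (P.card : ℝ) ^ 11 ≤ D ^ 4 * k ^ 15) :
    (C.card : ℝ) * k ^ 7 ≤ (2 * P.card) ^ 7 * (202 * (P.card / k) + D) := by
  refine family_induction (by omega) (by positivity)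
    (fun V C hV hfin hC => net_bound hC hV hfin hk hP hD hDk) 7 _ C le_rfl ?_ hC
  have := finrank_deg (A := ZMod p) 3
  omega

end Counting

/-! ### Dyadic summation -/

open MvPolynomial

/-- If `N` curves have about `k = 2^i T` points each and the threshold `T` satisfies
`T^43 n^4 ≥ m^39` and `T^8 n ≥ m^8`, then the count `N` decays like `n 2^{-7i}`. -/
theorem dyadic_decay {m n N T : ℝ} {i : ℕ} (hm : 0 ≤ m) (hn : 0 ≤ n) (hT : 0 < T)
    (h0 : m ^ 39 ≤ T ^ 43 * n ^ 4) (h1 : m ^ 8 ≤ T ^ 8 * n)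
    (hN : ∀ D : ℝ, 0 ≤ D → 2 ^ 120 * 50 ^ 15 * m ^ 11 ≤ D ^ 4 * (2 ^ i * T) ^ 15 →
      N * (2 ^ i * T) ^ 7 ≤ (2 * m) ^ 7 * (202 * (m / (2 ^ i * T)) + D)) :
    N * (2 ^ i) ^ 7 ≤ 2 ^ 61 * n := by
  -- `K` is at least the fourth root of `2^120 * 50^15`
  obtain ⟨K, hK0, hK, hK2⟩ : ∃ K : ℝ, 0 ≤ K ∧ 2 ^ 120 * 50 ^ 15 ≤ K ^ 4 ∧
      2 ^ 7 * (202 + K) ≤ 2 ^ 61 := ⟨2 ^ 53, by norm_num, by norm_num, by norm_num⟩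
  have hE : (1 : ℝ) ≤ 2 ^ i := one_le_pow₀ (by norm_num)
  generalize (2 : ℝ) ^ i = E at *
  have hE0 : 0 < E := by linarith
  have hk : 0 < E * T := by positivity
  set q : ℝ := m ^ 11 / (E * T) ^ 15 with hq
  have hq0 : 0 ≤ q := by positivity
  set D : ℝ := K * q ^ ((1 : ℝ) / 4) with hD
  have hD0 : 0 ≤ D := by positivity
  have hD4 : D ^ 4 * (E * T) ^ 15 = (K) ^ 4 * m ^ 11 := by
    have e : (q ^ ((1 : ℝ) / 4)) ^ 4 = q := by
      rw [← Real.rpow_natCast, ← Real.rpow_mul hq0]; norm_num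
    rw [hD, mul_pow, e, hq]
    field_simp
  have hb := hN D hD0 (by
    rw [hD4]
    exact mul_le_mul_of_nonneg_right hK (pow_nonneg hm 11))
  clear hK hN
  have hpos : 0 ≤ K * n * T ^ 7 := by positivity
  have hX : m ^ 7 * D ≤ K * n * T ^ 7 := by
    refine le_of_pow_le_pow_left₀ (n := 4) (by norm_num) hpos ?_
    have h2 : (m ^ 7 * D) ^ 4 * (E ^ 15 * T ^ 15) ≤ (K * n * T ^ 7) ^ 4 * (1 * T ^ 15) := by
      calc (m ^ 7 * D) ^ 4 * (E ^ 15 * T ^ 15) = m ^ 28 * (D ^ 4 * (E * T) ^ 15) := by ring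
        _ = (K) ^ 4 * m ^ 39 := by rw [hD4]; ring
        _ ≤ (K) ^ 4 * (T ^ 43 * n ^ 4) := by gcongr
        _ = _ := by ring
    have h3 : (m ^ 7 * D) ^ 4 * (1 * T ^ 15) ≤ (m ^ 7 * D) ^ 4 * (E ^ 15 * T ^ 15) := by
      gcongr
      exact one_le_pow₀ hE
    exact le_of_mul_le_mul_right (h3.trans h2) (by positivity)
  have hY : m ^ 7 * (m / (E * T)) ≤ n * T ^ 7 := by
    have : m ^ 7 * (m / (E * T)) = m ^ 8 / (E * T) := by ring
    rw [this, div_le_iff₀ hk]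
    calc m ^ 8 ≤ T ^ 8 * n := h1
      _ = n * T ^ 7 * (1 * T) := by ring
      _ ≤ _ := by gcongr
  have h4 : N * E ^ 7 * T ^ 7 ≤ 2 ^ 61 * n * T ^ 7 := by
    calc N * E ^ 7 * T ^ 7 = N * (E * T) ^ 7 := by ring
      _ ≤ _ := hb
      _ = 2 ^ 7 * (202 * (m ^ 7 * (m / (E * T))) + m ^ 7 * D) := by ring
      _ ≤ 2 ^ 7 * (202 * (n * T ^ 7) + K * n * T ^ 7) := by gcongr
      _ = 2 ^ 7 * (202 + K) * (n * T ^ 7) := by ring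
      _ ≤ 2 ^ 61 * (n * T ^ 7) := mul_le_mul_of_nonneg_right hK2 (by positivity)
      _ = _ := by ring
  exact le_of_mul_le_mul_right h4 (by positivity)

/-- An integer `r ≥ T` lies in some interval `[2^i T, 2^{i+1} T]`, `i < m`, so it is at most the
sum of the right ends of the intervals containing it. -/
theorem dyadic_pointwise {r T m : ℕ} (hT : 0 < T) (hr : r ≤ m) :
    r ≤ T + ∑ i ∈ Finset.range m, if 2 ^ i * T ≤ r ∧ r ≤ 2 * (2 ^ i * T) then 2 * (2 ^ i * T)
      else 0 := by
  rcases lt_or_ge r T with h | h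
  · omega
  have hq : r / T ≠ 0 := (Nat.div_pos h hT).ne'
  set i := Nat.log 2 (r / T) with hi
  have h1 : 2 ^ i * T ≤ r := by
    have := Nat.pow_log_le_self 2 hq
    exact (Nat.le_div_iff_mul_le hT).1 this
  have h2 : r ≤ 2 * (2 ^ i * T) := by
    have := Nat.lt_pow_succ_log_self (b := 2) (by norm_num) (r / T)
    have := (Nat.div_lt_iff_lt_mul hT).1 this
    rw [Nat.succ_eq_add_one, pow_succ] at this
    nlinarith
  have h3 : i < m := by
    have a := Nat.log_lt_self 2 hq
    have b := Nat.div_le_self r T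
    omega
  have h4 := Finset.single_le_sum (s := Finset.range m)
    (f := fun i => if 2 ^ i * T ≤ r ∧ r ≤ 2 * (2 ^ i * T) then 2 * (2 ^ i * T) else 0)
    (fun _ _ => Nat.zero_le _) (Finset.mem_range.2 h3)
  simp only [h1, h2, and_self, if_true] at h4
  omega

/-- Summation of the dyadic classes: if every class with `2^i T ≤ r ≤ 2^{i+1} T` has at most
`M n 2^{-7i}` members, the total of `r` is `O(M n T)`. -/
theorem dyadic_sum {α : Type*} (C : Finset α) (r : α → ℕ) {T m : ℕ} (hT : 0 < T)
    (hr : ∀ γ ∈ C, r γ ≤ m) {M : ℝ} (hM : 0 ≤ M)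
    (h : ∀ i : ℕ, ((C.filter fun γ => 2 ^ i * T ≤ r γ ∧ r γ ≤ 2 * (2 ^ i * T)).card : ℝ)
      * (2 ^ i) ^ 7 ≤ M * C.card) :
    ((∑ γ ∈ C, r γ : ℕ) : ℝ) ≤ (1 + 4 * M) * (C.card * T) := by
  have h1 : ∑ γ ∈ C, r γ ≤ C.card * T + ∑ i ∈ Finset.range m,
      (C.filter fun γ => 2 ^ i * T ≤ r γ ∧ r γ ≤ 2 * (2 ^ i * T)).card * (2 * (2 ^ i * T)) := by
    refine (Finset.sum_le_sum fun γ hγ => dyadic_pointwise hT (hr γ hγ)).trans (le_of_eq ?_)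
    rw [Finset.sum_add_distrib, Finset.sum_comm]
    simp [Finset.sum_ite]
  have h2 : ((∑ γ ∈ C, r γ : ℕ) : ℝ) ≤ C.card * T + ∑ i ∈ Finset.range m,
      ((C.filter fun γ => 2 ^ i * T ≤ r γ ∧ r γ ≤ 2 * (2 ^ i * T)).card : ℝ)
        * (2 * (2 ^ i * T)) := by exact_mod_cast h1
  refine h2.trans ?_
  have h3 : ∀ i ∈ Finset.range m,
      ((C.filter fun γ => 2 ^ i * T ≤ r γ ∧ r γ ≤ 2 * (2 ^ i * T)).card : ℝ)
        * (2 * (2 ^ i * T)) ≤ (2 * M * (C.card * T)) * ((1 : ℝ) / 2) ^ i := by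
    intro i _
    have hi := h i
    generalize ((C.filter fun γ => 2 ^ i * T ≤ r γ ∧ r γ ≤ 2 * (2 ^ i * T)).card : ℝ) = N at hi
    have hE : (1 : ℝ) ≤ 2 ^ i := one_le_pow₀ (by norm_num)
    rw [one_div, inv_pow, ← div_eq_mul_inv]
    generalize (2 : ℝ) ^ i = E at *
    have hE0 : 0 < E := by linarith
    rw [le_div_iff₀ hE0]
    have h5 : N * E ^ 2 ≤ M * C.card := by
      rcases lt_or_ge N 0 with hN | hN
      · have : N * E ^ 2 ≤ 0 := by nlinarith [sq_nonneg E]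
        exact this.trans (by positivity)
      · refine le_trans ?_ hi
        exact mul_le_mul_of_nonneg_left (pow_le_pow_right₀ hE (by norm_num)) hN
    calc N * (2 * (E * T)) * E = 2 * T * (N * E ^ 2) := by ring
      _ ≤ 2 * T * (M * C.card) := by gcongr
      _ = _ := by ring
  have h6 := Finset.sum_le_sum h3
  rw [← Finset.mul_sum] at h6
  have h7 : ∑ i ∈ Finset.range m, ((1 : ℝ) / 2) ^ i ≤ 2 := by
    exact sum_geometric_two_le m
  have h8 : (2 * M * (C.card * T)) * ∑ i ∈ Finset.range m, ((1 : ℝ) / 2) ^ i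
      ≤ (2 * M * (C.card * T)) * 2 := mul_le_mul_of_nonneg_left h7 (by positivity)
  linarith

/-- The threshold is `T = ⌈1000 + k₀ + k₁⌉` with `k₀ = m^{39/43} n^{-4/43}` and `k₁ = m n^{-1/8}`. -/
theorem exists_threshold {m n : ℝ} (hm : 0 ≤ m) (hn : 1 ≤ n) :
    ∃ T : ℕ, 1000 ≤ T ∧ m ^ 39 ≤ (T : ℝ) ^ 43 * n ^ 4 ∧ m ^ 8 ≤ (T : ℝ) ^ 8 * n ∧
      n * T ≤ 1001 * ((m * n) ^ ((39 : ℝ) / 43)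
        + m ^ ((71 : ℝ) / 43) * n ^ ((28 : ℝ) / 43) + n) := by
  have hn0 : 0 < n := by linarith
  set k0 : ℝ := m ^ ((39 : ℝ) / 43) * n ^ (-(4 : ℝ) / 43) with hk0
  set k1 : ℝ := m * n ^ (-(1 : ℝ) / 8) with hk1
  have hk0n : 0 ≤ k0 := by positivity
  have hk1n : 0 ≤ k1 := by positivity
  have e0 : k0 ^ 43 * n ^ 4 = m ^ 39 := by
    rw [hk0, mul_pow, ← Real.rpow_natCast, ← Real.rpow_natCast, ← Real.rpow_mul hm,
      ← Real.rpow_mul hn0.le, mul_assoc, ← Real.rpow_natCast n 4, ← Real.rpow_add hn0,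
      ← Real.rpow_natCast m 39]
    norm_num
  have e1 : k1 ^ 8 * n = m ^ 8 := by
    rw [hk1, mul_pow, ← Real.rpow_natCast (n ^ (-(1 : ℝ) / 8)), ← Real.rpow_mul hn0.le, mul_assoc]
    nth_rewrite 2 [← Real.rpow_one n]
    rw [← Real.rpow_add hn0]
    norm_num
  have f0 : n * k0 = (m * n) ^ ((39 : ℝ) / 43) := by
    rw [hk0, Real.mul_rpow hm hn0.le]
    nth_rewrite 1 [← Real.rpow_one n]
    rw [mul_left_comm, ← Real.rpow_add hn0]
    norm_num
  have f1 : n * k1 ≤ (m * n) ^ ((39 : ℝ) / 43) + m ^ ((71 : ℝ) / 43) * n ^ ((28 : ℝ) / 43) := by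
    have g := Real.geom_mean_le_arith_mean2_weighted (w₁ := 7 / 8) (w₂ := 1 / 8)
      (p₁ := (m * n) ^ ((39 : ℝ) / 43)) (p₂ := m ^ ((71 : ℝ) / 43) * n ^ ((28 : ℝ) / 43))
      (by norm_num) (by norm_num) (by positivity) (by positivity) (by norm_num)
    have e : n * k1 = ((m * n) ^ ((39 : ℝ) / 43)) ^ ((7 : ℝ) / 8)
        * (m ^ ((71 : ℝ) / 43) * n ^ ((28 : ℝ) / 43)) ^ ((1 : ℝ) / 8) := by
      rw [← Real.rpow_mul (by positivity), Real.mul_rpow hm hn0.le,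
        Real.mul_rpow (by positivity) (by positivity), ← Real.rpow_mul hm, ← Real.rpow_mul hn0.le,
        mul_mul_mul_comm, ← Real.rpow_add hn0, hk1]
      have : m ^ ((39 : ℝ) / 43 * (7 / 8)) * m ^ ((71 : ℝ) / 43 * (1 / 8)) = m := by
        rw [← Real.rpow_add_of_nonneg hm (by norm_num) (by norm_num)]
        norm_num
      rw [this]
      nth_rewrite 1 [← Real.rpow_one n]
      rw [mul_left_comm, ← Real.rpow_add hn0]
      norm_num
    have a : 0 ≤ (m * n) ^ ((39 : ℝ) / 43) := by positivity
    have b : 0 ≤ m ^ ((71 : ℝ) / 43) * n ^ ((28 : ℝ) / 43) := by positivity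
    rw [e]
    linarith
  have hc := Nat.le_ceil (1000 + k0 + k1)
  have hlt := Nat.ceil_lt_add_one (a := 1000 + k0 + k1) (by positivity)
  refine ⟨⌈1000 + k0 + k1⌉₊, ?_, ?_, ?_, ?_⟩
  · have : (1000 : ℝ) ≤ (⌈1000 + k0 + k1⌉₊ : ℝ) := by linarith
    exact_mod_cast this
  · rw [← e0]
    gcongr
    linarith
  · rw [← e1]
    gcongr
    linarith
  · have := mul_le_mul_of_nonneg_left hlt.le hn0.le
    have a : 0 ≤ (m * n) ^ ((39 : ℝ) / 43) := by positivity
    have b : 0 ≤ m ^ ((71 : ℝ) / 43) * n ^ ((28 : ℝ) / 43) := by positivity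
    nlinarith

theorem card_cube_le {p m : ℕ} (hp : 1 ≤ p) (h : (m : ℝ) ≤ (p : ℝ) ^ ((15 : ℝ) / 13)) :
    m ^ 3 ≤ p ^ 4 := by
  have hpR : (1 : ℝ) ≤ p := by exact_mod_cast hp
  have : (m : ℝ) ^ 3 ≤ (p : ℝ) ^ 4 := by
    calc (m : ℝ) ^ 3 ≤ ((p : ℝ) ^ ((15 : ℝ) / 13)) ^ 3 := by gcongr
      _ = (p : ℝ) ^ ((45 : ℝ) / 13) := by
        rw [← Real.rpow_natCast, ← Real.rpow_mul (by positivity)]; norm_num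
      _ ≤ (p : ℝ) ^ (4 : ℝ) := Real.rpow_le_rpow_of_exponent_le hpR (by norm_num)
      _ = _ := by norm_cast
  exact_mod_cast this

theorem incidences_eq_sum {p : ℕ} (P : Finset (Fin 2 → ZMod p))
    (C : Finset (Set (Fin 2 → ZMod p))) :
    incidences P C = ∑ γ ∈ C, (P.filter fun x => x ∈ γ).card := by
  unfold incidences
  rw [Finset.card_filter, Finset.sum_product_right]
  exact Finset.sum_congr rfl fun γ _ => (Finset.card_filter _ _).symm

end CubicInc


theorem incidence_bound_main :
    ∃ c : ℝ, 0 < c ∧ ∀ p : ℕ, p.Prime →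
      ∀ (P : Finset (Fin 2 → ZMod p)) (C : Finset (Set (Fin 2 → ZMod p))),
        (P.card : ℝ) ≤ (p : ℝ) ^ ((15 : ℝ) / 13) →
        (∀ γ ∈ C, IsIrredCubic γ) →
        (incidences P C : ℝ) ≤
          c * (((P.card : ℝ) * (C.card : ℝ)) ^ ((39 : ℝ) / 43)
            + (P.card : ℝ) ^ ((71 : ℝ) / 43) * (C.card : ℝ) ^ ((28 : ℝ) / 43)
            + (C.card : ℝ)) := by
  refine ⟨(1 + 4 * 2 ^ 61) * 1001, by norm_num, ?_⟩
  intro p hp P C hP hC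
  have : Fact p.Prime := ⟨hp⟩
  rcases C.eq_empty_or_nonempty with rfl | hne
  · have : incidences P (∅ : Finset (Set (Fin 2 → ZMod p))) = 0 := by simp [incidences]
    rw [this, Nat.cast_zero]
    positivity
  have hn : (1 : ℝ) ≤ C.card := by exact_mod_cast hne.card_pos
  obtain ⟨T, hT, h0, h1, h2⟩ := CubicInc.exists_threshold (Nat.cast_nonneg (α := ℝ) P.card) hn
  have hT0 : (0 : ℝ) < T := by exact_mod_cast (by omega : 0 < T)
  have hex : ∀ γ : Set (Fin 2 → ZMod p), ∃ f : MvPolynomial (Fin 2) (ZMod p),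
      γ ∈ C → Irreducible f ∧ f.totalDegree = 3 ∧ γ = zeroSet f := by
    intro γ
    by_cases hγ : γ ∈ C
    · obtain ⟨f, hf⟩ := hC γ hγ
      exact ⟨f, fun _ => hf⟩
    · exact ⟨0, fun h => absurd h hγ⟩
  choose f hf using hex
  have hr : ∀ γ ∈ C, (P.filter fun x => x ∈ γ).card
      = (P.filter fun x => MvPolynomial.eval x (f γ) = 0).card := by
    intro γ hγ
    congr 1
    ext x
    simp only [Finset.mem_filter]
    conv_lhs => rw [(hf γ hγ).2.2]
    rfl
  have hcount := CubicInc.dyadic_sum C (fun γ => (P.filter fun x => x ∈ γ).card) (T := T)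
    (m := P.card) (by omega) (fun γ _ => Finset.card_filter_le _ _) (M := 2 ^ 61) (by norm_num) ?_
  · rw [CubicInc.incidences_eq_sum, mul_assoc]
    exact hcount.trans (mul_le_mul_of_nonneg_left h2 (by norm_num))
  intro i
  refine CubicInc.dyadic_decay (Nat.cast_nonneg _) (by positivity) hT0 h0 h1 ?_
  intro D hD hDk
  have hk : 1000 ≤ 2 ^ i * T := hT.trans (Nat.le_mul_of_pos_left T (by positivity))
  have hfam : CubicInc.CubicFamily P (2 ^ i * T)
      (MvPolynomial.restrictTotalDegree (Fin 2) (ZMod p) 3) f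
      (C.filter fun γ => 2 ^ i * T ≤ (P.filter fun x => x ∈ γ).card ∧
        (P.filter fun x => x ∈ γ).card ≤ 2 * (2 ^ i * T)) := by
    refine ⟨fun γ hγ => ?_, fun γ hγ γ' hγ' hne c hc => ?_⟩
    · obtain ⟨hγC, ha, hb⟩ := Finset.mem_filter.1 hγ
      obtain ⟨hi, hd, -⟩ := hf γ hγC
      rw [hr γ hγC] at ha hb
      refine ⟨?_, hi, hd, ?_, ?_⟩
      · rw [MvPolynomial.mem_restrictTotalDegree]
        exact hd.le
      · convert ha
      · convert hb
    -- proportional polynomials have the same zero set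
    · have hγC := (Finset.mem_filter.1 hγ).1
      have hγC' := (Finset.mem_filter.1 hγ').1
      have hc0 : c ≠ 0 := by
        rintro rfl
        rw [zero_smul] at hc
        exact (hf γ' hγC').1.ne_zero hc
      apply hne
      rw [(hf γ hγC).2.2, (hf γ' hγC').2.2, hc]
      ext x
      simp [zeroSet, hc0]
  have hb := CubicInc.family_bound hfam hk (CubicInc.card_cube_le hp.one_le hP) hD
    (by push_cast; exact hDk)
  push_cast at hb
  exact hb
end
end

section
/- Let p be a prime and let S ⊆ F_p^2 be a set of seven distinct points. If there exists an irreducible cubic curve in F_p^2 containing all seven points of S, then the F_p-vector space of polynomials in F_p[X,Y] of total degree at most 3 that vanish at every point of S has dimension exactly 3 (as a subspace of the 10-dimensional space of all polynomials of total degree at most 3). -/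
/-!
It suffices that evaluation at the seven points is a surjection from the 10-dimensional space of
polynomials of degree at most 3 onto `S → F_p`: its kernel then has dimension `10 - 7 = 3`.
Surjectivity amounts to finding, for each `q ∈ S`, a cubic vanishing on `S \ {q}` but not at `q`
(`exists_separating`).

The only input from the irreducible cubic `f` is that no four points of `S` are collinear
(`not_four_collinear`): restricting `f` to a line gives a univariate polynomial of degree at most 3,
so four zeros force it to be zero, and then the equation of the line divides `f` (`linePoly_dvd`).

Hence every line through `q` contains at most two of the other six points, so the pairs of these six
points that are collinear with `q` are pairwise disjoint. Consequently the six points can be split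
into three pairs none of which is collinear with `q` (`exists_matching`), and the product of the
three lines through these pairs is the required cubic.
-/

open scoped Classical

noncomputable section

/-- The space of polynomials of total degree at most 3 vanishing at every point of `S`,
as a subspace of the 10-dimensional space of polynomials of total degree at most 3. -/
def vanishingCubics (p : ℕ) (S : Finset (Fin 2 → ZMod p)) :
    Submodule (ZMod p) (MvPolynomial (Fin 2) (ZMod p)) :=
  MvPolynomial.restrictTotalDegree (Fin 2) (ZMod p) 3 ⊓
    ⨅ q ∈ S, LinearMap.ker (MvPolynomial.aeval (R := ZMod p) q).toLinearMap

/-- If the edges of a graph on six vertices are pairwise disjoint, its complement has a perfect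
matching. Indeed the complete graph on six vertices has five disjoint perfect matchings,
while the graph has at most three edges. -/
theorem exists_matching (r : Fin 6 → Fin 6 → Prop) (hs : ∀ a b, r a b → r b a)
    (hr : ∀ a b c, a ≠ b → a ≠ c → b ≠ c → r a b → ¬ r a c) :
    ∃ a b c d e f : Fin 6, (∀ i, i = a ∨ i = b ∨ i = c ∨ i = d ∨ i = e ∨ i = f) ∧
      ¬ r a b ∧ ¬ r c d ∧ ¬ r e f := by
  by_contra! H
  have H' : ∀ a b c d e f : Fin 6, (∀ i, i = a ∨ i = b ∨ i = c ∨ i = d ∨ i = e ∨ i = f) →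
      r a b ∨ r c d ∨ r e f := fun a b c d e f h => by
    have := H a b c d e f h
    tauto
  -- the five matchings of a 1-factorization of the complete graph on six vertices
  have h1 := H' 0 1 2 3 4 5 (by decide)
  have h2 := H' 0 2 1 4 3 5 (by decide)
  have h3 := H' 0 3 1 5 2 4 (by decide)
  have h4 := H' 0 4 1 3 2 5 (by decide)
  have h5 := H' 0 5 1 2 3 4 (by decide)
  clear H H'
  grind

theorem card_exponents : Nat.card {n : Fin 2 →₀ ℕ | n.degree ≤ 3} = 10 := by
  have e : {n : Fin 2 →₀ ℕ | n.degree ≤ 3} ≃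
      {x : Fin 4 × Fin 4 // x.1.1 + x.2.1 ≤ 3} :=
    { toFun := fun n => ⟨(⟨n.1 0, by
          have := n.2; simp [Finsupp.degree_eq_sum] at this; omega⟩, ⟨n.1 1, by
          have := n.2; simp [Finsupp.degree_eq_sum] at this; omega⟩), by
          have := n.2; simpa [Finsupp.degree_eq_sum] using this⟩
      invFun := fun x => ⟨Finsupp.equivFunOnFinite.symm ![x.1.1.1, x.1.2.1], by
          simpa [Finsupp.degree_eq_sum] using x.2⟩
      left_inv := fun n => by
        ext i; fin_cases i <;> simp
      right_inv := fun x => by simp }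
  rw [Nat.card_congr e, Nat.card_eq_fintype_card]
  decide








section

open MvPolynomial

variable {p : ℕ} [Fact p.Prime]

/-- A linear polynomial vanishing on the line through `a` and `b`; it is `0` when `a = b`.
Its value at `x` is, up to sign, the determinant of `b - a` and `x - a`. -/
def linePoly (a b : Fin 2 → ZMod p) : MvPolynomial (Fin 2) (ZMod p) :=
  C (b 1 - a 1) * (X 0 - C (a 0)) - C (b 0 - a 0) * (X 1 - C (a 1))

theorem eval_linePoly (a b x : Fin 2 → ZMod p) :
    eval x (linePoly a b) = (b 1 - a 1) * (x 0 - a 0) - (b 0 - a 0) * (x 1 - a 1) := by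
  simp [linePoly]

theorem totalDegree_linePoly_le (a b : Fin 2 → ZMod p) : (linePoly a b).totalDegree ≤ 1 := by
  have h : ∀ (c d : ZMod p) (i : Fin 2), (C c * (X i - C d) :
      MvPolynomial (Fin 2) (ZMod p)).totalDegree ≤ 1 := fun c d i => by
    refine (totalDegree_mul _ _).trans ?_
    have := totalDegree_sub (X i : MvPolynomial (Fin 2) (ZMod p)) (C d)
    simp only [totalDegree_C, totalDegree_X] at this ⊢
    omega
  exact (totalDegree_sub _ _).trans (max_le (h _ _ _) (h _ _ _))

/-- If `f` vanishes identically, as a polynomial in the parameter, on the line through `a ≠ b`, then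
the equation of the line divides `f`. -/
theorem linePoly_dvd (f : MvPolynomial (Fin 2) (ZMod p)) (a b : Fin 2 → ZMod p) (hab : a ≠ b)
    (hf : aeval (fun i => Polynomial.C (a i) + Polynomial.X * Polynomial.C (b i - a i)) f
      = (0 : Polynomial (ZMod p))) :
    linePoly a b ∣ f := by
  obtain ⟨i, hi⟩ : ∃ i, b i - a i ≠ 0 := by
    by_contra! H
    exact hab (funext fun i => (sub_eq_zero.mp (H i)).symm)
  -- `t` is the parameter of the line expressed through a nonconstant coordinate
  obtain ⟨t, htdef⟩ : ∃ t : MvPolynomial (Fin 2) (ZMod p),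
      t = C (b i - a i)⁻¹ * (X i - C (a i)) := ⟨_, rfl⟩
  have ht : C (b i - a i) * t = X i - C (a i) := by
    rw [htdef, ← mul_assoc, ← C_mul, mul_inv_cancel₀ hi, C_1, one_mul]
  have hmod : ∀ j, linePoly a b ∣ C (a j) + t * C (b j - a j) - X j := by
    have hC : (C (b i - a i)⁻¹ * C (b i - a i) : MvPolynomial (Fin 2) (ZMod p)) = 1 := by
      rw [← C_mul, inv_mul_cancel₀ hi, C_1]
    intro j
    fin_cases i <;> fin_cases j <;> simp only [Fin.zero_eta, Fin.mk_one] at *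
    · exact ⟨0, by linear_combination ht⟩
    · exact ⟨C (b 0 - a 0)⁻¹, by
        rw [htdef, linePoly]; linear_combination (X 1 - C (a 1)) * hC⟩
    · exact ⟨-C (b 1 - a 1)⁻¹, by
        rw [htdef, linePoly]; linear_combination (X 0 - C (a 0)) * hC⟩
    · exact ⟨0, by linear_combination ht⟩
  -- modulo `linePoly a b`, every polynomial equals its restriction to the line evaluated at `t`
  let I := Ideal.span {linePoly a b}
  have key : (Ideal.Quotient.mkₐ (ZMod p) I) =
      ((Ideal.Quotient.mkₐ (ZMod p) I).comp (Polynomial.aeval t)).comp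
        (aeval (fun i => Polynomial.C (a i) + Polynomial.X * Polynomial.C (b i - a i))) := by
    apply MvPolynomial.algHom_ext
    intro j
    symm
    have := hmod j
    rw [← Ideal.mem_span_singleton, ← Ideal.Quotient.eq] at this
    simpa [MvPolynomial.algebraMap_eq] using this
  rw [← Ideal.mem_span_singleton, ← Ideal.Quotient.eq_zero_iff_mem]
  have := DFunLike.congr_fun key f
  rw [AlgHom.comp_apply, hf, map_zero] at this
  exact this

/-- An irreducible cubic does not contain four distinct collinear points. -/
theorem not_four_collinear (f : MvPolynomial (Fin 2) (ZMod p)) (hirr : Irreducible f)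
    (hdeg : f.totalDegree = 3) (q a b c : Fin 2 → ZMod p)
    (hqa : q ≠ a) (hqb : q ≠ b) (hqc : q ≠ c) (hab : a ≠ b) (hac : a ≠ c) (hbc : b ≠ c)
    (fq : eval q f = 0) (fa : eval a f = 0) (fb : eval b f = 0) (fc : eval c f = 0)
    (hb : eval b (linePoly q a) = 0) (hc : eval c (linePoly q a) = 0) : False := by
  have param : ∀ x, eval x (linePoly q a) = 0 → ∃ t, x = fun i => q i + t * (a i - q i) := by
    intro x hx
    rw [eval_linePoly] at hx
    obtain ⟨i, hi⟩ : ∃ i, a i - q i ≠ 0 := by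
      by_contra! H
      exact hqa (funext fun i => (sub_eq_zero.mp (H i)).symm)
    obtain ⟨t, ht⟩ : ∃ t, t * (a i - q i) = x i - q i := ⟨_, div_mul_cancel₀ _ hi⟩
    refine ⟨t, funext fun j => mul_right_cancel₀ hi ?_⟩
    fin_cases i <;> fin_cases j <;> simp only [Fin.zero_eta, Fin.mk_one] at *
    · linear_combination (q 0 - a 0) * ht
    · linear_combination (q 1 - a 1) * ht - hx
    · linear_combination (q 0 - a 0) * ht + hx
    · linear_combination (q 1 - a 1) * ht
  obtain ⟨s, rfl⟩ := param b hb
  obtain ⟨t, rfl⟩ := param c hc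
  set g : Polynomial (ZMod p) :=
    aeval (fun i => Polynomial.C (q i) + Polynomial.X * Polynomial.C (a i - q i)) f with hg
  have hev : ∀ u, g.eval u = eval (fun i => q i + u * (a i - q i)) f := by
    intro u
    have hcomp : (Polynomial.aeval u).comp
        (aeval (fun i => Polynomial.C (q i) + Polynomial.X * Polynomial.C (a i - q i))) =
        (aeval (fun i => q i + u * (a i - q i)) :
          MvPolynomial (Fin 2) (ZMod p) →ₐ[ZMod p] ZMod p) := by
      apply MvPolynomial.algHom_ext
      intro j
      simp
    have := DFunLike.congr_fun hcomp f
    rwa [AlgHom.comp_apply, ← hg, Polynomial.coe_aeval_eq_eval, MvPolynomial.aeval_eq_eval] at this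
  have hgd : g.natDegree ≤ 3 := by
    have := MvPolynomial.aeval_natDegree_le f hdeg.le
      (fun i => Polynomial.C (q i) + Polynomial.X * Polynomial.C (a i - q i)) (n := 1)
      (fun i => by compute_degree)
    rwa [← hg, mul_one] at this
  have hg0 : g = 0 := by
    refine Polynomial.eq_zero_of_natDegree_lt_card_of_eval_eq_zero' g {0, 1, s, t} ?_ ?_
    · intro u hu
      simp only [Finset.mem_insert, Finset.mem_singleton] at hu
      rw [hev]
      rcases hu with rfl | rfl | rfl | rfl
      · simpa using fq
      · simpa using fa
      · exact fb
      · exact fc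
    · have hs0 : s ≠ 0 := by rintro rfl; exact hqb (by simp)
      have ht0 : t ≠ 0 := by rintro rfl; exact hqc (by simp)
      have hs1 : s ≠ 1 := by rintro rfl; exact hab (by simp)
      have ht1 : t ≠ 1 := by rintro rfl; exact hac (by simp)
      have hst : s ≠ t := by rintro rfl; exact hbc rfl
      have hcard : ({0, 1, s, t} : Finset (ZMod p)).card = 4 := by
        simp [hs0.symm, ht0.symm, hs1.symm, ht1.symm, hst]
      omega
  obtain ⟨u, hu⟩ := linePoly_dvd f q a hqa hg0
  rcases hirr.isUnit_or_isUnit hu with h | h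
  · have := h.map (eval q)
    simp [eval_linePoly] at this
  · have h0 := (isUnit_iff_totalDegree_of_isReduced.mp h).2
    have h1 := totalDegree_mul (linePoly q a) u
    have h2 := totalDegree_linePoly_le q a
    rw [← hu] at h1
    omega

/-- The point `q` is separated from the other six points of `S` by a product of three lines. -/
theorem exists_separating (f : MvPolynomial (Fin 2) (ZMod p)) (hirr : Irreducible f)
    (hdeg : f.totalDegree = 3) (S : Finset (Fin 2 → ZMod p)) (hS : S.card = 7)
    (hf : ∀ x ∈ S, eval x f = 0) (q : Fin 2 → ZMod p) (hq : q ∈ S) :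
    ∃ g : MvPolynomial (Fin 2) (ZMod p), g.totalDegree ≤ 3 ∧ eval q g ≠ 0 ∧
      ∀ x ∈ S, x ≠ q → eval x g = 0 := by
  have hT : (S.erase q).card = 6 := by rw [Finset.card_erase_of_mem hq, hS]
  let e := Finset.equivFinOfCardEq hT
  let P : Fin 6 → Fin 2 → ZMod p := fun i => (e.symm i).1
  have hPinj : Function.Injective P := fun i j h => e.symm.injective (Subtype.ext h)
  have hPS : ∀ i, P i ∈ S := fun i => Finset.mem_of_mem_erase (e.symm i).2
  have hPq : ∀ i, q ≠ P i := fun i => (Finset.ne_of_mem_erase (e.symm i).2).symm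
  obtain ⟨a, b, c, d, i, j, hall, h1, h2, h3⟩ :=
    exists_matching (fun a b => eval q (linePoly (P a) (P b)) = 0)
      (fun a b h => by
        rw [eval_linePoly] at h ⊢
        linear_combination -h)
      (fun a b c hab hac hbc h h' => by
        refine not_four_collinear f hirr hdeg q (P a) (P b) (P c) (hPq a) (hPq b) (hPq c)
          (hPinj.ne hab) (hPinj.ne hac) (hPinj.ne hbc) (hf q hq) (hf _ (hPS a)) (hf _ (hPS b))
          (hf _ (hPS c)) ?_ ?_
        · rw [eval_linePoly] at h ⊢
          linear_combination h
        · rw [eval_linePoly] at h' ⊢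
          linear_combination h')
  refine ⟨linePoly (P a) (P b) * linePoly (P c) (P d) * linePoly (P i) (P j), ?_, ?_, ?_⟩
  · have t1 := totalDegree_linePoly_le (P a) (P b)
    have t2 := totalDegree_linePoly_le (P c) (P d)
    have t3 := totalDegree_linePoly_le (P i) (P j)
    have t4 := totalDegree_mul (linePoly (P a) (P b)) (linePoly (P c) (P d))
    have t5 := totalDegree_mul (linePoly (P a) (P b) * linePoly (P c) (P d)) (linePoly (P i) (P j))
    omega
  · rw [map_mul, map_mul]
    exact mul_ne_zero (mul_ne_zero h1 h2) h3
  · intro x hx hxq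
    obtain ⟨k, rfl⟩ : ∃ k, P k = x :=
      ⟨e ⟨x, Finset.mem_erase.mpr ⟨hxq, hx⟩⟩, by simp [P]⟩
    have hl : ∀ u v : Fin 2 → ZMod p, eval u (linePoly u v) = 0 := fun u v => by
      rw [eval_linePoly]; ring
    have hr : ∀ u v : Fin 2 → ZMod p, eval v (linePoly u v) = 0 := fun u v => by
      rw [eval_linePoly]; ring
    rw [map_mul, map_mul]
    rcases hall k with rfl | rfl | rfl | rfl | rfl | rfl <;> simp [hl, hr]

theorem finrank_cubics :
    Module.finrank (ZMod p) (restrictTotalDegree (Fin 2) (ZMod p) 3) = 10 :=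
  (Module.finrank_eq_nat_card_basis
    (basisRestrictSupport (ZMod p) {n : Fin 2 →₀ ℕ | n.degree ≤ 3})).trans card_exponents

end

open MvPolynomial in
theorem vanishing_space_of_seven_on_irreducible_cubic
    (p : ℕ) [Fact p.Prime] (S : Finset (Fin 2 → ZMod p)) (hS : S.card = 7)
    (h : ∃ γ : Set (Fin 2 → ZMod p), IsIrredCubic γ ∧ ∀ q ∈ S, q ∈ γ) :
    Module.finrank (ZMod p) (vanishingCubics p S) = 3 := by
  obtain ⟨_, ⟨f, hirr, hdeg, rfl⟩, hf⟩ := h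
  choose! g hg3 hgq hgx using exists_separating f hirr hdeg S hS hf
  let V := restrictTotalDegree (Fin 2) (ZMod p) 3
  let E₀ : MvPolynomial (Fin 2) (ZMod p) →ₗ[ZMod p] (S → ZMod p) :=
    LinearMap.pi fun q => (MvPolynomial.aeval (R := ZMod p) q.1).toLinearMap
  let E : V →ₗ[ZMod p] (S → ZMod p) := E₀.domRestrict V
  have hker₀ : (⨅ q ∈ S, LinearMap.ker (MvPolynomial.aeval (R := ZMod p) q).toLinearMap) =
      LinearMap.ker E₀ := by
    ext x
    simp [E₀, funext_iff]
  have hker : Module.finrank (ZMod p) (vanishingCubics p S) =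
      Module.finrank (ZMod p) (LinearMap.ker E) := by
    have : (LinearMap.ker E).map V.subtype = vanishingCubics p S := by
      rw [vanishingCubics, hker₀, LinearMap.ker_domRestrict, Submodule.map_comap_subtype]
    rw [← this]
    exact Submodule.finrank_map_subtype_eq V _
  have hsurj : Function.Surjective E := by
    intro v
    refine ⟨∑ q : S, (v q / eval q.1 (g q.1)) •
      (⟨g q.1, (mem_restrictTotalDegree _ _ _).mpr (hg3 q.1 q.2)⟩ : V), funext fun x => ?_⟩
    rw [map_sum, Finset.sum_apply, Finset.sum_eq_single x]
    · simp [E, E₀, MvPolynomial.aeval_eq_eval, div_mul_cancel₀ _ (hgq x.1 x.2)]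
    · intro q _ hqx
      have := hgx q.1 q.2 x.1 x.2 (fun h => hqx (Subtype.ext h.symm))
      simp [E, E₀, MvPolynomial.aeval_eq_eval, this]
    · simp
  have : Module.Finite (ZMod p) V := Module.finite_of_finrank_pos (by
    rw [finrank_cubics]; norm_num)
  have hrn := LinearMap.finrank_range_add_finrank_ker E
  rw [LinearMap.range_eq_top.mpr hsurj, finrank_top, finrank_cubics,
    Module.finrank_fintype_fun_eq_card, Fintype.card_coe, hS] at hrn
  omega
end
end
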